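/- arXiv:1503.04954 — 2 statements merged into one kernel-verified Lean document; each statement's English description precedes it below -/
import Mathlib

section
/- Let T > 0, let g satisfy (g1), be regularly oscillating at zero, and satisfy lim_{s→0⁺} g(s)/s = 0 and liminf_{s→+∞} g(s)/s > 0. Let a ∈ L¹([0,T]) satisfy (a1) and (a2). Then there exists ν* > 0 such that for every ν > ν* the equation u'' + ν a(x) g(u) = 0 has at least one positive solution satisfying the Neumann boundary conditions and at least one positive solution satisfying the periodic boundary conditions. -/
open MeasureTheory Set Filter

/-- `u` (with derivative `u'`) is a C¹ solution of `u'' + f(x) = 0` on `[0,T]`: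
`u'` is absolutely continuous and the equation holds a.e., expressed via the
integral equation `u'(x) = u'(0) − ∫₀ˣ f(t) dt`. -/
def IsSolOn (T : ℝ) (f : ℝ → ℝ) (u u' : ℝ → ℝ) : Prop :=
  (∀ x ∈ Icc (0:ℝ) T, HasDerivWithinAt u (u' x) (Icc (0:ℝ) T) x) ∧
  ContinuousOn u' (Icc (0:ℝ) T) ∧
  ∀ x ∈ Icc (0:ℝ) T, u' x = u' 0 - ∫ t in (0:ℝ)..x, f t

/-- The equation `u'' + a(x) g(u) = 0` on `[0,T]` has a positive solution
satisfying the Neumann boundary conditions. -/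
def PosSolNeumann (T : ℝ) (a g : ℝ → ℝ) : Prop :=
  ∃ u u' : ℝ → ℝ, IsSolOn T (fun t => a t * g (u t)) u u' ∧
    (∀ x ∈ Icc (0:ℝ) T, 0 < u x) ∧ u' 0 = 0 ∧ u' T = 0

/-- The equation `u'' + a(x) g(u) = 0` on `[0,T]` has a positive solution
satisfying the periodic boundary conditions. -/
def PosSolPeriodic (T : ℝ) (a g : ℝ → ℝ) : Prop :=
  ∃ u u' : ℝ → ℝ, IsSolOn T (fun t => a t * g (u t)) u u' ∧
    (∀ x ∈ Icc (0:ℝ) T, 0 < u x) ∧ u 0 = u T ∧ u' 0 = u' T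

/-- Condition (g1): `g : [0,∞) → [0,∞)` is continuous, `g 0 = 0`, `g > 0` on `(0,∞)`. -/
def CondG1 (g : ℝ → ℝ) : Prop :=
  ContinuousOn g (Ici (0:ℝ)) ∧ (∀ s : ℝ, 0 ≤ s → 0 ≤ g s) ∧ g 0 = 0 ∧
    ∀ s : ℝ, 0 < s → 0 < g s

/-- `g` is regularly oscillating at zero. -/
def RegOscAtZero (g : ℝ → ℝ) : Prop :=
  ∀ ε : ℝ, 0 < ε → ∃ δ > (0:ℝ), ∃ η > (0:ℝ), ∀ s ω : ℝ,
    0 < s → s < δ → |ω - 1| < η → |g (ω * s) / g s - 1| < ε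

/-- `liminf_{s → +∞} g(s)/s`, computed in `EReal`. -/
noncomputable def GrowthLiminf (g : ℝ → ℝ) : EReal :=
  liminf (fun s : ℝ => ((g s / s : ℝ) : EReal)) atTop

/-- `limsup_{s → +∞} g(s)/s`, computed in `EReal`. -/
noncomputable def GrowthLimsup (g : ℝ → ℝ) : EReal :=
  limsup (fun s : ℝ => ((g s / s : ℝ) : EReal)) atTop

/-- Condition (a1): there are `m ≥ 1` pairwise disjoint closed intervals in `[0,T]`
on which `a ≥ 0` a.e. and `a` is not a.e. zero, while `a ≤ 0` a.e. outside them. -/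
def CondA1 (T : ℝ) (a : ℝ → ℝ) : Prop :=
  ∃ (m : ℕ) (σ τ : Fin m → ℝ), 0 < m ∧
    (∀ i, 0 ≤ σ i ∧ σ i ≤ τ i ∧ τ i ≤ T) ∧
    (Pairwise fun i j => Disjoint (Icc (σ i) (τ i)) (Icc (σ j) (τ j))) ∧
    (∀ i, ∀ᵐ x ∂(volume.restrict (Icc (σ i) (τ i))), 0 ≤ a x) ∧
    (∀ i, ¬ (∀ᵐ x ∂(volume.restrict (Icc (σ i) (τ i))), a x = 0)) ∧
    (∀ᵐ x ∂(volume.restrict (Icc (0:ℝ) T \ ⋃ i, Icc (σ i) (τ i))), a x ≤ 0)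



theorem bw_inj {E : Type*} [NormedAddCommGroup E] [NormedSpace ℝ E]
    (A : E →L[ℝ] E) (hA : ‖A‖ < 1) : Function.Injective (ContinuousLinearMap.id ℝ E + A) := by
  rw [injective_iff_map_eq_zero]
  intro v hv
  have h1 : v = - A v := by
    have : v + A v = 0 := by simpa using hv
    exact eq_neg_of_add_eq_zero_left this
  have h2 : ‖v‖ ≤ ‖A‖ * ‖v‖ := by
    calc ‖v‖ = ‖A v‖ := by rw [← norm_neg (A v), ← h1]
      _ ≤ _ := A.le_opNorm v
  by_contra hne
  have : 0 < ‖v‖ := norm_pos_iff.mpr hne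
  nlinarith

theorem bw_det_pos {E : Type*} [NormedAddCommGroup E] [NormedSpace ℝ E] [FiniteDimensional ℝ E]
    (A : E →L[ℝ] E) (hA : ‖A‖ < 1) : 0 < (ContinuousLinearMap.id ℝ E + A).det := by
  have hne : ∀ s ∈ Icc (0:ℝ) 1, (ContinuousLinearMap.id ℝ E + s • A).det ≠ 0 := by
    intro s hs h0
    have hn : ‖s • A‖ < 1 := by
      rw [norm_smul, Real.norm_eq_abs, abs_of_nonneg hs.1]
      nlinarith [norm_nonneg A, hs.2]
    have hinj := bw_inj (s • A) hn
    have : LinearMap.ker ((ContinuousLinearMap.id ℝ E + s • A : E →L[ℝ] E) : E →ₗ[ℝ] E) ≠ ⊥ := by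
      apply ne_of_gt
      exact LinearMap.bot_lt_ker_of_det_eq_zero h0
    exact this (LinearMap.ker_eq_bot.mpr hinj)
  have hc : Continuous fun s : ℝ => (ContinuousLinearMap.id ℝ E + s • A).det :=
    ContinuousLinearMap.continuous_det.comp (by fun_prop)
  by_contra hle
  push Not at hle
  have hmem : (0:ℝ) ∈ (fun s : ℝ => (ContinuousLinearMap.id ℝ E + s • A).det) '' Icc 0 1 := by
    apply intermediate_value_Icc' zero_le_one hc.continuousOn
    refine ⟨by simpa using hle, ?_⟩
    simp [ContinuousLinearMap.det]
  obtain ⟨s, hs, h⟩ := hmem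
  exact hne s hs h

/-- determinant interpolation -/
theorem bw_interp (n : ℕ) (t0 : ℝ) (ht0 : 0 < t0) :
    ∃ (v c : Fin (n+1) → ℝ), (∀ i, 0 < v i ∧ v i < t0) ∧ ∑ i, c i = 1 ∧
      ∀ A : EuclideanSpace ℝ (Fin n) →L[ℝ] EuclideanSpace ℝ (Fin n),
        (ContinuousLinearMap.id ℝ _ + A).det =
          ∑ i, c i * (ContinuousLinearMap.id ℝ _ + v i • A).det := by
  let v : Fin (n+1) → ℝ := fun i => t0 / (i + 2)
  have hv : Set.InjOn v (Finset.univ : Finset (Fin (n+1))) := by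
    intro i _ j _ hij
    have h1 : t0 / ((i:ℝ) + 2) = t0 / ((j:ℝ) + 2) := hij
    have : (i:ℝ) = j := by
      field_simp at h1
      linarith
    exact Fin.ext (by exact_mod_cast this)
  refine ⟨v, fun i => (Lagrange.basis Finset.univ v i).eval 1, ?_, ?_, ?_⟩
  · intro i
    refine ⟨by positivity, ?_⟩
    have : (0:ℝ) ≤ i := by positivity
    show t0 / ((i:ℝ) + 2) < t0
    rw [div_lt_iff₀ (by positivity)]
    nlinarith
  · rw [← Polynomial.eval_finsetSum, Lagrange.sum_basis hv Finset.univ_nonempty]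
    simp
  · intro A
    let M := LinearMap.toMatrix' (((EuclideanSpace.equiv (Fin n) ℝ).toLinearEquiv.conj (A : _ →ₗ[ℝ] _)))
    let p : Polynomial ℝ := Matrix.det ((Polynomial.X : Polynomial ℝ) • M.map Polynomial.C
      + (1 : Matrix (Fin n) (Fin n) ℝ).map Polynomial.C)
    have hp : ∀ t : ℝ, p.eval t = (ContinuousLinearMap.id ℝ _ + t • A).det := by
      intro t
      have e1 : p.eval t = Matrix.det (t • M + 1) := by
        simp only [p]
        rw [← Polynomial.coe_evalRingHom, RingHom.map_det]
        congr 1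
        ext i j
        simp [Matrix.one_apply]
        split_ifs <;> simp [mul_comm]
      rw [e1, ContinuousLinearMap.det]
      rw [← LinearMap.det_conj _ (EuclideanSpace.equiv (Fin n) ℝ).toLinearEquiv]
      rw [← LinearMap.det_toMatrix']
      congr 1
      change _ = LinearMap.toMatrix' ((EuclideanSpace.equiv (Fin n) ℝ).toLinearEquiv.conj
        (LinearMap.id + t • (A : _ →ₗ[ℝ] _)))
      rw [map_add, map_smul, map_add, map_smul, LinearEquiv.conj_id, LinearMap.toMatrix'_id, add_comm]
    have hdeg : p.degree < (Finset.univ : Finset (Fin (n+1))).card := by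
      refine lt_of_le_of_lt Polynomial.degree_le_natDegree ?_
      have := Polynomial.natDegree_det_X_add_C_le M (1 : Matrix (Fin n) (Fin n) ℝ)
      simp only [Fintype.card_fin] at this
      rw [Finset.card_univ, Fintype.card_fin]
      exact_mod_cast Nat.lt_succ_of_le this
    have h := congrArg (Polynomial.eval 1) (Lagrange.eq_interpolate hv hdeg)
    rw [hp 1, Lagrange.interpolate_apply, Polynomial.eval_finsetSum, one_smul] at h
    rw [h]
    refine Finset.sum_congr rfl fun i _ => ?_
    rw [Polynomial.eval_mul, Polynomial.eval_C, hp, mul_comm]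


abbrev Eu (n : ℕ) := EuclideanSpace ℝ (Fin n)


theorem bw_vol {n : ℕ} (g : Eu n → Eu n)
    (hg : ContDiff ℝ 1 g) (R : ℝ) (hR : 0 < R)
    (hg0 : ∀ x, ‖x‖ = R → g x = 0) (hgR : ∀ x, ‖x‖ ≤ R → ‖x + g x‖ ≤ R)
    (C : NNReal) (hC : LipschitzOnWith C g (Metric.closedBall 0 R))
    (hC' : ∀ x ∈ Metric.closedBall (0 : Eu n) R, ‖fderiv ℝ g x‖ ≤ C)
    (t : ℝ) (ht : 0 < t) (ht1 : t < 1) (htC : t * C < 1) :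
    ∫ x in Metric.ball (0 : Eu n) R,
      (ContinuousLinearMap.id ℝ _ + t • fderiv ℝ g x).det
      = (volume (Metric.ball (0 : Eu n) R)).toReal := by
  set U := Metric.ball (0 : Eu n) R
  let f : (Eu n) → (Eu n) := fun x => x + t • g x
  have hUc : U ⊆ Metric.closedBall 0 R := Metric.ball_subset_closedBall
  have hf' : ∀ x, HasStrictFDerivAt f (ContinuousLinearMap.id ℝ (Eu n) + t • fderiv ℝ g x) x := by
    intro x
    exact (hasStrictFDerivAt_id x).add
      (((hg.contDiffAt (x := x)).hasStrictFDerivAt (by simp)).const_smul t)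
  have hn : ∀ x ∈ U, ‖t • fderiv ℝ g x‖ < 1 := by
    intro x hx
    rw [norm_smul, Real.norm_eq_abs, abs_of_pos ht]
    exact lt_of_le_of_lt (mul_le_mul_of_nonneg_left (hC' x (hUc hx)) ht.le) htC
  have hinj : InjOn f U := by
    intro x hx y hy hxy
    have h1 : x - y = t • (g y - g x) := by
      have : x + t • g x = y + t • g y := hxy
      rw [smul_sub]
      rw [sub_eq_sub_iff_add_eq_add, this, add_comm]
    have h2 : ‖x - y‖ ≤ t * (C * ‖x - y‖) := by
      conv_lhs => rw [h1]
      rw [norm_smul, Real.norm_eq_abs, abs_of_pos ht]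
      have := hC.norm_sub_le (hUc hy) (hUc hx)
      rw [norm_sub_rev y x] at this
      exact mul_le_mul_of_nonneg_left this ht.le
    by_contra hne
    have : 0 < ‖x - y‖ := norm_pos_iff.mpr (sub_ne_zero.mpr hne)
    nlinarith
  have hmaps : ∀ x, ‖x‖ < R → ‖f x‖ < R := by
    intro x hx
    have e : f x = (1 - t) • x + t • (x + g x) := by
      simp only [f, smul_add, sub_smul, one_smul]; abel
    rw [e]
    calc _ ≤ ‖(1 - t) • x‖ + ‖t • (x + g x)‖ := norm_add_le _ _
      _ = (1 - t) * ‖x‖ + t * ‖x + g x‖ := by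
        rw [norm_smul, norm_smul, Real.norm_eq_abs, Real.norm_eq_abs, abs_of_pos ht,
          abs_of_pos (by linarith)]
      _ < R := by nlinarith [hgR x hx.le]
  have hopen : IsOpen (f '' U) := by
    rw [isOpen_iff_mem_nhds]
    rintro _ ⟨x, hx, rfl⟩
    have hs : LinearMap.range ((ContinuousLinearMap.id ℝ (Eu n) + t • fderiv ℝ g x : (Eu n) →L[ℝ] (Eu n)) : (Eu n) →ₗ[ℝ] (Eu n)) = ⊤ := by
      rw [LinearMap.range_eq_top]
      exact LinearMap.injective_iff_surjective.mp (bw_inj _ (hn x hx))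
    rw [← (hf' x).map_nhds_eq_of_surj hs]
    exact image_mem_map (Metric.isOpen_ball.mem_nhds hx)
  have hcont : Continuous f := by
    have := hg.continuous
    fun_prop
  have himg : f '' U = U := by
    apply Subset.antisymm
    · rintro _ ⟨x, hx, rfl⟩
      simpa [U] using hmaps x (by simpa [U] using hx)
    · have hp : IsPreconnected U := (convex_ball (0:(Eu n)) R).isPreconnected
      apply hp.subset_of_closure_inter_subset hopen
      · refine ⟨f 0, ?_, 0, by simpa [U] using hR, rfl⟩
        simpa [U] using hmaps 0 (by simpa using hR)
      · rintro y ⟨hy, hyU⟩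
        have hcl : IsClosed (f '' Metric.closedBall 0 R) :=
          ((isCompact_closedBall (0:(Eu n)) R).image hcont).isClosed
        obtain ⟨x, hx, rfl⟩ := closure_minimal (image_mono hUc) hcl hy
        refine ⟨x, ?_, rfl⟩
        have hx' : ‖x‖ ≤ R := by simpa using hx
        rcases hx'.lt_or_eq with h | h
        · simpa [U] using h
        · exfalso
          have : f x = x := by simp [f, hg0 x h]
          rw [this] at hyU
          have : ‖x‖ < R := by simpa [U] using hyU
          linarith
  have hcv := integral_image_eq_integral_abs_det_fderiv_smul volume (s := U) (f := f)
    (f' := fun x => ContinuousLinearMap.id ℝ (Eu n) + t • fderiv ℝ g x) Metric.isOpen_ball.measurableSet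
    (fun x _ => (hf' x).hasFDerivAt.hasFDerivWithinAt) hinj (fun _ => (1:ℝ))
  rw [himg] at hcv
  simp only [integral_const, smul_eq_mul, mul_one] at hcv
  rw [measureReal_restrict_apply_univ] at hcv
  rw [show (volume U).toReal = volume.real U from rfl, hcv]
  refine setIntegral_congr_fun Metric.isOpen_ball.measurableSet fun x hx => ?_
  exact (abs_of_pos (bw_det_pos _ (hn x hx))).symm

theorem bw_no_retraction {n : ℕ} (f : Eu n → Eu n)
    (hf : ContDiff ℝ 1 f) (R : ℝ) (hR : 0 < R)
    (hf0 : ∀ x, ‖x‖ = R → f x = x) (hfR : ∀ x, ‖x‖ ≤ R → ‖f x‖ = R) : False := by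
  set U := Metric.ball (0 : Eu n) R
  let g : (Eu n) → (Eu n) := fun x => f x - x
  have hg : ContDiff ℝ 1 g := hf.sub contDiff_id
  have hgc : Continuous (fderiv ℝ g) := hg.continuous_fderiv (by simp)
  obtain ⟨C, hC⟩ := (isCompact_closedBall (0:(Eu n)) R).exists_bound_of_continuousOn hgc.continuousOn
  have hC0 : 0 ≤ C := (norm_nonneg _).trans (hC 0 (by simp [hR.le]))
  lift C to NNReal using hC0
  have hL : LipschitzOnWith C g (Metric.closedBall 0 R) :=
    (convex_closedBall (0:(Eu n)) R).lipschitzOnWith_of_nnnorm_fderiv_le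
      (fun x _ => (hg.differentiable (by simp)) x) (fun x hx => hC x hx)
  have hpos : (0:ℝ) < 1 / (C + 1) := by positivity
  obtain ⟨v, c, hv, hc, hA⟩ := bw_interp n (1 / (C + 1)) hpos
  have hvi : ∀ i, ∫ x in U, (ContinuousLinearMap.id ℝ _ + v i • fderiv ℝ g x).det
      = (volume U).toReal := by
    intro i
    have h1 : v i * (C + 1) < 1 := by
      have := (hv i).2
      rwa [lt_div_iff₀ (by positivity)] at this
    have hC2 : (0:ℝ) ≤ C := C.2
    apply bw_vol g hg R hR (fun x hx => by simp [g, hf0 x hx])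
      (fun x hx => by simp [g, hfR x hx]) C hL hC _ (hv i).1
    · nlinarith [(hv i).1]
    · nlinarith [(hv i).1]
  have hdet : ∀ x ∈ U, (ContinuousLinearMap.id ℝ _ + fderiv ℝ g x).det = 0 := by
    intro x hx
    have e : ContinuousLinearMap.id ℝ _ + fderiv ℝ g x = fderiv ℝ f x := by
      have hfd : DifferentiableAt ℝ f x := (hf.differentiable (by simp)) x
      have : fderiv ℝ g x = fderiv ℝ f x - ContinuousLinearMap.id ℝ (Eu n) := by
        simp only [g]
        rw [fderiv_fun_sub hfd differentiableAt_fun_id]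
        simp
      rw [this]; abel
    rw [e]
    by_contra hne
    have hfd : HasFDerivAt f (fderiv ℝ f x) x := ((hf.differentiable (by simp)) x).hasFDerivAt
    have horth : ∀ w, inner ℝ (f x) (fderiv ℝ f x w) = 0 := by
      have h2 := hfd.norm_sq
      have h3 : HasFDerivAt (fun y => ‖f y‖ ^ 2) (0 : (Eu n) →L[ℝ] ℝ) x := by
        refine (hasFDerivAt_const (R ^ 2) x).congr_of_eventuallyEq ?_
        filter_upwards [Metric.isOpen_ball.mem_nhds hx] with y hy
        rw [hfR y (by simpa using (Metric.mem_ball.mp hy).le)]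
      have h4 := h2.unique h3
      intro w
      have := congrArg (fun L : (Eu n) →L[ℝ] ℝ => L w) h4
      simpa using this
    have hinj : LinearMap.ker ((fderiv ℝ f x : (Eu n) →L[ℝ] (Eu n)) : (Eu n) →ₗ[ℝ] (Eu n)) = ⊥ := by
      by_contra hk
      exact hne (LinearMap.det_eq_zero_iff_ker_ne_bot.mpr hk)
    have hsurj : Function.Surjective (fderiv ℝ f x) :=
      LinearMap.injective_iff_surjective.mp (LinearMap.ker_eq_bot.mp hinj)
    obtain ⟨w, hw⟩ := hsurj (f x)
    have := horth w
    rw [hw, inner_self_eq_zero] at this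
    have h5 := hfR x (by simpa using (Metric.mem_ball.mp hx).le)
    rw [this, norm_zero] at h5
    linarith
  have hint : ∀ i, IntegrableOn (fun x => c i * (ContinuousLinearMap.id ℝ _ + v i • fderiv ℝ g x).det) U := by
    intro i
    have hcont : Continuous fun x => c i * (ContinuousLinearMap.id ℝ (Eu n) + v i • fderiv ℝ g x).det :=
      continuous_const.mul (ContinuousLinearMap.continuous_det.comp (by fun_prop))
    exact (hcont.continuousOn.integrableOn_compact (isCompact_closedBall (0:(Eu n)) R)).mono_set
      Metric.ball_subset_closedBall
  have h0 : ∫ x in U, (ContinuousLinearMap.id ℝ _ + fderiv ℝ g x).det = 0 := by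
    rw [setIntegral_congr_fun Metric.isOpen_ball.measurableSet hdet]; simp
  have hfun : (fun x => (ContinuousLinearMap.id ℝ (Eu n) + fderiv ℝ g x).det) =
      fun x => ∑ i, c i * (ContinuousLinearMap.id ℝ _ + v i • fderiv ℝ g x).det :=
    funext fun x => hA _
  rw [hfun] at h0
  rw [integral_finsetSum _ (fun i _ => hint i)] at h0
  simp_rw [integral_const_mul, hvi] at h0
  rw [← Finset.sum_mul, hc, one_mul] at h0
  have : 0 < (volume U).toReal :=
    ENNReal.toReal_pos (Metric.measure_ball_pos volume _ hR).ne' measure_ball_lt_top.ne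
  linarith


theorem bw_compactSupport {n : ℕ} (Ψ : Eu n → Eu n) (hΨ : Continuous Ψ) (R : ℝ) (hR : 0 < R)
    (h0 : ∀ x, R ≤ ‖x‖ → Ψ x = 0) : ∃ x, Ψ x = x := by
  by_contra hno
  push Not at hno
  have hmin : ∃ ε > 0, ∀ x, ε ≤ ‖x - Ψ x‖ := by
    obtain ⟨y, hy, hym⟩ := (isCompact_closedBall (0 : Eu n) R).exists_isMinOn
      ⟨0, by simp [hR.le]⟩ (f := fun x => ‖x - Ψ x‖) (by fun_prop)
    refine ⟨min R ‖y - Ψ y‖, lt_min hR (norm_pos_iff.mpr (sub_ne_zero.mpr (hno y).symm)), ?_⟩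
    intro x
    rcases le_total R ‖x‖ with h | h
    · rw [h0 x h, sub_zero]; exact (min_le_left _ _).trans h
    · exact (min_le_right _ _).trans (hym (by simpa using h))
  obtain ⟨ε, hε, hεx⟩ := hmin
  obtain ⟨Ψ', hc, hd, hs⟩ := hΨ.exists_contDiff_approx 1 (ε := fun _ => ε) continuous_const
    (fun _ => hε)
  let φ : Eu n → Eu n := fun x => x - Ψ' x
  have hφ : ContDiff ℝ 1 φ := contDiff_id.sub hc
  have hφ0 : ∀ x, φ x ≠ 0 := by
    intro x hx
    have h1 := hd x
    have h2 := hεx x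
    have h3 : x = Ψ' x := sub_eq_zero.mp hx
    rw [dist_eq_norm, ← h3] at h1
    linarith
  have hφR : ∀ x, ‖x‖ = R → φ x = x := by
    intro x hx
    have : Ψ' x = 0 := by
      by_contra hne
      exact hs hne (h0 x hx.ge)
    simp [φ, this]
  refine bw_no_retraction (fun x => (R / ‖φ x‖) • φ x) ?_ R hR ?_ ?_
  · refine ContDiff.smul (contDiff_const.div (hφ.norm ℝ hφ0) fun x => norm_ne_zero_iff.mpr (hφ0 x)) hφ
  · intro x hx
    simp only [hφR x hx, hx]
    rw [div_self hR.ne', one_smul]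
  · intro x _
    rw [norm_smul, norm_div, norm_norm, Real.norm_eq_abs, abs_of_pos hR,
      div_mul_cancel₀ _ (norm_ne_zero_iff.mpr (hφ0 x))]

theorem bw_bounded {n : ℕ} (Ψ : Eu n → Eu n) (hΨ : Continuous Ψ) (M : ℝ)
    (hM : ∀ x, ‖Ψ x‖ ≤ M) : ∃ x, Ψ x = x := by
  have hM0 : 0 ≤ M := (norm_nonneg _).trans (hM 0)
  let χ : Eu n → ℝ := fun x => max 0 (min 1 (M + 1 - ‖x‖))
  have hχ1 : ∀ x, χ x ≤ 1 := fun x => max_le zero_le_one (min_le_left _ _)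
  have hχ0 : ∀ x, 0 ≤ χ x := fun x => le_max_left _ _
  obtain ⟨x, hx⟩ := bw_compactSupport (fun x => χ x • Ψ x) (by fun_prop) (M + 1) (by linarith)
    (fun x hx => by
      have : χ x = 0 := max_eq_left ((min_le_right _ _).trans (by linarith))
      simp [this])
  have hxM : ‖x‖ ≤ M := by
    rw [← hx, norm_smul, Real.norm_eq_abs, abs_of_nonneg (hχ0 x)]
    nlinarith [hM x, hχ1 x, hχ0 x, norm_nonneg (Ψ x)]
  have h1 : χ x = 1 := by
    simp only [χ]
    rw [min_eq_left (by linarith), max_eq_right zero_le_one]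
  refine ⟨x, ?_⟩
  simpa [h1] using hx

theorem bw_findim {V : Type*} [NormedAddCommGroup V] [NormedSpace ℝ V] [FiniteDimensional ℝ V]
    (Ψ : V → V) (hΨ : Continuous Ψ) (M : ℝ)
    (hM : ∀ x, ‖Ψ x‖ ≤ M) : ∃ x, Ψ x = x := by
  let e : V ≃L[ℝ] Eu (Module.finrank ℝ V) :=
    ContinuousLinearEquiv.ofFinrankEq (by simp)
  obtain ⟨y, hy⟩ := bw_bounded (fun y => e (Ψ (e.symm y))) (by fun_prop)
    (‖(e : V →L[ℝ] Eu (Module.finrank ℝ V))‖ * M) (fun y => by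
      refine ((e : V →L[ℝ] Eu (Module.finrank ℝ V)).le_opNorm _).trans ?_
      exact mul_le_mul_of_nonneg_left (hM _) (norm_nonneg _))
  exact ⟨e.symm y, by rw [← e.injective.eq_iff]; simpa using hy⟩

theorem schauder_fp {X : Type*} [NormedAddCommGroup X] [NormedSpace ℝ X]
    (Ψ : X → X) (hΨ : Continuous Ψ) (K : Set X) (hK : IsCompact K) (hΨK : ∀ x, Ψ x ∈ K) :
    ∃ x, Ψ x = x := by
  have happ : ∀ ε > 0, ∃ x, dist (Ψ x) x < ε := by
    intro ε hε
    obtain ⟨t, htK, htf, hcov⟩ := hK.finite_cover_balls hε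
    lift t to Finset X using htf
    let m : X → X → ℝ := fun i y => max 0 (ε - dist y i)
    have hm0 : ∀ i y, 0 ≤ m i y := fun i y => le_max_left _ _
    let S : X → ℝ := fun y => ∑ i ∈ t, m i y
    have hS : ∀ y ∈ K, 0 < S y := by
      intro y hy
      obtain ⟨i, hi, hyi⟩ := mem_iUnion₂.mp (hcov hy)
      refine Finset.sum_pos' (fun i _ => hm0 i y) ⟨i, hi, ?_⟩
      exact lt_max_of_lt_right (sub_pos.mpr hyi)
    let V := Submodule.span ℝ (t : Set X)
    have : FiniteDimensional ℝ V := FiniteDimensional.span_finset ℝ t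
    let P : X → V := fun y => ∑ i : t, (m i y / S y) • (⟨i, Submodule.subset_span i.2⟩ : V)
    have hPd : ∀ y ∈ K, dist (P y : X) y < ε := by
      intro y hy
      have hPy : (P y : X) = ∑ i ∈ t, (m i y / S y) • i := by
        simp only [P]
        rw [AddSubmonoidClass.coe_finsetSum]
        simp only [Submodule.coe_smul]
        exact Finset.sum_coe_sort t (fun i => (m i y / S y) • i)
      have hsum : ∑ i ∈ t, (m i y / S y) = 1 := by
        rw [← Finset.sum_div]; exact div_self (hS y hy).ne'
      have hconv : (P y : X) ∈ Metric.ball y ε := by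
        rw [hPy]
        have hmem := (convex_ball y ε).sum_mem (t := t.filter (fun i => 0 < m i y))
          (w := fun i => m i y / S y) (z := id) (fun i _ => div_nonneg (hm0 i y) (hS y hy).le)
          (by
            rw [Finset.sum_filter_of_ne, hsum]
            intro i _ hne
            rcases (hm0 i y).lt_or_eq with h | h
            · exact h
            · exact absurd (by rw [← h, zero_div]) hne)
          (by
            intro i hi
            have h := (Finset.mem_filter.mp hi).2
            have : 0 < ε - dist y i := by
              rcases lt_max_iff.mp h with h | h
              · exact absurd h (lt_irrefl _)
              · exact h
            rw [Metric.mem_ball, dist_comm]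
            simp only [id]; linarith)
        rw [Finset.sum_filter_of_ne] at hmem
        · exact hmem
        · intro i _ hne
          rcases (hm0 i y).lt_or_eq with h | h
          · exact h
          · exact absurd (by rw [← h]; simp) hne
      exact hconv
    have hmc : ∀ i, Continuous (m i) := fun i => by simp only [m]; fun_prop
    have hPc : Continuous fun v : V => P (Ψ v) := by
      simp only [P]
      refine continuous_finsetSum _ fun i _ => Continuous.fun_smul ?_ continuous_const
      refine Continuous.div ((hmc i).comp (by fun_prop)) ?_ (fun v => (hS _ (hΨK v)).ne')
      exact continuous_finsetSum _ fun i _ => (hmc i).comp (by fun_prop)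
    obtain ⟨M, hM⟩ := hK.isBounded.exists_norm_le
    obtain ⟨v, hv⟩ := bw_findim (fun v : V => P (Ψ v)) hPc (M + ε) (fun v => by
      have h1 := hPd _ (hΨK v)
      have h2 := hM _ (hΨK v)
      rw [dist_eq_norm] at h1
      have h3 := norm_sub_norm_le (P (Ψ v) : X) (Ψ v)
      have h4 : ‖P (Ψ v)‖ = ‖(P (Ψ v) : X)‖ := rfl
      rw [h4]; linarith)
    refine ⟨v, ?_⟩
    have h1 := hPd _ (hΨK v)
    rw [hv, dist_comm] at h1
    exact h1
  choose x hx using fun k : ℕ => happ (1 / ((k:ℝ) + 1)) (by positivity)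
  obtain ⟨y, _, φ, hφ, hlim⟩ := hK.tendsto_subseq (fun k => hΨK (x k))
  have hd0 : Tendsto (fun k => dist (Ψ (x (φ k))) (x (φ k))) atTop (nhds 0) := by
    refine squeeze_zero (fun _ => dist_nonneg) (fun k => (hx (φ k)).le) ?_
    exact tendsto_one_div_add_atTop_nhds_zero_nat.comp hφ.tendsto_atTop
  have hxl : Tendsto (fun k => x (φ k)) atTop (nhds y) :=
    (tendsto_iff_of_dist hd0).mp hlim
  exact ⟨y, tendsto_nhds_unique ((hΨ.tendsto y).comp hxl) hlim⟩


theorem expansion_fp {X : Type*} [NormedAddCommGroup X] [NormedSpace ℝ X]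
    (Φ : X → X) (hΦ : Continuous Φ) (r R : ℝ) (hr : 0 < r) (hrR : r < R)
    (K : Set X) (hK : IsCompact K) (hΦK : ∀ u, ‖u‖ ≤ R → Φ u ∈ K) (e : X)
    (h1 : ∀ lam : ℝ, 0 ≤ lam → lam ≤ 1 → ∀ u, ‖u‖ = r → u ≠ lam • Φ u)
    (h2 : ∀ α : ℝ, 0 ≤ α → ∀ u, ‖u‖ = R → u ≠ Φ u + α • e)
    (α0 : ℝ) (hα0 : 0 ≤ α0) (h3 : ∀ u, ‖u‖ ≤ R → u ≠ Φ u + α0 • e) :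
    ∃ u, r < ‖u‖ ∧ ‖u‖ < R ∧ u = Φ u := by
  let nn : ℝ → ℝ := fun s => max r (min R (r + (R - r) * (2 - 2 * s)))
  let k : ℝ → ℝ := fun s => nn s / max s (1/4)
  let lam : ℝ → ℝ := fun s => max 0 (min 1 (2 - s))
  let al : ℝ → ℝ := fun s => α0 * max 0 (min 1 (2 - 4 * s))
  have hnnr : ∀ s, r ≤ nn s := fun s => le_max_left _ _
  have hnnR : ∀ s, nn s ≤ R := fun s => max_le hrR.le (min_le_left _ _)
  have hmx : ∀ s : ℝ, 0 < max s (1/4) := fun s => lt_max_of_lt_right (by norm_num)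
  have hk : ∀ s, 0 < k s := fun s => div_pos (hr.trans_le (hnnr s)) (hmx s)
  have hnnc : Continuous nn := by simp only [nn]; fun_prop
  have hkc : Continuous k := hnnc.div (by fun_prop) fun s => (hmx s).ne'
  have hlc : Continuous lam := by simp only [lam]; fun_prop
  have hac : Continuous al := by simp only [al]; fun_prop
  let Ψ : X → X := fun u => (lam ‖u‖ * (k ‖u‖)⁻¹) • (Φ (k ‖u‖ • u) + al ‖u‖ • e)
  have hvn : ∀ u : X, ‖k ‖u‖ • u‖ = nn ‖u‖ * (‖u‖ / max ‖u‖ (1/4)) := by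
    intro u
    rw [norm_smul, Real.norm_eq_abs, abs_of_pos (hk _)]
    simp only [k]; ring
  have hvR : ∀ u : X, ‖k ‖u‖ • u‖ ≤ R := by
    intro u
    rw [hvn]
    have : ‖u‖ / max ‖u‖ (1/4) ≤ 1 := div_le_one_of_le₀ (le_max_left _ _) (hmx _).le
    have h0 : 0 ≤ ‖u‖ / max ‖u‖ (1/4) := div_nonneg (norm_nonneg _) (hmx _).le
    nlinarith [hnnr ‖u‖, hnnR ‖u‖]
  have hΨc : Continuous Ψ := by
    have hkn : Continuous fun u : X => k ‖u‖ := hkc.comp continuous_norm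
    have hln : Continuous fun u : X => lam ‖u‖ := hlc.comp continuous_norm
    have han : Continuous fun u : X => al ‖u‖ := hac.comp continuous_norm
    have hki : Continuous fun u : X => (k ‖u‖)⁻¹ := hkn.inv₀ fun u => (hk _).ne'
    exact (hln.mul hki).smul ((hΦ.comp (hkn.smul continuous_id)).add (han.smul continuous_const))
  let K' : Set X := (fun p : ℝ × X × ℝ => p.1 • (p.2.1 + p.2.2 • e)) ''
    (Icc 0 (2 / r) ×ˢ (K ×ˢ Icc 0 α0))
  have hK' : IsCompact K' :=
    (isCompact_Icc.prod (hK.prod isCompact_Icc)).image (by fun_prop)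
  obtain ⟨u, hu⟩ := schauder_fp Ψ hΨc K' hK' (fun u => by
    refine ⟨(lam ‖u‖ * (k ‖u‖)⁻¹, Φ (k ‖u‖ • u), al ‖u‖), ⟨⟨?_, ?_⟩, hΦK _ (hvR u), ?_, ?_⟩, rfl⟩
    · exact mul_nonneg (le_max_left _ _) (inv_nonneg.mpr (hk _).le)
    · show lam ‖u‖ * (k ‖u‖)⁻¹ ≤ 2 / r
      rcases le_total 2 ‖u‖ with h | h
      · have : lam ‖u‖ = 0 := max_eq_left ((min_le_right _ _).trans (by linarith))
        rw [this, zero_mul]; positivity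
      · have hl : lam ‖u‖ ≤ 1 := max_le zero_le_one (min_le_left _ _)
        have hki : (k ‖u‖)⁻¹ ≤ 2 / r := by
          simp only [k]; rw [inv_div]
          have : max ‖u‖ (1/4) ≤ 2 := max_le h (by norm_num)
          gcongr
          exact hnnr _
        calc lam ‖u‖ * (k ‖u‖)⁻¹ ≤ 1 * (k ‖u‖)⁻¹ :=
              mul_le_mul_of_nonneg_right hl (inv_nonneg.mpr (hk _).le)
          _ ≤ 2 / r := by rw [one_mul]; exact hki
    · exact mul_nonneg hα0 (le_max_left _ _)
    · show α0 * _ ≤ α0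
      have : max (0:ℝ) (min 1 (2 - 4 * ‖u‖)) ≤ 1 := max_le zero_le_one (min_le_left _ _)
      nlinarith)
  set v := k ‖u‖ • u with hv
  have hveq : v = lam ‖u‖ • (Φ v + al ‖u‖ • e) := by
    have : k ‖u‖ • Ψ u = v := by rw [hu]
    refine this.symm.trans ?_
    show k ‖u‖ • ((lam ‖u‖ * (k ‖u‖)⁻¹) • (Φ v + al ‖u‖ • e)) = _
    rw [smul_smul, mul_comm (lam _), ← mul_assoc, mul_inv_cancel₀ (hk _).ne', one_mul]
  have hvn' := hvn u
  rw [← hv] at hvn'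
  rcases le_or_gt 1 ‖u‖ with hs | hs
  · exfalso
    have e1 : nn ‖u‖ = r := max_eq_left ((min_le_right _ _).trans (by nlinarith))
    have e2 : al ‖u‖ = 0 := by
      simp only [al]; rw [max_eq_left ((min_le_right _ _).trans (by linarith)), mul_zero]
    have e3 : max ‖u‖ (1/4) = ‖u‖ := max_eq_left (by linarith)
    rw [e1, e3, div_self (by linarith), mul_one] at hvn'
    rw [e2, zero_smul, add_zero] at hveq
    exact h1 _ (le_max_left _ _) (max_le zero_le_one (min_le_left _ _)) v hvn' hveq
  have el : lam ‖u‖ = 1 := by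
    simp only [lam]; rw [min_eq_left (by linarith), max_eq_right zero_le_one]
  rw [el, one_smul] at hveq
  have hal0 : 0 ≤ al ‖u‖ := mul_nonneg hα0 (le_max_left _ _)
  rcases le_or_gt (1/4) ‖u‖ with hs4 | hs4
  · have e3 : max ‖u‖ (1/4) = ‖u‖ := max_eq_left hs4
    rw [e3, div_self (by linarith), mul_one] at hvn'
    rcases le_or_gt ‖u‖ (1/2) with hs2 | hs2
    · exfalso
      have e1 : nn ‖u‖ = R := by
        simp only [nn]
        rw [min_eq_left (by nlinarith), max_eq_right hrR.le]
      exact h2 _ hal0 v (hvn'.trans e1) hveq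
    · have e2 : al ‖u‖ = 0 := by
        simp only [al]; rw [max_eq_left ((min_le_right _ _).trans (by linarith)), mul_zero]
      have hvr : r < ‖v‖ := by
        rw [hvn']
        exact lt_max_of_lt_right (lt_min hrR (by nlinarith))
      rcases (hvn'.le.trans (hnnR _)).lt_or_eq with h | h
      · rw [e2, zero_smul, add_zero] at hveq
        exact ⟨v, hvr, h, hveq⟩
      · exact absurd hveq (h2 _ hal0 v h)
  · exfalso
    have e2 : al ‖u‖ = α0 := by
      simp only [al]; rw [min_eq_left (by linarith), max_eq_right zero_le_one, mul_one]
    rw [e2] at hveq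
    exact h3 v (hvR u) hveq


/-- `v' = w`, `w' = k` on `[0,T]` -/
def DSol (T : ℝ) (k v w : ℝ → ℝ) : Prop :=
  (∀ x ∈ Icc (0:ℝ) T, HasDerivWithinAt v (w x) (Icc (0:ℝ) T) x) ∧
  (∀ x ∈ Icc (0:ℝ) T, w x = w 0 + ∫ t in (0:ℝ)..x, k t)

def BC (N : Bool) (T : ℝ) (v w : ℝ → ℝ) : Prop :=
  match N with
  | true => w 0 = 0 ∧ w T = 0
  | false => v 0 = v T ∧ w 0 = w T

theorem DSol.cont_v {T : ℝ} {k v w : ℝ → ℝ} (h : DSol T k v w) : ContinuousOn v (Icc 0 T) :=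
  fun x hx => (h.1 x hx).continuousWithinAt

theorem DSol.hasDerivAt {T : ℝ} {k v w : ℝ → ℝ} (h : DSol T k v w) (x : ℝ) (hx : x ∈ Ioo 0 T) :
    HasDerivAt v (w x) x :=
  (h.1 x (Ioo_subset_Icc_self hx)).hasDerivAt (Icc_mem_nhds hx.1 hx.2)

theorem sub_ii {T : ℝ} {k : ℝ → ℝ} (hk : IntervalIntegrable k volume 0 T) {x y : ℝ}
    (hx : x ∈ Icc 0 T) (hy : y ∈ Icc 0 T) : IntervalIntegrable k volume x y := by
  have hT : 0 ≤ T := hx.1.trans hx.2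
  apply hk.mono_set
  rw [uIcc_of_le hT]
  exact uIcc_subset_Icc hx hy

theorem DSol.cont_w {T : ℝ} {k v w : ℝ → ℝ} (h : DSol T k v w)
    (hk : IntervalIntegrable k volume 0 T) : ContinuousOn w (Icc 0 T) := by
  rcases le_or_gt 0 T with hT | hT
  · have h1 := intervalIntegral.continuousOn_primitive_interval (μ := volume)
      (f := k) (a := 0) (b := T)
      (by rw [uIcc_of_le hT]; exact (intervalIntegrable_iff_integrableOn_Icc_of_le hT).mp hk)
    rw [uIcc_of_le hT] at h1
    exact (continuousOn_const.add h1).congr fun x hx => h.2 x hx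
  · rw [Icc_eq_empty (not_le.mpr hT)]; exact continuousOn_empty _

theorem DSol.w_sub {T : ℝ} {k v w : ℝ → ℝ} (h : DSol T k v w)
    (hk : IntervalIntegrable k volume 0 T) {x y : ℝ} (hx : x ∈ Icc 0 T) (hy : y ∈ Icc 0 T) :
    w y - w x = ∫ t in x..y, k t := by
  have h0 : (0:ℝ) ∈ Icc 0 T := ⟨le_rfl, hx.1.trans hx.2⟩
  rw [h.2 x hx, h.2 y hy, ← intervalIntegral.integral_add_adjacent_intervals
    (sub_ii hk h0 hx) (sub_ii hk hx hy)]
  ring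

theorem DSol.v_sub {T : ℝ} {k v w : ℝ → ℝ} (h : DSol T k v w)
    (hk : IntervalIntegrable k volume 0 T) (φ φ' : ℝ → ℝ) (hφ : ∀ s, HasDerivAt φ (φ' s) s)
    (hφ' : Continuous φ') {x y : ℝ} (hx : x ∈ Icc 0 T) (hy : y ∈ Icc 0 T) (hxy : x ≤ y) :
    φ (v y) - φ (v x) = ∫ t in x..y, φ' (v t) * w t := by
  have hsub : Icc x y ⊆ Icc 0 T := Icc_subset_Icc hx.1 hy.2
  have hφc : Continuous φ := continuous_iff_continuousAt.mpr fun s => (hφ s).continuousAt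
  symm
  apply intervalIntegral.integral_eq_sub_of_hasDerivAt_of_le hxy (f := fun t => φ (v t))
  · exact hφc.comp_continuousOn (h.cont_v.mono hsub)
  · intro t ht
    exact (hφ (v t)).comp t (h.hasDerivAt t ⟨hx.1.trans_lt ht.1, ht.2.trans_le hy.2⟩)
  · apply ContinuousOn.intervalIntegrable
    rw [uIcc_of_le hxy]
    exact ((hφ'.comp_continuousOn h.cont_v).mul (h.cont_w hk)).mono hsub

theorem DSol.ibp {T : ℝ} (hT : 0 < T) {k v w : ℝ → ℝ} (h : DSol T k v w)
    (hk : IntervalIntegrable k volume 0 T) (φ φ' : ℝ → ℝ) (hφ : ∀ s, HasDerivAt φ (φ' s) s)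
    (hφ' : Continuous φ') :
    ∫ x in (0:ℝ)..T, (k x * φ (v x) + w x * (φ' (v x) * w x)) = w T * φ (v T) - w 0 * φ (v 0) := by
  have hφc : Continuous φ := continuous_iff_continuousAt.mpr fun s => (hφ s).continuousAt
  let f : ℝ → ℝ := fun x => w 0 + ∫ t in (0:ℝ)..x, k t
  let g : ℝ → ℝ := fun x => φ (v x)
  have hfac : AbsolutelyContinuousOnInterval f 0 T := by
    have h1 := hk.absolutelyContinuousOnInterval_intervalIntegral (c := 0) (by simp)
    have h2 : AbsolutelyContinuousOnInterval (fun _ : ℝ => w 0) 0 T :=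
      contDiffOn_const.absolutelyContinuousOnInterval
    exact h2.add h1
  have hgd : ∀ x ∈ Icc 0 T, HasDerivWithinAt g (φ' (v x) * w x) (Icc 0 T) x := fun x hx =>
    (hφ (v x)).comp_hasDerivWithinAt x (h.1 x hx)
  have hgc' : ContinuousOn (fun x => φ' (v x) * w x) (Icc 0 T) :=
    (hφ'.comp_continuousOn h.cont_v).mul (h.cont_w hk)
  have hgac : AbsolutelyContinuousOnInterval g 0 T := by
    obtain ⟨C, hC⟩ := isCompact_Icc.exists_bound_of_continuousOn hgc'
    have hC0 : 0 ≤ C := (norm_nonneg _).trans (hC 0 ⟨le_rfl, hT.le⟩)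
    lift C to NNReal using hC0
    have : LipschitzOnWith C g (uIcc 0 T) := by
      rw [uIcc_of_le hT.le]
      exact (convex_Icc 0 T).lipschitzOnWith_of_nnnorm_hasDerivWithin_le hgd (fun x hx => hC x hx)
    exact this.absolutelyContinuousOnInterval
  have hmain := hfac.integral_deriv_mul_eq_sub hgac
  have hfT : f T = w T := (h.2 T ⟨hT.le, le_rfl⟩).symm
  have hf0 : f 0 = w 0 := by simp [f]
  rw [hfT, hf0] at hmain
  rw [← hmain]
  apply intervalIntegral.integral_congr_ae
  have hne : ∀ᵐ x : ℝ, x ≠ T := by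
    simp [ae_iff]
  filter_upwards [hk.ae_hasDerivAt_integral, hne] with x hx hxT hx2
  rw [uIoc_of_le hT.le] at hx2
  have hxI : x ∈ Icc 0 T := Ioc_subset_Icc_self hx2
  have hxo : x ∈ Ioo 0 T := ⟨hx2.1, lt_of_le_of_ne hx2.2 hxT⟩
  have e1 : deriv f x = k x := by
    have := hx (by rw [uIcc_of_le hT.le]; exact hxI) 0 (by simp)
    exact (this.const_add (w 0)).deriv
  have e2 : deriv g x = φ' (v x) * w x :=
    ((hgd x hxI).hasDerivAt (Icc_mem_nhds hxo.1 hxo.2)).deriv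
  have e3 : f x = w x := (h.2 x hxI).symm
  rw [e1, e2, e3]

theorem BC.phi {N : Bool} {T : ℝ} {v w : ℝ → ℝ} (h : BC N T v w) (φ : ℝ → ℝ) :
    w T * φ (v T) - w 0 * φ (v 0) = 0 := by
  cases N with
  | true => rw [h.1, h.2]; ring
  | false => rw [h.1, h.2]; ring

theorem BC.w_eq {N : Bool} {T : ℝ} {v w : ℝ → ℝ} (h : BC N T v w) : w T = w 0 := by
  have := h.phi (fun _ => 1)
  linarith

theorem BC.zero {N : Bool} {T : ℝ} (hT : 0 < T) {k v w : ℝ → ℝ} (h : BC N T v w)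
    (hd : DSol T k v w) : ∃ y ∈ Icc 0 T, w y = 0 := by
  cases N with
  | true => exact ⟨0, ⟨le_rfl, hT.le⟩, h.1⟩
  | false =>
    obtain ⟨y, hy, h0⟩ := exists_hasDerivAt_eq_zero hT hd.cont_v h.1 (fun x hx => hd.hasDerivAt x hx)
    exact ⟨y, Ioo_subset_Icc_self hy, h0⟩

theorem BC.min {N : Bool} {T : ℝ} (hT : 0 < T) {k v w : ℝ → ℝ} (h : BC N T v w)
    (hd : DSol T k v w) (hv : ∀ x ∈ Icc 0 T, 0 ≤ v x) (x : ℝ) (hx : x ∈ Icc 0 T) (hx0 : v x = 0) :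
    w x = 0 := by
  have h0m : (0:ℝ) ∈ Icc 0 T := ⟨le_rfl, hT.le⟩
  have hTm : T ∈ Icc 0 T := ⟨hT.le, le_rfl⟩
  have hl : v 0 = 0 → 0 ≤ w 0 := by
    intro h0
    have h1 := (hd.1 0 h0m).mono (Ioc_subset_Icc_self)
    rw [hasDerivWithinAt_iff_tendsto_slope' (by simp)] at h1
    have : (nhdsWithin (0:ℝ) (Ioc 0 T)).NeBot := by
      rw [nhdsWithin_Ioc_eq_nhdsGT hT]; infer_instance
    refine ge_of_tendsto h1 ?_
    filter_upwards [self_mem_nhdsWithin] with y hy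
    rw [slope_def_field, h0, sub_zero, sub_zero]
    exact div_nonneg (hv y (Ioc_subset_Icc_self hy)) hy.1.le
  have hr : v T = 0 → w T ≤ 0 := by
    intro h0
    have h1 := (hd.1 T hTm).mono (Ico_subset_Icc_self)
    rw [hasDerivWithinAt_iff_tendsto_slope' (by simp)] at h1
    have : (nhdsWithin T (Ico 0 T)).NeBot := by
      rw [nhdsWithin_Ico_eq_nhdsLT hT]; infer_instance
    refine le_of_tendsto h1 ?_
    filter_upwards [self_mem_nhdsWithin] with y hy
    rw [slope_def_field, h0, sub_zero]
    exact div_nonpos_of_nonneg_of_nonpos (hv y (Ico_subset_Icc_self hy)) (by linarith [hy.2])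
  rcases hx.1.eq_or_lt with h0 | h0
  · subst h0
    cases N with
    | true => exact h.1
    | false =>
      have a1 := hl hx0
      have a2 := hr (h.1 ▸ hx0)
      have a3 := h.2
      linarith
  rcases hx.2.eq_or_lt with h1 | h1
  · subst h1
    cases N with
    | true => exact h.2
    | false =>
      have a1 := hl (h.1.trans hx0)
      have a2 := hr hx0
      have a3 := h.2
      linarith
  · refine IsLocalMin.hasDerivAt_eq_zero ?_ (hd.hasDerivAt x ⟨h0, h1⟩)
    filter_upwards [Icc_mem_nhds h0 h1] with y hy
    rw [hx0]; exact hv y hy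


theorem hasDerivAt_pos_sq (s : ℝ) : HasDerivAt (fun s : ℝ => (max s 0)^2) (2 * max s 0) s := by
  rcases lt_trichotomy s 0 with h | h | h
  · rw [max_eq_right h.le, mul_zero]
    refine (hasDerivAt_const s (0:ℝ)).congr_of_eventuallyEq ?_
    filter_upwards [Iio_mem_nhds h] with y hy
    rw [max_eq_right (le_of_lt hy)]; norm_num
  · subst h
    rw [hasDerivAt_iff_isLittleO]
    have h2 := Asymptotics.isLittleO_pow_id (𝕜 := ℝ) (n := 2) (by norm_num)
    simp only [max_self, mul_zero, smul_zero, sub_zero]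
    refine Asymptotics.IsBigO.trans_isLittleO ?_ h2
    refine Asymptotics.IsBigO.of_bound 1 (Eventually.of_forall fun x => ?_)
    rw [one_mul, Real.norm_eq_abs, Real.norm_eq_abs]
    rcases le_total x 0 with hx | hx
    · rw [max_eq_right hx]; norm_num; positivity
    · rw [max_eq_left hx]; norm_num
  · rw [max_eq_left h.le]
    have h1 : HasDerivAt (fun s : ℝ => s^2) (2 * s) s := by simpa using hasDerivAt_pow 2 s
    refine h1.congr_of_eventuallyEq ?_
    filter_upwards [Ioi_mem_nhds h] with y hy
    rw [max_eq_left (le_of_lt hy)]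

theorem max_princ {N : Bool} {T : ℝ} (hT : 0 < T) {k v w : ℝ → ℝ} (hd : DSol T k v w)
    (hb : BC N T v w) (hk : IntervalIntegrable k volume 0 T) (M : ℝ)
    (hM : ∀ᵐ x ∂volume.restrict (Icc 0 T), M < v x → 0 ≤ k x) :
    (∀ x ∈ Icc 0 T, v x ≤ M) ∨ ∃ c, M < c ∧ ∀ x ∈ Icc 0 T, v x = c := by
  let φ : ℝ → ℝ := fun s => (max (s - M) 0)^2
  let φ' : ℝ → ℝ := fun s => 2 * max (s - M) 0
  have hφ : ∀ s, HasDerivAt φ (φ' s) s := by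
    intro s
    have := (hasDerivAt_pos_sq (s - M)).comp s ((hasDerivAt_id s).sub_const M)
    simpa [φ, φ', Function.comp_def] using this
  have hφ' : Continuous φ' := by fun_prop
  have hφc : Continuous φ := by fun_prop
  have h1 := hd.ibp hT hk φ φ' hφ hφ'
  rw [hb.phi φ] at h1
  have hvc := hd.cont_v
  have hwc := hd.cont_w hk
  have c1 : ContinuousOn (fun x => φ (v x)) (uIcc 0 T) := by
    rw [uIcc_of_le hT.le]; exact hφc.comp_continuousOn hvc
  have c2' : ContinuousOn (fun x => w x * (φ' (v x) * w x)) (Icc 0 T) :=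
    hwc.mul ((hφ'.comp_continuousOn hvc).mul hwc)
  have c2 : ContinuousOn (fun x => w x * (φ' (v x) * w x)) (uIcc 0 T) := by
    rw [uIcc_of_le hT.le]; exact c2'
  have n2 : ∀ x, 0 ≤ w x * (φ' (v x) * w x) := by
    intro x
    have : 0 ≤ φ' (v x) := by positivity
    have := mul_nonneg this (mul_self_nonneg (w x))
    linarith
  have i1 : IntervalIntegrable (fun x => k x * φ (v x)) volume 0 T := hk.mul_continuousOn c1
  have i2 := c2.intervalIntegrable (μ := volume)
  have h2 : ∫ x in (0:ℝ)..T, w x * (φ' (v x) * w x) ≤ 0 := by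
    refine le_trans ?_ h1.le
    apply intervalIntegral.integral_mono_ae_restrict hT.le i2 (i1.add i2)
    filter_upwards [hM] with x hx
    have : 0 ≤ k x * φ (v x) := by
      rcases lt_or_ge M (v x) with h | h
      · exact mul_nonneg (hx h) (by positivity)
      · have : φ (v x) = 0 := by
          simp only [φ]; rw [max_eq_right (by linarith)]; norm_num
        rw [this, mul_zero]
    change w x * (φ' (v x) * w x) ≤ k x * φ (v x) + w x * (φ' (v x) * w x)
    linarith
  have h3 : ∀ x ∈ Icc 0 T, w x * (φ' (v x) * w x) = 0 := by
    intro x hx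
    by_contra hne
    have := intervalIntegral.integral_pos hT c2' (fun y _ => n2 y) ⟨x, hx, lt_of_le_of_ne (n2 x) (Ne.symm hne)⟩
    linarith
  have h4 : ∀ x ∈ Icc 0 T, φ' (v x) * w x = 0 := by
    intro x hx
    rcases mul_eq_zero.mp (h3 x hx) with h | h
    · rw [h, mul_zero]
    · exact h
  have h0m : (0:ℝ) ∈ Icc 0 T := ⟨le_rfl, hT.le⟩
  have h5 : ∀ x ∈ Icc 0 T, φ (v x) = φ (v 0) := by
    intro x hx
    have := hd.v_sub hk φ φ' hφ hφ' h0m hx hx.1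
    rw [intervalIntegral.integral_congr (g := fun _ => (0:ℝ))] at this
    · simp at this; linarith
    · intro t ht
      rw [uIcc_of_le hx.1] at ht
      exact h4 t ⟨ht.1, ht.2.trans hx.2⟩
  have h6 : ∀ x ∈ Icc 0 T, max (v x - M) 0 = max (v 0 - M) 0 := by
    intro x hx
    have := h5 x hx
    simp only [φ] at this
    exact (pow_left_inj₀ (le_max_right _ _) (le_max_right _ _) (by norm_num)).mp this
  rcases lt_or_ge M (v 0) with h | h
  · right
    refine ⟨v 0, h, fun x hx => ?_⟩
    have := h6 x hx
    rw [max_eq_left (a := v 0 - M) (by linarith)] at this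
    rcases le_total (v x - M) 0 with h' | h'
    · rw [max_eq_right h'] at this; linarith
    · rw [max_eq_left h'] at this; linarith
  · left
    intro x hx
    have := h6 x hx
    rw [max_eq_right (a := v 0 - M) (by linarith)] at this
    have := le_max_left (v x - M) 0
    linarith

theorem DSol.neg {T : ℝ} {k v w : ℝ → ℝ} (hd : DSol T k v w) :
    DSol T (fun t => - k t) (fun t => - v t) (fun t => - w t) := by
  refine ⟨fun x hx => (hd.1 x hx).neg, fun x hx => ?_⟩
  have := hd.2 x hx
  rw [intervalIntegral.integral_neg]
  change - w x = - w 0 + _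
  linarith

theorem BC.neg {N : Bool} {T : ℝ} {v w : ℝ → ℝ} (h : BC N T v w) :
    BC N T (fun t => - v t) (fun t => - w t) := by
  cases N with
  | true => exact ⟨by simp [h.1], by simp [h.2]⟩
  | false => exact ⟨by simp [h.1], by simp [h.2]⟩

def Sol (N : Bool) (T : ℝ) (h v w : ℝ → ℝ) : Prop :=
  DSol T (fun t => v t - h t) v w ∧ BC N T v w

theorem Sol.int {N : Bool} {T : ℝ} (hT : 0 < T) {h v w : ℝ → ℝ} (hs : Sol N T h v w)
    (hh : IntervalIntegrable h volume 0 T) :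
    IntervalIntegrable (fun t => v t - h t) volume 0 T := by
  refine IntervalIntegrable.sub ?_ hh
  apply ContinuousOn.intervalIntegrable
  rw [uIcc_of_le hT.le]; exact hs.1.cont_v

theorem Sol.nonneg {N : Bool} {T : ℝ} (hT : 0 < T) {h v w : ℝ → ℝ} (hs : Sol N T h v w)
    (hh : IntervalIntegrable h volume 0 T)
    (hp : ∀ᵐ x ∂volume.restrict (Icc 0 T), v x < 0 → 0 ≤ h x) :
    ∀ x ∈ Icc 0 T, 0 ≤ v x := by
  have hi := hs.int hT hh
  rcases max_princ hT hs.1.neg hs.2.neg hi.neg 0 (by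
    filter_upwards [hp] with x hx h0
    have := hx (by linarith)
    linarith) with h1 | ⟨c, hc, h1⟩
  · intro x hx
    have := h1 x hx
    linarith
  · exfalso
    have h0m : (0:ℝ) ∈ Icc 0 T := ⟨le_rfl, hT.le⟩
    have hTm : T ∈ Icc 0 T := ⟨hT.le, le_rfl⟩
    have e1 := hs.1.w_sub hi h0m hTm
    rw [hs.2.w_eq, sub_self] at e1
    have : ∫ x in (0:ℝ)..T, (v x - h x) ≤ ∫ x in (0:ℝ)..T, (-c) := by
      apply intervalIntegral.integral_mono_ae_restrict hT.le hi (by simp)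
      filter_upwards [hp, ae_restrict_mem measurableSet_Icc] with x hx hxm
      have a1 := h1 x hxm
      have := hx (by linarith)
      change v x - h x ≤ -c
      linarith
    rw [intervalIntegral.integral_const, smul_eq_mul, sub_zero] at this
    nlinarith [mul_pos hT hc]

/-- bound off `J` -/
theorem bound_off {N : Bool} {T : ℝ} (hT : 0 < T) {k v w : ℝ → ℝ} (hd : DSol T k v w)
    (hb : BC N T v w) (hk : IntervalIntegrable k volume 0 T) (M : ℝ) (J : Set ℝ) (hJ : J ⊆ Icc 0 T)
    (hJn : J.Nonempty) (hJv : ∀ x ∈ J, v x ≤ M)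
    (hM : ∀ᵐ x ∂volume.restrict (Icc 0 T), x ∉ J → 0 ≤ k x) :
    ∀ x ∈ Icc 0 T, v x ≤ M := by
  rcases max_princ hT hd hb hk M (by
    filter_upwards [hM] with x hx h0
    exact hx fun hxJ => absurd (hJv x hxJ) (not_le.mpr h0)) with h1 | ⟨c, hc, h1⟩
  · exact h1
  · obtain ⟨j, hj⟩ := hJn
    have := h1 j (hJ hj)
    have := hJv j hj
    linarith


theorem abs_int_le {T : ℝ} {f : ℝ → ℝ} (hf : IntervalIntegrable f volume 0 T) {x y : ℝ}
    (hx : x ∈ Icc 0 T) (hy : y ∈ Icc 0 T) : |∫ t in x..y, f t| ≤ ∫ t in (0:ℝ)..T, |f t| := by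
  have hT : 0 ≤ T := hx.1.trans hx.2
  have h1 := intervalIntegral.norm_integral_le_abs_integral_norm (f := f) (a := x) (b := y) (μ := volume)
  have h2 : |∫ t in x..y, ‖f t‖| ≤ |∫ t in (0:ℝ)..T, ‖f t‖| := by
    apply intervalIntegral.abs_integral_mono_interval
    · rw [uIoc_of_le hT, uIoc]
      exact Ioc_subset_Ioc (le_inf hx.1 hy.1) (sup_le hx.2 hy.2)
    · exact Eventually.of_forall fun t => norm_nonneg _
    · exact hf.norm
  rw [abs_of_nonneg (intervalIntegral.integral_nonneg hT fun t _ => norm_nonneg _)] at h2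
  exact h1.trans h2

theorem DSol.v_sub_abs {T : ℝ} {k v w : ℝ → ℝ} (h : DSol T k v w)
    (hk : IntervalIntegrable k volume 0 T) (φ φ' : ℝ → ℝ) (hφ : ∀ s, HasDerivAt φ (φ' s) s)
    (hφ' : Continuous φ') {x y : ℝ} (hx : x ∈ Icc 0 T) (hy : y ∈ Icc 0 T) :
    |φ (v y) - φ (v x)| ≤ ∫ t in (0:ℝ)..T, |φ' (v t) * w t| := by
  have hT : 0 ≤ T := hx.1.trans hx.2
  have hi : IntervalIntegrable (fun t => φ' (v t) * w t) volume 0 T := by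
    apply ContinuousOn.intervalIntegrable
    rw [uIcc_of_le hT]
    exact ((hφ'.comp_continuousOn h.cont_v).mul (h.cont_w hk))
  rcases le_total x y with hxy | hxy
  · rw [h.v_sub hk φ φ' hφ hφ' hx hy hxy]
    exact abs_int_le hi hx hy
  · rw [abs_sub_comm, h.v_sub hk φ φ' hφ hφ' hy hx hxy]
    exact abs_int_le hi hy hx

theorem Sol.bounds {N : Bool} {T : ℝ} (hT : 0 < T) {h v w : ℝ → ℝ} (hs : Sol N T h v w)
    (hh : IntervalIntegrable h volume 0 T) :
    (∀ x ∈ Icc 0 T, |v x| ≤ (1 + 1/T) * ∫ t in (0:ℝ)..T, |h t|) ∧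
    (∀ x ∈ Icc 0 T, |w x| ≤ (T + 2) * ∫ t in (0:ℝ)..T, |h t|) := by
  have hi := hs.int hT hh
  have hvc := hs.1.cont_v
  have hwc := hs.1.cont_w hi
  have hne : (Icc 0 T).Nonempty := ⟨0, le_rfl, hT.le⟩
  obtain ⟨x0, hx0, hmax⟩ := isCompact_Icc.exists_isMaxOn hne hvc.abs
  obtain ⟨y0, hy0, hmin⟩ := isCompact_Icc.exists_isMinOn hne hvc.abs
  set H := ∫ t in (0:ℝ)..T, |h t| with hH
  set M := |v x0| with hMd
  have hM : ∀ x ∈ Icc 0 T, |v x| ≤ M := fun x hx => hmax hx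
  have hm : ∀ x ∈ Icc 0 T, |v y0| ≤ |v x| := fun x hx => hmin hx
  have hM0 : 0 ≤ M := abs_nonneg _
  have hH0 : 0 ≤ H := intervalIntegral.integral_nonneg hT.le fun t _ => abs_nonneg _
  have cu : ∀ f : ℝ → ℝ, ContinuousOn f (Icc 0 T) → IntervalIntegrable f volume 0 T := by
    intro f hf
    apply ContinuousOn.intervalIntegrable
    rwa [uIcc_of_le hT.le]
  have h1 := hs.1.ibp hT hi (fun s => s) (fun _ => 1) (fun s => hasDerivAt_id s) continuous_const
  rw [hs.2.phi (fun s => s)] at h1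
  have ivv := cu (fun t => v t * v t) (hvc.mul hvc)
  have iww := cu (fun t => w t * w t) (hwc.mul hwc)
  have ihv : IntervalIntegrable (fun t => h t * v t) volume 0 T :=
    hh.mul_continuousOn (by rwa [uIcc_of_le hT.le])
  have iE := ivv.add iww
  set E := ∫ t in (0:ℝ)..T, (v t * v t + w t * w t) with hE
  have hE1 : E = ∫ t in (0:ℝ)..T, h t * v t := by
    have e : ∫ x in (0:ℝ)..T, ((v x - h x) * v x + w x * (1 * w x)) = E - ∫ t in (0:ℝ)..T, h t * v t := by
      rw [hE, ← intervalIntegral.integral_sub iE ihv]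
      congr 1; ext t; ring
    linarith
  have hE2 : E ≤ M * H := by
    rw [hE1, hH, ← intervalIntegral.integral_const_mul]
    apply intervalIntegral.integral_mono_on hT.le ihv (hh.abs.const_mul M)
    intro t ht
    calc h t * v t ≤ |h t * v t| := le_abs_self _
      _ = |v t| * |h t| := by rw [abs_mul, mul_comm]
      _ ≤ M * |h t| := by gcongr; exact hM t ht
  have hE3 : T * v y0 ^2 ≤ E := by
    have : ∫ t in (0:ℝ)..T, (v y0)^2 ≤ E := by
      apply intervalIntegral.integral_mono_on hT.le (by simp) iE
      intro t ht
      have := sq_le_sq.mpr (hm t ht)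
      nlinarith [mul_self_nonneg (w t)]
    rwa [intervalIntegral.integral_const, smul_eq_mul, sub_zero] at this
  have hE4 : v x0 ^ 2 - v y0 ^ 2 ≤ E := by
    have h2 := hs.1.v_sub_abs hi (fun s => s^2) (fun s => 2 * s)
      (fun s => by simpa using hasDerivAt_pow 2 s) (by fun_prop) hy0 hx0
    refine (le_abs_self _).trans (h2.trans ?_)
    apply intervalIntegral.integral_mono_on hT.le _ iE
    · intro t ht
      rw [abs_le]
      constructor <;> nlinarith [sq_nonneg (v t + w t), sq_nonneg (v t - w t)]
    · exact (cu _ ((continuousOn_const.mul hvc).mul hwc)).abs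
  have hfin : M ≤ (1 + 1/T) * H := by
    have hM2 : M * M = v x0 ^2 := by rw [hMd, abs_mul_abs_self]; ring
    have : v y0 ^ 2 ≤ M * H / T := by
      rw [le_div_iff₀ hT]; linarith
    have h7 : M * M ≤ M * ((1 + 1/T) * H) := by
      have : M * ((1 + 1/T) * H) = M * H + M * H / T := by field_simp
      linarith
    rcases hM0.eq_or_lt with h0 | h0
    · rw [← h0]; positivity
    · exact le_of_mul_le_mul_left h7 h0
  refine ⟨fun x hx => (hM x hx).trans hfin, fun x hx => ?_⟩
  obtain ⟨y, hy, hwy⟩ := hs.2.zero hT hs.1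
  have e1 := hs.1.w_sub hi hy hx
  rw [hwy, sub_zero] at e1
  rw [e1]
  refine (abs_int_le hi hy hx).trans ?_
  have : ∫ t in (0:ℝ)..T, |v t - h t| ≤ ∫ t in (0:ℝ)..T, (M + |h t|) := by
    apply intervalIntegral.integral_mono_on hT.le hi.abs ((by simp : IntervalIntegrable (fun _ => M) volume 0 T).add hh.abs)
    intro t ht
    have := abs_sub (v t) (h t)
    have := hM t ht
    linarith
  rw [intervalIntegral.integral_add (by simp) hh.abs, intervalIntegral.integral_const, smul_eq_mul, sub_zero] at this
  have h8 : T * M ≤ T * ((1 + 1/T) * H) := by gcongr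
  have h9 : T * ((1 + 1/T) * H) = (T + 1) * H := by field_simp
  rw [← hH] at this
  linarith

theorem two_by_two (C S : ℝ) (hq : C ^ 2 - S ^ 2 = 1) (hC : 2 - 2 * C ≠ 0) (m1 m2 : ℝ) :
    ∃ A B, (C - 1) * A + S * B = m1 ∧ S * A + (C - 1) * B = m2 := by
  refine ⟨((C - 1) * m1 - S * m2) / (2 - 2 * C), ((C - 1) * m2 - S * m1) / (2 - 2 * C), ?_, ?_⟩
  · rw [mul_div_assoc', mul_div_assoc', ← add_div, div_eq_iff hC]
    linear_combination m1 * hq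
  · rw [mul_div_assoc', mul_div_assoc', ← add_div, div_eq_iff hC]
    linear_combination m2 * hq

theorem Sol.exists (N : Bool) {T : ℝ} (hT : 0 < T) {h : ℝ → ℝ}
    (hh : IntervalIntegrable h volume 0 T) : ∃ v w, Sol N T h v w := by
  let h' : ℝ → ℝ := (Ioc 0 T).indicator h
  have hh' : Integrable h' := by
    rw [integrable_indicator_iff measurableSet_Ioc]
    exact (intervalIntegrable_iff_integrableOn_Ioc_of_le hT.le).mp hh
  let H1 : ℝ → ℝ := fun x => ∫ t in (0:ℝ)..x, h' t
  have hH1e : ∀ x ∈ Icc 0 T, H1 x = ∫ t in (0:ℝ)..x, h t := by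
    intro x hx
    apply intervalIntegral.integral_congr_ae
    refine Eventually.of_forall fun t ht => ?_
    rw [uIoc_of_le hx.1] at ht
    exact indicator_of_mem (show t ∈ Ioc 0 T from ⟨ht.1, ht.2.trans hx.2⟩) _
  have hH1c : Continuous H1 := intervalIntegral.continuous_primitive (fun a b => hh'.intervalIntegrable) 0
  have prim : ∀ f : ℝ → ℝ, Continuous f → ∀ x, HasDerivAt (fun x => ∫ t in (0:ℝ)..x, f t) (f x) x :=
    fun f hf x => intervalIntegral.integral_hasDerivAt_right (hf.intervalIntegrable _ _)
      (hf.stronglyMeasurableAtFilter _ _) hf.continuousAt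
  let H2 : ℝ → ℝ := fun x => ∫ t in (0:ℝ)..x, H1 t
  have hH2 : ∀ x, HasDerivAt H2 (H1 x) x := prim H1 hH1c
  have hH2c : Continuous H2 := continuous_iff_continuousAt.mpr fun x => (hH2 x).continuousAt
  let P : ℝ → ℝ := fun x => ∫ t in (0:ℝ)..x, Real.sinh t * H2 t
  let Q : ℝ → ℝ := fun x => ∫ t in (0:ℝ)..x, Real.cosh t * H2 t
  have hP : ∀ x, HasDerivAt P (Real.sinh x * H2 x) x := prim _ (Real.continuous_sinh.mul hH2c)
  have hQ : ∀ x, HasDerivAt Q (Real.cosh x * H2 x) x := prim _ (Real.continuous_cosh.mul hH2c)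
  have hP0 : P 0 = 0 := by simp [P]
  have hQ0 : Q 0 = 0 := by simp [Q]
  have hH10 : H1 0 = 0 := by simp [H1]
  have hH20 : H2 0 = 0 := by simp [H2]
  have key : ∀ A B : ℝ, DSol T
      (fun t => (Real.cosh t * (A + P t) + Real.sinh t * (B - Q t) - H2 t) - h t)
      (fun t => Real.cosh t * (A + P t) + Real.sinh t * (B - Q t) - H2 t)
      (fun t => Real.sinh t * (A + P t) + Real.cosh t * (B - Q t) - H1 t) := by
    intro A B
    have hz : ∀ x, HasDerivAt (fun t => Real.cosh t * (A + P t) + Real.sinh t * (B - Q t))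
        (Real.sinh x * (A + P x) + Real.cosh x * (B - Q x)) x := by
      intro x
      have := ((Real.hasDerivAt_cosh x).mul ((hP x).const_add A)).add
        ((Real.hasDerivAt_sinh x).mul ((hQ x).const_sub B))
      refine this.congr_deriv ?_
      ring
    have hz' : ∀ x, HasDerivAt (fun t => Real.sinh t * (A + P t) + Real.cosh t * (B - Q t))
        (Real.cosh x * (A + P x) + Real.sinh x * (B - Q x) - H2 x) x := by
      intro x
      have := ((Real.hasDerivAt_sinh x).mul ((hP x).const_add A)).add
        ((Real.hasDerivAt_cosh x).mul ((hQ x).const_sub B))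
      refine this.congr_deriv ?_
      linear_combination (-H2 x) * Real.cosh_sq_sub_sinh_sq x
    refine ⟨fun x hx => ((hz x).sub (hH2 x)).hasDerivWithinAt, fun x hx => ?_⟩
    have hc : Continuous (fun t => Real.cosh t * (A + P t) + Real.sinh t * (B - Q t) - H2 t) :=
      (continuous_iff_continuousAt.mpr fun x => (hz x).continuousAt).sub hH2c
    have h0m : (0:ℝ) ∈ Icc 0 T := ⟨le_rfl, hT.le⟩
    rw [intervalIntegral.integral_sub (hc.intervalIntegrable _ _) (sub_ii hh h0m hx),
      intervalIntegral.integral_eq_sub_of_hasDerivAt (fun t _ => hz' t) (hc.intervalIntegrable _ _)]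
    have := hH1e x hx
    simp only [hP0, hQ0, hH10]
    linarith
  have hS : Real.sinh T ≠ 0 := (Real.sinh_pos_iff.mpr hT).ne'
  have hC : 2 - 2 * Real.cosh T ≠ 0 := by
    have := Real.one_lt_cosh.mpr hT.ne'
    linarith
  cases N with
  | true =>
    refine ⟨_, _, key ((H1 T + Real.cosh T * Q T) / Real.sinh T - P T) 0, ?_, ?_⟩
    · simp [hP0, hQ0, hH10]
    · simp only
      field_simp
      ring
  | false =>
    have hq := Real.cosh_sq_sub_sinh_sq T
    let m1 := H2 T - Real.cosh T * P T + Real.sinh T * Q T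
    let m2 := H1 T - Real.sinh T * P T + Real.cosh T * Q T
    obtain ⟨A, B, e1, e2⟩ : ∃ A B, (Real.cosh T - 1) * A + Real.sinh T * B = m1 ∧
        Real.sinh T * A + (Real.cosh T - 1) * B = m2 := by
      exact two_by_two (Real.cosh T) (Real.sinh T) hq hC m1 m2
    refine ⟨_, _, key A B, ?_, ?_⟩
    · simp only [hP0, hQ0, hH20, Real.cosh_zero, Real.sinh_zero]
      simp only [m1] at e1
      linarith
    · simp only [hP0, hQ0, hH10, Real.cosh_zero, Real.sinh_zero]
      simp only [m2] at e2
      linarith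


theorem Sol.congr {N : Bool} {T : ℝ} (hT : 0 < T) {h v v' w : ℝ → ℝ} (hs : Sol N T h v w)
    (he : ∀ x ∈ Icc 0 T, v' x = v x) : Sol N T h v' w := by
  refine ⟨⟨fun x hx => (hs.1.1 x hx).congr he (he x hx), fun x hx => ?_⟩, ?_⟩
  · rw [hs.1.2 x hx]
    congr 1
    apply intervalIntegral.integral_congr
    intro t ht
    rw [uIcc_of_le hx.1] at ht
    simp only
    rw [he t ⟨ht.1, ht.2.trans hx.2⟩]
  · have h2 := hs.2
    cases N with
    | true => exact h2
    | false =>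
      refine ⟨?_, h2.2⟩
      rw [he 0 ⟨le_rfl, hT.le⟩, he T ⟨hT.le, le_rfl⟩]; exact h2.1

theorem Sol.sub {N : Bool} {T : ℝ} (hT : 0 < T) {h v w h' v' w' : ℝ → ℝ} (hs : Sol N T h v w)
    (hs' : Sol N T h' v' w') (hh : IntervalIntegrable h volume 0 T)
    (hh' : IntervalIntegrable h' volume 0 T) :
    Sol N T (fun t => h t - h' t) (fun t => v t - v' t) (fun t => w t - w' t) := by
  have h0m : (0:ℝ) ∈ Icc 0 T := ⟨le_rfl, hT.le⟩
  refine ⟨⟨fun x hx => (hs.1.1 x hx).sub (hs'.1.1 x hx), fun x hx => ?_⟩, ?_⟩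
  · have e1 := hs.1.2 x hx
    have e2 := hs'.1.2 x hx
    have e3 := intervalIntegral.integral_sub (sub_ii (hs.int hT hh) h0m hx)
      (sub_ii (hs'.int hT hh') h0m hx)
    have e4 : ∫ t in (0:ℝ)..x, (v t - v' t - (h t - h' t)) =
      ∫ t in (0:ℝ)..x, (v t - h t - (v' t - h' t)) := by
      congr 1; ext t; ring
    simp only at e1 e2 e3 e4 ⊢
    rw [e4, e3]
    linarith
  · have h2 := hs.2
    have h3 := hs'.2
    cases N with
    | true => exact ⟨by simp [h2.1, h3.1], by simp [h2.2, h3.2]⟩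
    | false => exact ⟨by simp [h2.1, h3.1], by simp [h2.2, h3.2]⟩

theorem Sol.addsmul {N : Bool} {T : ℝ} (hT : 0 < T) {h v w h' v' w' : ℝ → ℝ} (hs : Sol N T h v w)
    (hs' : Sol N T h' v' w') (hh : IntervalIntegrable h volume 0 T)
    (hh' : IntervalIntegrable h' volume 0 T) (p q : ℝ) :
    Sol N T (fun t => p * h t + q * h' t) (fun t => p * v t + q * v' t)
      (fun t => p * w t + q * w' t) := by
  have h0m : (0:ℝ) ∈ Icc 0 T := ⟨le_rfl, hT.le⟩
  refine ⟨⟨fun x hx => ((hs.1.1 x hx).const_mul p).add ((hs'.1.1 x hx).const_mul q),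
    fun x hx => ?_⟩, ?_⟩
  · have e1 := hs.1.2 x hx
    have e2 := hs'.1.2 x hx
    have e3 := intervalIntegral.integral_add ((sub_ii (hs.int hT hh) h0m hx).const_mul p)
      ((sub_ii (hs'.int hT hh') h0m hx).const_mul q)
    have e4 : ∫ t in (0:ℝ)..x, (p * v t + q * v' t - (p * h t + q * h' t)) =
      ∫ t in (0:ℝ)..x, (p * (v t - h t) + q * (v' t - h' t)) := by
      congr 1; ext t; ring
    rw [intervalIntegral.integral_const_mul, intervalIntegral.integral_const_mul] at e3
    simp only at e1 e2 e3 e4 ⊢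
    rw [e4, e3]
    linear_combination p * e1 + q * e2
  · have h2 := hs.2
    have h3 := hs'.2
    cases N with
    | true => exact ⟨by simp [h2.1, h3.1], by simp [h2.2, h3.2]⟩
    | false => exact ⟨by simp [h2.1, h3.1], by simp [h2.2, h3.2]⟩

/-- extension of a continuous function -/
noncomputable def cext {T : ℝ} (hT : 0 < T) (u : C(Icc (0:ℝ) T, ℝ)) : ℝ → ℝ :=
  fun t => u (projIcc 0 T hT.le t)

theorem cext_cont {T : ℝ} (hT : 0 < T) (u : C(Icc (0:ℝ) T, ℝ)) : Continuous (cext hT u) :=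
  u.continuous.comp continuous_projIcc

theorem cext_le {T : ℝ} (hT : 0 < T) (u : C(Icc (0:ℝ) T, ℝ)) (t : ℝ) : |cext hT u t| ≤ ‖u‖ :=
  u.norm_coe_le_norm _

theorem cext_eval {T : ℝ} (hT : 0 < T) (t : ℝ) :
    Continuous (fun u : C(Icc (0:ℝ) T, ℝ) => cext hT u t) :=
  continuous_eval_const _

/-- right-hand side -/
noncomputable def rhs {T : ℝ} (hT : 0 < T) (b G : ℝ → ℝ) (u : C(Icc (0:ℝ) T, ℝ)) : ℝ → ℝ :=
  fun t => b t * G (cext hT u t) + max (cext hT u t) 0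

theorem rhs_int {T : ℝ} (hT : 0 < T) {b G : ℝ → ℝ} (hb : IntervalIntegrable b volume 0 T)
    (hG : Continuous G) (u : C(Icc (0:ℝ) T, ℝ)) :
    IntervalIntegrable (rhs hT b G u) volume 0 T := by
  refine IntervalIntegrable.add (hb.mul_continuousOn ?_) ?_
  · exact (hG.comp (cext_cont hT u)).continuousOn
  · exact ((cext_cont hT u).max continuous_const).intervalIntegrable _ _

theorem rhs_bound {T : ℝ} (hT : 0 < T) {b G : ℝ → ℝ} {R C : ℝ} (hC : ∀ s, |s| ≤ R → |G s| ≤ C)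
    (u : C(Icc (0:ℝ) T, ℝ)) (hu : ‖u‖ ≤ R) (t : ℝ) : |rhs hT b G u t| ≤ |b t| * C + R := by
  have h1 := (cext_le hT u t).trans hu
  have h2 := hC _ h1
  have hR : 0 ≤ R := (norm_nonneg _).trans hu
  unfold rhs
  refine (abs_add_le _ _).trans (add_le_add ?_ ?_)
  · rw [abs_mul]; gcongr
  · rw [abs_of_nonneg (le_max_right _ _)]
    exact max_le ((le_abs_self _).trans h1) hR

theorem G_bound {G : ℝ → ℝ} (hG : Continuous G) (R : ℝ) : ∃ C, ∀ s, |s| ≤ R → |G s| ≤ C := by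
  obtain ⟨C, hC⟩ := (isCompact_Icc (a := -R) (b := R)).exists_bound_of_continuousOn hG.continuousOn
  exact ⟨C, fun s hs => hC s (abs_le.mp hs)⟩

theorem compact_lip {T : ℝ} (C L : ℝ) : ∃ K : Set C(Icc (0:ℝ) T, ℝ), IsCompact K ∧
    ∀ u : C(Icc (0:ℝ) T, ℝ), (∀ x, |u x| ≤ C) → (∀ x y, |u x - u y| ≤ L * |(x:ℝ) - y|) → u ∈ K := by
  let A : Set (BoundedContinuousFunction (Icc (0:ℝ) T) ℝ) :=
    {u | (∀ x, |u x| ≤ C) ∧ (∀ x y, |u x - u y| ≤ L * |(x:ℝ) - y|)}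
  have hA : IsCompact (closure A) := by
    refine BoundedContinuousFunction.arzela_ascoli (Icc (-C) C) isCompact_Icc A
      (fun f x hf => abs_le.mp (hf.1 x)) ?_
    refine Metric.equicontinuous_of_continuity_modulus (fun d => L * d) ?_ _ ?_
    · have : Tendsto (fun d : ℝ => L * d) (nhds 0) (nhds (L * 0)) :=
        (continuous_const.mul continuous_id).tendsto 0
      simpa using this
    · intro x y i
      have := i.2.2 x y
      rw [Real.dist_eq, Subtype.dist_eq, Real.dist_eq]
      exact this
  refine ⟨(ContinuousMap.isometryEquivBoundedOfCompact (Icc (0:ℝ) T) ℝ).symm '' closure A,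
    hA.image (ContinuousMap.isometryEquivBoundedOfCompact (Icc (0:ℝ) T) ℝ).symm.continuous,
    fun u h1 h2 => ⟨ContinuousMap.isometryEquivBoundedOfCompact (Icc (0:ℝ) T) ℝ u,
      subset_closure ⟨h1, h2⟩, ?_⟩⟩
  exact (ContinuousMap.isometryEquivBoundedOfCompact (Icc (0:ℝ) T) ℝ).symm_apply_apply u

theorem Sol.exists' (N : Bool) {T : ℝ} (hT : 0 < T) {h : ℝ → ℝ}
    (hh : IntervalIntegrable h volume 0 T) :
    ∃ v : C(Icc (0:ℝ) T, ℝ), ∃ w, Sol N T h (cext hT v) w := by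
  obtain ⟨v, w, hs⟩ := Sol.exists N hT hh
  refine ⟨⟨fun x => v x, continuousOn_iff_continuous_domRestrict.mp hs.1.cont_v⟩, w, hs.congr hT ?_⟩
  intro x hx
  simp only [cext, projIcc_of_mem hT.le hx]
  rfl

theorem op_exists (N : Bool) {T : ℝ} (hT : 0 < T) {b G : ℝ → ℝ}
    (hb : IntervalIntegrable b volume 0 T) (hG : Continuous G) :
    ∃ Φ : C(Icc (0:ℝ) T, ℝ) → C(Icc (0:ℝ) T, ℝ), Continuous Φ ∧
      (∀ R : ℝ, ∃ K, IsCompact K ∧ ∀ u, ‖u‖ ≤ R → Φ u ∈ K) ∧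
      ∀ u, ∃ w, Sol N T (rhs hT b G u) (cext hT (Φ u)) w := by
  choose Φ W hΦ using fun u => Sol.exists' N hT (rhs_int hT hb hG u)
  have val : ∀ (u : C(Icc (0:ℝ) T, ℝ)) (x : Icc (0:ℝ) T), cext hT u x = u x := fun u x => by
    simp [cext]
  refine ⟨Φ, ?_, ?_, fun u => ⟨W u, hΦ u⟩⟩
  · rw [continuous_iff_continuousAt]
    intro u0
    let F : C(Icc (0:ℝ) T, ℝ) → ℝ := fun u => ∫ t in (0:ℝ)..T, |rhs hT b G u t - rhs hT b G u0 t|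
    have hF : ContinuousAt F u0 := by
      obtain ⟨C, hC⟩ := G_bound hG (‖u0‖ + 1)
      refine intervalIntegral.continuousAt_of_dominated_interval
        (bound := fun t => 2 * (|b t| * C + (‖u0‖ + 1))) ?_ ?_ ?_ ?_
      · refine Eventually.of_forall fun u => ?_
        have := ((rhs_int hT hb hG u).sub (rhs_int hT hb hG u0)).abs
        exact (intervalIntegrable_iff.mp this).aestronglyMeasurable
      · have : Metric.ball u0 1 ∈ nhds u0 := Metric.ball_mem_nhds _ one_pos
        filter_upwards [this] with u hu
        refine Eventually.of_forall fun t _ => ?_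
        have hu' : ‖u‖ ≤ ‖u0‖ + 1 := by
          have h1 := norm_le_norm_add_norm_sub' u u0
          rw [mem_ball_iff_norm] at hu
          linarith
        have h1 := rhs_bound hT (b := b) hC u hu' t
        have h2 := rhs_bound hT (b := b) hC u0 (by linarith) t
        have h3 := abs_sub (rhs hT b G u t) (rhs hT b G u0 t)
        rw [Real.norm_eq_abs, abs_abs]
        linarith
      · exact ((hb.abs.mul_const C).add (by simp)).const_mul 2
      · refine Eventually.of_forall fun t _ => ?_
        apply Continuous.continuousAt
        have h1 := cext_eval hT t
        exact (((continuous_const.mul (hG.comp h1)).add (h1.max continuous_const)).sub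
          continuous_const).abs
    have hF0 : F u0 = 0 := by simp [F]
    rw [ContinuousAt, tendsto_iff_norm_sub_tendsto_zero]
    have hF' : Tendsto (fun u => (1 + 1/T) * F u) (nhds u0) (nhds 0) := by
      have := (hF.tendsto).const_mul (1 + 1/T)
      rwa [hF0, mul_zero] at this
    refine squeeze_zero (fun _ => norm_nonneg _) (fun u => ?_) hF'
    have hs := (hΦ u).sub hT (hΦ u0) (rhs_int hT hb hG u) (rhs_int hT hb hG u0)
    have hb1 := (hs.bounds hT ((rhs_int hT hb hG u).sub (rhs_int hT hb hG u0))).1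
    have hnn : 0 ≤ (1 + 1/T) * F u := (abs_nonneg _).trans (hb1 0 ⟨le_rfl, hT.le⟩)
    rw [ContinuousMap.norm_le _ hnn]
    intro x
    have := hb1 x x.2
    rwa [val, val] at this
  · intro R
    obtain ⟨C, hC⟩ := G_bound hG R
    let B : ℝ := ∫ t in (0:ℝ)..T, (|b t| * C + R)
    obtain ⟨K, hK, hKm⟩ := compact_lip (T := T) ((1 + 1/T) * B) ((T + 2) * B)
    refine ⟨K, hK, fun u hu => ?_⟩
    have hr := rhs_int hT hb hG u
    have h1 : ∫ t in (0:ℝ)..T, |rhs hT b G u t| ≤ B := by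
      apply intervalIntegral.integral_mono_on hT.le hr.abs ((hb.abs.mul_const C).add (by simp))
      intro t _
      exact rhs_bound hT hC u hu t
    obtain ⟨h2, h3⟩ := (hΦ u).bounds hT hr
    apply hKm
    · intro x
      rw [← val]
      refine (h2 x x.2).trans ?_
      gcongr
    · intro x y
      rw [← val, ← val]
      refine (convex_Icc 0 T).norm_image_sub_le_of_norm_hasDerivWithin_le (hΦ u).1.1
        (fun z hz => (h3 z hz).trans ?_) y.2 x.2
      gcongr


theorem uniq_step {T : ℝ} {k v w b : ℝ → ℝ} (hd : DSol T k v w)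
    (hb : IntervalIntegrable b volume 0 T)
    (hk : IntervalIntegrable k volume 0 T) {C d : ℝ} (hC : 0 ≤ C) (hdp : 0 ≤ d)
    (hkb : ∀ x ∈ Icc 0 T, |k x| ≤ |b x| * (C * v x))
    (hv : ∀ x ∈ Icc 0 T, 0 ≤ v x)
    (hsm : d * ((∫ t in (0:ℝ)..T, |b t|) * C) < 1) {x : ℝ} (hx : x ∈ Icc 0 T) (hvx : v x = 0)
    (hwx : w x = 0) {y : ℝ} (hy : y ∈ Icc 0 T) (hyx : |y - x| ≤ d) : v y = 0 ∧ w y = 0 := by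
  set B := ∫ t in (0:ℝ)..T, |b t| with hB
  have hT : 0 ≤ T := hx.1.trans hx.2
  have hB0 : 0 ≤ B := intervalIntegral.integral_nonneg hT fun _ _ => abs_nonneg _
  let D : Set ℝ := Icc 0 T ∩ Icc (x - d) (x + d)
  have hDc : IsCompact D := isCompact_Icc.inter isCompact_Icc
  have hDo : OrdConnected D := ordConnected_Icc.inter ordConnected_Icc
  have hDv : Convex ℝ D := (convex_Icc _ _).inter (convex_Icc _ _)
  have hxD : x ∈ D := ⟨hx, by constructor <;> linarith⟩
  have hyD : y ∈ D := ⟨hy, by rw [abs_le] at hyx; constructor <;> linarith [hyx.1, hyx.2]⟩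
  obtain ⟨z, hz, hmax⟩ := hDc.exists_isMaxOn ⟨x, hxD⟩ (hd.cont_v.mono inter_subset_left)
  set m := v z with hm
  have hm0 : 0 ≤ m := hv z hz.1
  have hw : ∀ s ∈ D, |w s| ≤ B * (C * m) := by
    intro s hs
    have e1 := hd.w_sub hk hx hs.1
    rw [hwx, sub_zero] at e1
    rw [e1]
    have ib : IntervalIntegrable (fun t => |b t| * (C * m)) volume 0 T := hb.abs.mul_const _
    have h1 : ‖∫ t in x..s, k t‖ ≤ |∫ t in x..s, |b t| * (C * m)| := by
      apply intervalIntegral.norm_integral_le_abs_of_norm_le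
      · filter_upwards [ae_restrict_mem measurableSet_uIoc] with t ht
        have htD : t ∈ D := hDo.uIcc_subset hxD hs (uIoc_subset_uIcc ht)
        refine (hkb t htD.1).trans ?_
        have : v t ≤ m := hmax htD
        gcongr
      · exact sub_ii ib hx hs.1
    refine h1.trans ((abs_int_le ib hx hs.1).trans ?_)
    have : ∀ t, |(|b t| * (C * m))| = |b t| * (C * m) := fun t => abs_of_nonneg (by positivity)
    simp only [this]
    rw [intervalIntegral.integral_mul_const]
  have hvb : ∀ s ∈ D, v s ≤ B * (C * m) * |s - x| := by
    intro s hs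
    have := hDv.norm_image_sub_le_of_norm_hasDerivWithin_le
      (fun t ht => (hd.1 t ht.1).mono inter_subset_left) hw hxD hs
    rw [hvx, sub_zero] at this
    exact (le_abs_self _).trans this
  have hm00 : m = 0 := by
    have h1 := hvb z hz
    have h2 : |z - x| ≤ d := by
      rw [abs_le]; constructor <;> linarith [hz.2.1, hz.2.2]
    have h3 : B * (C * m) * |z - x| ≤ B * (C * m) * d := by gcongr
    by_contra hne
    have : 0 < m := lt_of_le_of_ne hm0 (Ne.symm hne)
    nlinarith
  constructor
  · have : v y ≤ m := hmax hyD
    linarith [hv y hy]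
  · have := hw y hyD
    rw [hm00] at this
    simpa using this

theorem uniq {T : ℝ} {k v w b : ℝ → ℝ} (hd : DSol T k v w)
    (hb : IntervalIntegrable b volume 0 T)
    (hk : IntervalIntegrable k volume 0 T) {C : ℝ} (hC : 0 ≤ C)
    (hkb : ∀ x ∈ Icc 0 T, |k x| ≤ |b x| * (C * v x))
    (hv : ∀ x ∈ Icc 0 T, 0 ≤ v x)
    {x : ℝ} (hx : x ∈ Icc 0 T) (hvx : v x = 0)
    (hwx : w x = 0) {y : ℝ} (hy : y ∈ Icc 0 T) : v y = 0 := by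
  have hT : 0 ≤ T := hx.1.trans hx.2
  have hB0 : 0 ≤ ∫ t in (0:ℝ)..T, |b t| := intervalIntegral.integral_nonneg hT fun _ _ => abs_nonneg _
  obtain ⟨d, hd0, hsm⟩ : ∃ d : ℝ, 0 < d ∧ d * ((∫ t in (0:ℝ)..T, |b t|) * C) < 1 := by
    refine ⟨1 / ((∫ t in (0:ℝ)..T, |b t|) * C + 1), by positivity, ?_⟩
    rw [one_div_mul_eq_div, div_lt_one (by positivity)]
    linarith
  have key : ∀ n : ℕ, ∀ y ∈ Icc 0 T, |y - x| ≤ n * d → v y = 0 ∧ w y = 0 := by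
    intro n
    induction n with
    | zero =>
      intro y hy h0
      have : y = x := by
        have : |y - x| ≤ 0 := by simpa using h0
        linarith [abs_nonpos_iff.mp this]
      rw [this]; exact ⟨hvx, hwx⟩
    | succ n ih =>
      intro y hy h0
      push_cast at h0
      have hn : (0:ℝ) < n + 1 := by positivity
      let c : ℝ := n / (n + 1)
      have hc : c = n / (n + 1) := rfl
      have hc0 : 0 ≤ c := by positivity
      have hc1 : c ≤ 1 := by rw [hc, div_le_one hn]; linarith
      have hc2 : (1 - c) * (n + 1) = 1 := by rw [hc]; field_simp; ring
      have hc3 : c * (n + 1) = n := by rw [hc]; field_simp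
      have hz : (1 - c) * x + c * y ∈ Icc 0 T :=
        convex_Icc 0 T hx hy (by linarith) hc0 (by ring)
      have h1 : |(1 - c) * x + c * y - x| ≤ n * d := by
        have : (1 - c) * x + c * y - x = c * (y - x) := by ring
        rw [this, abs_mul, abs_of_nonneg hc0]
        calc c * |y - x| ≤ c * ((n + 1) * d) := by gcongr
          _ = n * d := by rw [← mul_assoc, hc3]
      have h2 := ih _ hz h1
      refine uniq_step hd hb hk hC hd0.le hkb hv hsm hz h2.1 h2.2 hy ?_
      have : y - ((1 - c) * x + c * y) = (1 - c) * (y - x) := by ring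
      rw [this, abs_mul, abs_of_nonneg (by linarith : 0 ≤ 1 - c)]
      calc (1 - c) * |y - x| ≤ (1 - c) * ((n + 1) * d) := by gcongr
          _ = d := by rw [← mul_assoc, hc2, one_mul]
  obtain ⟨n, hn⟩ := exists_nat_ge (|y - x| / d)
  exact (key n y hy (by rwa [div_le_iff₀ hd0] at hn)).1

theorem w_anti {T : ℝ} {k v w : ℝ → ℝ} (hd : DSol T k v w)
    (hk : IntervalIntegrable k volume 0 T) {σ τ : ℝ} (hσ : 0 ≤ σ) (hτ : τ ≤ T)
    (hneg : ∀ᵐ x ∂volume.restrict (Icc σ τ), k x ≤ 0) : AntitoneOn w (Icc σ τ) := by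
  intro x hx y hy hxy
  have hsub : Icc σ τ ⊆ Icc 0 T := Icc_subset_Icc hσ hτ
  have e := hd.w_sub hk (hsub hx) (hsub hy)
  have : ∫ t in x..y, k t ≤ ∫ t in x..y, (0:ℝ) := by
    apply intervalIntegral.integral_mono_ae_restrict hxy (sub_ii hk (hsub hx) (hsub hy)) (by simp)
    exact ae_restrict_of_ae_restrict_of_subset (Icc_subset_Icc hx.1 hy.2) hneg
  rw [intervalIntegral.integral_zero] at this
  linarith

theorem conc {T : ℝ} {k v w : ℝ → ℝ} (hd : DSol T k v w)
    (hk : IntervalIntegrable k volume 0 T) (hv : ∀ x ∈ Icc 0 T, 0 ≤ v x) {σ τ δ : ℝ} (hσ : 0 ≤ σ)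
    (hτ : τ ≤ T) (hδ : 0 < δ) (hδ2 : σ + δ < τ - δ)
    (hneg : ∀ᵐ x ∂volume.restrict (Icc σ τ), k x ≤ 0) {M : ℝ} (hM : ∀ x ∈ Icc σ τ, v x ≤ M) :
    δ * (w (σ + δ) - w (τ - δ)) ≤ 2 * M := by
  have hsub : Icc σ τ ⊆ Icc 0 T := Icc_subset_Icc hσ hτ
  have ha := w_anti hd hk hσ hτ hneg
  have hwc := hd.cont_w hk
  have m1 : σ ∈ Icc σ τ := ⟨le_rfl, by linarith⟩
  have m2 : σ + δ ∈ Icc σ τ := ⟨by linarith, by linarith⟩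
  have m3 : τ - δ ∈ Icc σ τ := ⟨by linarith, by linarith⟩
  have m4 : τ ∈ Icc σ τ := ⟨by linarith, le_rfl⟩
  have ww : ∀ x ∈ Icc σ τ, ∀ y ∈ Icc σ τ, IntervalIntegrable (fun t => 1 * w t) volume x y := by
    intro x hx y hy
    apply ContinuousOn.intervalIntegrable
    exact (continuousOn_const.mul hwc).mono (uIcc_subset_Icc (hsub hx) (hsub hy))
  have e1 := hd.v_sub hk (fun s => s) (fun _ => 1) (fun s => hasDerivAt_id s) continuous_const
    (hsub m1) (hsub m2) (by linarith)
  have e2 := hd.v_sub hk (fun s => s) (fun _ => 1) (fun s => hasDerivAt_id s) continuous_const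
    (hsub m3) (hsub m4) (by linarith)
  have i1 : ∫ t in σ..(σ + δ), w (σ + δ) ≤ ∫ t in σ..(σ + δ), 1 * w t := by
    apply intervalIntegral.integral_mono_on (by linarith) (by simp) (ww _ m1 _ m2)
    intro t ht
    rw [one_mul]
    exact ha ⟨ht.1, ht.2.trans m2.2⟩ m2 ht.2
  have i2 : ∫ t in (τ - δ)..τ, 1 * w t ≤ ∫ t in (τ - δ)..τ, w (τ - δ) := by
    apply intervalIntegral.integral_mono_on (by linarith) (ww _ m3 _ m4) (by simp)
    intro t ht
    rw [one_mul]
    exact ha m3 ⟨m3.1.trans ht.1, ht.2⟩ ht.1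
  rw [intervalIntegral.integral_const, smul_eq_mul] at i1 i2
  have a1 := hv _ (hsub m1)
  have a2 := hM _ m2
  have a3 := hM _ m3
  have a4 := hv _ (hsub m4)
  have r1 : σ + δ - σ = δ := by ring
  have r2 : τ - (τ - δ) = δ := by ring
  rw [r1] at i1
  rw [r2] at i2
  rw [mul_sub]
  linarith

theorem conc_low {T : ℝ} {k v w : ℝ → ℝ} (hd : DSol T k v w)
    (hk : IntervalIntegrable k volume 0 T) (hv : ∀ x ∈ Icc 0 T, 0 ≤ v x) {σ τ δ : ℝ} (hσ : 0 ≤ σ)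
    (hτ : τ ≤ T) (hδ : 0 < δ) (hδ2 : σ + δ < τ - δ)
    (hneg : ∀ᵐ x ∂volume.restrict (Icc σ τ), k x ≤ 0) {x0 : ℝ} (hx0 : x0 ∈ Icc σ τ)
    {x : ℝ} (hx : x ∈ Icc (σ + δ) (τ - δ)) : δ / (τ - σ) * v x0 ≤ v x := by
  have hsub : Icc σ τ ⊆ Icc 0 T := Icc_subset_Icc hσ hτ
  have ha := w_anti hd hk hσ hτ hneg
  have hder : ∀ y ∈ Ioo σ τ, HasDerivAt v (w y) y := fun y hy =>
    hd.hasDerivAt y ⟨hσ.trans_lt hy.1, hy.2.trans_le hτ⟩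
  have hc : ConcaveOn ℝ (Icc σ τ) v := by
    apply AntitoneOn.concaveOn_of_deriv (convex_Icc _ _) (hd.cont_v.mono hsub)
    · rw [interior_Icc]
      exact fun y hy => (hder y hy).differentiableAt.differentiableWithinAt
    · rw [interior_Icc]
      intro y hy z hz hyz
      rw [(hder y hy).deriv, (hder z hz).deriv]
      exact ha (Ioo_subset_Icc_self hy) (Ioo_subset_Icc_self hz) hyz
  have hL : 0 < τ - σ := by linarith
  have hv0 := hv x0 (hsub hx0)
  have m1 : σ ∈ Icc σ τ := ⟨le_rfl, by linarith⟩
  have m4 : τ ∈ Icc σ τ := ⟨by linarith, le_rfl⟩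
  -- generic
  have gen : ∀ e ∈ Icc σ τ, ∀ c : ℝ, 0 ≤ c → c ≤ 1 → δ / (τ - σ) ≤ c →
      x = (1 - c) * e + c * x0 → δ / (τ - σ) * v x0 ≤ v x := by
    intro e he c hc0 hc1 hcd hxe
    have := hc.2 he hx0 (by linarith : 0 ≤ 1 - c) hc0 (by ring)
    simp only [smul_eq_mul] at this
    rw [← hxe] at this
    have h2 := mul_nonneg (by linarith : 0 ≤ 1 - c) (hv e (hsub he))
    have h3 : δ / (τ - σ) * v x0 ≤ c * v x0 := by gcongr
    linarith
  rcases le_total x x0 with h | h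
  · have hp : 0 < x0 - σ := by linarith [hx.1]
    refine gen σ m1 ((x - σ) / (x0 - σ)) (div_nonneg (by linarith [hx.1]) hp.le)
      (by rw [div_le_one hp]; linarith) ?_ (by field_simp; ring)
    rw [div_le_div_iff₀ hL hp]
    have : δ * (x0 - σ) ≤ δ * (τ - σ) := by gcongr; exact hx0.2
    have : δ * (τ - σ) ≤ (x - σ) * (τ - σ) := by gcongr; linarith [hx.1]
    linarith
  · have hp : 0 < τ - x0 := by linarith [hx.2]
    refine gen τ m4 ((τ - x) / (τ - x0)) (div_nonneg (by linarith [hx.2]) hp.le)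
      (by rw [div_le_one hp]; linarith) ?_ (by field_simp; ring)
    rw [div_le_div_iff₀ hL hp]
    have : δ * (τ - x0) ≤ δ * (τ - σ) := by gcongr; exact hx0.1
    have : δ * (τ - σ) ≤ (τ - x) * (τ - σ) := by gcongr; linarith [hx.2]
    linarith

theorem large_bd {T : ℝ} {k v w a g : ℝ → ℝ} (hd : DSol T k v w)
    (hk : IntervalIntegrable k volume 0 T) (hai : IntervalIntegrable a volume 0 T)
    (hv : ∀ x ∈ Icc 0 T, 0 ≤ v x) {σ τ δ : ℝ} (hσ : 0 ≤ σ)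
    (hτ : τ ≤ T) (hδ : 0 < δ) (hδ2 : σ + δ < τ - δ)
    (hg : ∀ s, 0 ≤ s → 0 ≤ g s)
    (ha : ∀ᵐ x ∂volume.restrict (Icc σ τ), 0 ≤ a x) {ν κ s0 : ℝ} (hν : 0 < ν) (hκ : 0 < κ)
    (hs0 : 0 < s0) (hgs : ∀ s, s0 ≤ s → κ * s ≤ g s)
    (hka : ∀ᵐ x ∂volume.restrict (Icc σ τ), k x ≤ - (ν * a x * g (v x)))
    (hbig : 2 < ν * (δ * κ * (δ / (τ - σ)) * ∫ t in (σ + δ)..(τ - δ), a t)) :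
    ∀ x ∈ Icc σ τ, δ / (τ - σ) * v x < s0 := by
  have hsub : Icc σ τ ⊆ Icc 0 T := Icc_subset_Icc hσ hτ
  obtain ⟨x0, hx0, hmax⟩ := isCompact_Icc.exists_isMaxOn ⟨σ, left_mem_Icc.mpr (by linarith : σ ≤ τ)⟩
    (hd.cont_v.mono hsub)
  set θ := δ / (τ - σ) with hθd
  have hθ : 0 < θ := div_pos hδ (by linarith)
  set M := v x0 with hMd
  have hM : ∀ x ∈ Icc σ τ, v x ≤ M := fun x hx => hmax hx
  suffices h : θ * M < s0 by
    intro x hx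
    have : θ * v x ≤ θ * M := by gcongr; exact hM x hx
    linarith
  by_contra hcon
  push Not at hcon
  have hM0 : 0 < M := by
    by_contra h0
    have : θ * M ≤ 0 := mul_nonpos_of_nonneg_of_nonpos hθ.le (not_lt.mp h0)
    linarith
  have hneg : ∀ᵐ x ∂volume.restrict (Icc σ τ), k x ≤ 0 := by
    filter_upwards [ha, hka, ae_restrict_mem measurableSet_Icc] with x h1 h2 hx
    have : 0 ≤ ν * a x * g (v x) := mul_nonneg (mul_nonneg hν.le h1) (hg _ (hv x (hsub hx)))
    linarith
  have c1 := conc hd hk hv hσ hτ hδ hδ2 hneg hM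
  have m2 : σ + δ ∈ Icc σ τ := ⟨by linarith, by linarith⟩
  have m3 : τ - δ ∈ Icc σ τ := ⟨by linarith, by linarith⟩
  have e := hd.w_sub hk (hsub m2) (hsub m3)
  have hsm : Icc (σ + δ) (τ - δ) ⊆ Icc σ τ := Icc_subset_Icc (by linarith) (by linarith)
  have i1 : ∫ t in (σ + δ)..(τ - δ), k t ≤ ∫ t in (σ + δ)..(τ - δ), (-(ν * (κ * (θ * M)))) * a t := by
    apply intervalIntegral.integral_mono_ae_restrict hδ2.le (sub_ii hk (hsub m2) (hsub m3))
      ((sub_ii hai (hsub m2) (hsub m3)).const_mul _)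
    filter_upwards [ae_restrict_of_ae_restrict_of_subset hsm ha,
      ae_restrict_of_ae_restrict_of_subset hsm hka, ae_restrict_mem measurableSet_Icc] with x h1 h2 hx
    have h3 := conc_low hd hk hv hσ hτ hδ hδ2 hneg hx0 hx
    have h4 := hgs (v x) (hcon.trans h3)
    have h5 : κ * (θ * M) ≤ g (v x) := le_trans (by gcongr) h4
    have h6 : ν * a x * (κ * (θ * M)) ≤ ν * a x * g (v x) :=
      mul_le_mul_of_nonneg_left h5 (mul_nonneg hν.le h1)
    change k x ≤ -(ν * (κ * (θ * M))) * a x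
    linarith
  rw [intervalIntegral.integral_const_mul] at i1
  set A := ∫ t in (σ + δ)..(τ - δ), a t with hA
  have h7 : δ * (ν * (κ * (θ * M)) * A) ≤ 2 * M := by
    refine le_trans ?_ c1
    gcongr
    linarith
  have h8 : 2 * M < ν * (δ * κ * θ * A) * M := by gcongr
  nlinarith

theorem alpha_bd {T : ℝ} {k v w : ℝ → ℝ} (hd : DSol T k v w)
    (hk : IntervalIntegrable k volume 0 T)
    (hv : ∀ x ∈ Icc 0 T, 0 ≤ v x) {σ τ δ : ℝ} (hσ : 0 ≤ σ)
    (hτ : τ ≤ T) (hδ : 0 < δ) (hδ2 : σ + δ < τ - δ) {α R : ℝ} (hα : 0 ≤ α)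
    (hka : ∀ᵐ x ∂volume.restrict (Icc σ τ), k x ≤ - α)
    (hR : ∀ x ∈ Icc σ τ, v x ≤ R) : δ * (α * (τ - δ - (σ + δ))) ≤ 2 * R := by
  have hsub : Icc σ τ ⊆ Icc 0 T := Icc_subset_Icc hσ hτ
  have c1 := conc hd hk hv hσ hτ hδ hδ2 (by
    filter_upwards [hka] with x hx
    linarith) hR
  have m2 : σ + δ ∈ Icc σ τ := ⟨by linarith, by linarith⟩
  have m3 : τ - δ ∈ Icc σ τ := ⟨by linarith, by linarith⟩
  have e := hd.w_sub hk (hsub m2) (hsub m3)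
  have hsm : Icc (σ + δ) (τ - δ) ⊆ Icc σ τ := Icc_subset_Icc (by linarith) (by linarith)
  have i1 : ∫ t in (σ + δ)..(τ - δ), k t ≤ ∫ t in (σ + δ)..(τ - δ), (-α) := by
    apply intervalIntegral.integral_mono_ae_restrict hδ2.le (sub_ii hk (hsub m2) (hsub m3)) (by simp)
    exact ae_restrict_of_ae_restrict_of_subset hsm hka
  rw [intervalIntegral.integral_const, smul_eq_mul] at i1
  refine le_trans ?_ c1
  gcongr
  linarith

theorem exists_delta {a : ℝ → ℝ} {σ τ : ℝ} (hστ : σ ≤ τ) (ha : IntervalIntegrable a volume σ τ)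
    (hp : ∀ᵐ x ∂volume.restrict (Icc σ τ), 0 ≤ a x)
    (hn : ¬ (∀ᵐ x ∂volume.restrict (Icc σ τ), a x = 0)) :
    ∃ δ > 0, σ + δ < τ - δ ∧ 0 < ∫ t in (σ + δ)..(τ - δ), a t := by
  have hlt : σ < τ := by
    rcases hστ.eq_or_lt with h | h
    · exfalso
      apply hn
      subst h
      rw [Icc_self, Measure.restrict_singleton]
      simp
    · exact h
  have hpos : 0 < ∫ t in σ..τ, a t := by
    have h0 : 0 ≤ ∫ t in Icc σ τ, a t := setIntegral_nonneg_of_ae_restrict hp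
    rw [intervalIntegral.integral_of_le hστ, ← integral_Icc_eq_integral_Ioc]
    refine lt_of_le_of_ne h0 (Ne.symm fun h => hn ?_)
    have hai : IntegrableOn a (Icc σ τ) := (intervalIntegrable_iff_integrableOn_Icc_of_le hστ).mp ha
    have := (integral_eq_zero_iff_of_nonneg_ae hp hai).mp h
    exact this
  let a' : ℝ → ℝ := (Ioc σ τ).indicator a
  have hai' : Integrable a' := by
    rw [integrable_indicator_iff measurableSet_Ioc]
    exact (intervalIntegrable_iff_integrableOn_Ioc_of_le hστ).mp ha
  have hie : ∀ x y, σ ≤ x → x ≤ y → y ≤ τ → ∫ t in x..y, a' t = ∫ t in x..y, a t := by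
    intro x y h1 h2 h3
    apply intervalIntegral.integral_congr_ae
    refine Eventually.of_forall fun t ht => ?_
    rw [uIoc_of_le h2] at ht
    exact indicator_of_mem (show t ∈ Ioc σ τ from ⟨h1.trans_lt ht.1, ht.2.trans h3⟩) _
  let P : ℝ → ℝ := fun x => ∫ t in σ..x, a' t
  have hPc : Continuous P := intervalIntegral.continuous_primitive (fun a b => hai'.intervalIntegrable) σ
  have hc : Continuous (fun δ : ℝ => P (τ - δ) - P (σ + δ)) :=
    (hPc.comp (by fun_prop)).sub (hPc.comp (by fun_prop))
  have h0 : 0 < P (τ - 0) - P (σ + 0) := by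
    rw [sub_zero, add_zero]
    simp only [P]
    rw [hie σ τ le_rfl hστ le_rfl]
    simpa using hpos
  have hev := (hc.tendsto 0).eventually (lt_mem_nhds h0)
  have hev' : ∀ᶠ δ in nhdsWithin (0:ℝ) (Ioi 0), 0 < P (τ - δ) - P (σ + δ) :=
    hev.filter_mono nhdsWithin_le_nhds
  have hsmall : ∀ᶠ δ in nhdsWithin (0:ℝ) (Ioi 0), δ < (τ - σ) / 2 :=
    nhdsWithin_le_nhds (Iio_mem_nhds (by linarith))
  obtain ⟨δ, ⟨h1, h2⟩, h3⟩ := ((hev'.and hsmall).and self_mem_nhdsWithin).exists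
  have h3' : 0 < δ := h3
  refine ⟨δ, h3', by linarith, ?_⟩
  rw [← hie (σ + δ) (τ - δ) (by linarith) (by linarith) (by linarith)]
  have := intervalIntegral.integral_add_adjacent_intervals (μ := volume)
    (hai'.intervalIntegrable (a := σ) (b := σ + δ)) (hai'.intervalIntegrable (a := σ + δ) (b := τ - δ))
  simp only [P] at h1
  linarith

theorem exists_kappa {g : ℝ → ℝ} (hginf : (0 : EReal) < liminf (fun s : ℝ => ((g s / s : ℝ) : EReal)) atTop) :
    ∃ κ > 0, ∃ s0 > 0, ∀ s, s0 ≤ s → κ * s ≤ g s := by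
  obtain ⟨κ, h1, h2⟩ := EReal.lt_iff_exists_real_btwn.mp hginf
  have h3 := eventually_lt_of_lt_liminf h2
  obtain ⟨S, hS⟩ := eventually_atTop.mp h3
  refine ⟨κ, by exact_mod_cast h1, max S 1, by positivity, fun s hs => ?_⟩
  have h4 := hS s ((le_max_left _ _).trans hs)
  have h5 : κ < g s / s := by exact_mod_cast h4
  have h6 : 0 < s := lt_of_lt_of_le one_pos ((le_max_right _ _).trans hs)
  rw [lt_div_iff₀ h6] at h5
  exact h5.le


theorem small_r (N : Bool) {T : ℝ} (hT : 0 < T) {b g : ℝ → ℝ}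
    (hb : IntervalIntegrable b volume 0 T) (hbneg : (∫ x in (0:ℝ)..T, b x) < 0)
    (hgc : Continuous (fun s => g (max s 0)))
    (hgn : ∀ s, 0 ≤ s → 0 ≤ g s) (hg00 : g 0 = 0) (hgp : ∀ s, 0 < s → 0 < g s)
    (hreg : ∀ ε : ℝ, 0 < ε → ∃ δ > (0:ℝ), ∃ η > (0:ℝ), ∀ s ω : ℝ,
      0 < s → s < δ → |ω - 1| < η → |g (ω * s) / g s - 1| < ε)
    (hg0 : Tendsto (fun s => g s / s) (nhdsWithin 0 (Ioi 0)) (nhds 0)) :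
    ∃ r0 > 0, ∀ r, 0 < r → r < r0 → ∀ lam, 0 ≤ lam → lam ≤ 1 → ∀ v w : ℝ → ℝ, Continuous v →
      Sol N T (fun t => lam * (b t * g (max (v t) 0) + max (v t) 0)) v w →
      (∀ x ∈ Icc 0 T, |v x| ≤ r) → (∃ x ∈ Icc 0 T, |v x| = r) → False := by
  set B := ∫ x in (0:ℝ)..T, |b x| with hBd
  have hB0 : 0 ≤ B := intervalIntegral.integral_nonneg hT.le fun _ _ => abs_nonneg _
  set β := ∫ x in (0:ℝ)..T, b x with hβ
  obtain ⟨δ1, hδ1, η, hη, hosc⟩ := hreg (-β / (B + 1)) (div_pos (by linarith) (by linarith))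
  obtain ⟨ε, hε, hε2⟩ : ∃ ε > 0, 2 * B * ε * T < η := by
    refine ⟨η / (2 * B * T + 1), by positivity, ?_⟩
    have : 2 * B * (η / (2 * B * T + 1)) * T = η * (2 * B * T) / (2 * B * T + 1) := by ring
    rw [this, div_lt_iff₀ (by positivity)]
    nlinarith
  have hsm : ∃ δ2 > 0, ∀ s, 0 < s → s < δ2 → g s ≤ ε * s := by
    have h1 : ∀ᶠ s in nhdsWithin (0:ℝ) (Ioi 0), g s / s < ε := hg0.eventually (gt_mem_nhds hε)
    rw [eventually_nhdsWithin_iff, Metric.eventually_nhds_iff] at h1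
    obtain ⟨d, hd, h2⟩ := h1
    refine ⟨d, hd, fun s h3 h4 => ?_⟩
    have := h2 (y := s) (by rw [Real.dist_eq, sub_zero, abs_of_pos h3]; exact h4) h3
    rw [div_lt_iff₀ h3] at this
    exact this.le
  obtain ⟨δ2, hδ2, hgs⟩ := hsm
  refine ⟨min δ1 δ2, lt_min hδ1 hδ2, ?_⟩
  intro r hr hrr lam hl0 hl1 v w hvc hs hvr ⟨x0, hx0, hvx0⟩
  have hr1 : r < δ1 := hrr.trans_le (min_le_left _ _)
  have hr2 : r < δ2 := hrr.trans_le (min_le_right _ _)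
  have cG : Continuous (fun t => g (max (v t) 0)) := hgc.comp hvc
  have ibg : IntervalIntegrable (fun t => b t * g (max (v t) 0)) volume 0 T :=
    hb.mul_continuousOn cG.continuousOn
  have hh : IntervalIntegrable (fun t => lam * (b t * g (max (v t) 0) + max (v t) 0)) volume 0 T :=
    (ibg.add ((hvc.max continuous_const).intervalIntegrable _ _)).const_mul lam
  have hv := hs.nonneg hT hh (Eventually.of_forall fun x hx => by
    rw [max_eq_right hx.le, hg00]; simp)
  have hi := hs.int hT hh
  have h0m : (0:ℝ) ∈ Icc 0 T := ⟨le_rfl, hT.le⟩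
  have hTm : T ∈ Icc 0 T := ⟨hT.le, le_rfl⟩
  have iv : IntervalIntegrable v volume 0 T := hvc.intervalIntegrable _ _
  rw [abs_of_nonneg (hv x0 hx0)] at hvx0
  -- integral identity
  have eint : (1 - lam) * (∫ t in (0:ℝ)..T, v t) = lam * ∫ t in (0:ℝ)..T, b t * g (max (v t) 0) := by
    have e1 := hs.1.w_sub hi h0m hTm
    rw [hs.2.w_eq, sub_self] at e1
    have e2 : ∫ t in (0:ℝ)..T, (v t - lam * (b t * g (max (v t) 0) + max (v t) 0)) =
        ∫ t in (0:ℝ)..T, ((1 - lam) * v t - lam * (b t * g (max (v t) 0))) := by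
      apply intervalIntegral.integral_congr
      intro t ht
      rw [uIcc_of_le hT.le] at ht
      simp only
      rw [max_eq_left (hv t ht)]
      ring
    rw [e2, intervalIntegral.integral_sub (iv.const_mul _) (ibg.const_mul _),
      intervalIntegral.integral_const_mul, intervalIntegral.integral_const_mul] at e1
    linarith
  have hgle : ∀ t ∈ Icc 0 T, g (max (v t) 0) ≤ ε * r := by
    intro t ht
    rw [max_eq_left (hv t ht)]
    have h1 : v t ≤ r := (le_abs_self _).trans (hvr t ht)
    rcases (hv t ht).eq_or_lt with h | h
    · rw [← h, hg00]; positivity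
    · exact (hgs _ h (h1.trans_lt hr2)).trans (by gcongr)
  have hgnn : ∀ t, 0 ≤ g (max (v t) 0) := fun t => hgn _ (le_max_right _ _)
  have hbg : ∫ t in (0:ℝ)..T, |b t * g (max (v t) 0)| ≤ B * (ε * r) := by
    rw [hBd, ← intervalIntegral.integral_mul_const]
    apply intervalIntegral.integral_mono_on hT.le ibg.abs (hb.abs.mul_const _)
    intro t ht
    rw [abs_mul, abs_of_nonneg (hgnn t)]
    exact mul_le_mul_of_nonneg_left (hgle t ht) (abs_nonneg _)
  have hbg' : |∫ t in (0:ℝ)..T, b t * g (max (v t) 0)| ≤ B * (ε * r) :=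
    (abs_int_le ibg h0m hTm).trans hbg
  have hwb : ∀ x ∈ Icc 0 T, |w x| ≤ 2 * (B * (ε * r)) := by
    intro x hx
    obtain ⟨y, hy, hwy⟩ := hs.2.zero hT hs.1
    have e1 := hs.1.w_sub hi hy hx
    rw [hwy, sub_zero] at e1
    rw [e1]
    refine (abs_int_le hi hy hx).trans ?_
    have h1 : ∫ t in (0:ℝ)..T, |v t - lam * (b t * g (max (v t) 0) + max (v t) 0)| ≤
        ∫ t in (0:ℝ)..T, ((1 - lam) * v t + |b t * g (max (v t) 0)|) := by
      apply intervalIntegral.integral_mono_on hT.le hi.abs ((iv.const_mul _).add ibg.abs)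
      intro t ht
      rw [max_eq_left (hv t ht)]
      have e3 : v t - lam * (b t * g (v t) + v t) = (1 - lam) * v t - lam * (b t * g (v t)) := by ring
      rw [e3]
      refine (abs_sub _ _).trans ?_
      have h4 : 0 ≤ (1 - lam) * v t := mul_nonneg (by linarith) (hv t ht)
      rw [abs_of_nonneg h4, abs_mul lam, abs_of_nonneg hl0]
      have h5 : lam * |b t * g (v t)| ≤ 1 * |b t * g (v t)| := by gcongr
      linarith
    rw [intervalIntegral.integral_add (iv.const_mul _) ibg.abs,
      intervalIntegral.integral_const_mul, eint] at h1
    have h6 : lam * ∫ t in (0:ℝ)..T, b t * g (max (v t) 0) ≤ 1 * (B * (ε * r)) :=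
      calc lam * ∫ t in (0:ℝ)..T, b t * g (max (v t) 0)
          ≤ lam * |∫ t in (0:ℝ)..T, b t * g (max (v t) 0)| :=
            mul_le_mul_of_nonneg_left (le_abs_self _) hl0
        _ ≤ 1 * (B * (ε * r)) := mul_le_mul hl1 hbg' (abs_nonneg _) zero_le_one
    linarith
  have hclose : ∀ x ∈ Icc 0 T, |v x / r - 1| < η := by
    intro x hx
    have h1 := (convex_Icc 0 T).norm_image_sub_le_of_norm_hasDerivWithin_le hs.1.1 hwb hx0 hx
    rw [hvx0] at h1
    have h2 : |x - x0| ≤ T := by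
      rw [abs_le]; constructor <;> linarith [hx.1, hx.2, hx0.1, hx0.2]
    have h3 : v x / r - 1 = (v x - r) / r := by field_simp
    rw [h3, abs_div, abs_of_pos hr, div_lt_iff₀ hr]
    calc |v x - r| ≤ 2 * (B * (ε * r)) * |x - x0| := h1
      _ ≤ 2 * (B * (ε * r)) * T := by gcongr
      _ = (2 * B * ε * T) * r := by ring
      _ < η * r := by gcongr
  have hgr := hgp r hr
  have hosc' : ∀ x ∈ Icc 0 T, |g (v x) - g r| ≤ (-β / (B + 1)) * g r := by
    intro x hx
    have h1 := hosc r (v x / r) hr hr1 (hclose x hx)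
    rw [div_mul_cancel₀ _ hr.ne'] at h1
    have h3 : g (v x) / g r - 1 = (g (v x) - g r) / g r := by field_simp
    rw [h3, abs_div, abs_of_pos hgr, div_lt_iff₀ hgr] at h1
    exact h1.le
  have hIneg : ∫ t in (0:ℝ)..T, b t * g (max (v t) 0) < 0 := by
    have h1 : ∫ t in (0:ℝ)..T, b t * g (max (v t) 0) ≤
        ∫ t in (0:ℝ)..T, (b t * g r + |b t| * ((-β / (B + 1)) * g r)) := by
      apply intervalIntegral.integral_mono_on hT.le ibg ((hb.mul_const _).add (hb.abs.mul_const _))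
      intro t ht
      rw [max_eq_left (hv t ht)]
      have h2 : b t * (g (v t) - g r) ≤ |b t| * ((-β / (B + 1)) * g r) :=
        (le_abs_self _).trans (by rw [abs_mul]; gcongr; exact hosc' t ht)
      linarith
    rw [intervalIntegral.integral_add (hb.mul_const _) (hb.abs.mul_const _),
      intervalIntegral.integral_mul_const, intervalIntegral.integral_mul_const] at h1
    have h3 : B * (-β / (B + 1)) < -β := by
      rw [mul_div_assoc', div_lt_iff₀ (by linarith)]
      nlinarith
    have h4 : B * (-β / (B + 1)) * g r < -β * g r := by gcongr
    rw [← hβ, ← hBd] at h1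
    linarith
  rcases hl0.eq_or_lt with h | h
  · have h1 := (hs.bounds hT hh).1 x0 hx0
    subst h
    simp at h1
    linarith
  · have h2 := mul_pos_of_neg_of_neg hIneg (neg_neg_of_pos h)
    have h3 : 0 ≤ (1 - lam) * ∫ t in (0:ℝ)..T, v t :=
      mul_nonneg (by linarith) (intervalIntegral.integral_nonneg hT.le hv)
    linarith

theorem lin_bound {g : ℝ → ℝ} (hgc : Continuous (fun s => g (max s 0))) (hg00 : g 0 = 0)
    (hg0 : Tendsto (fun s => g s / s) (nhdsWithin 0 (Ioi 0)) (nhds 0)) (R : ℝ) :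
    ∃ C, 0 ≤ C ∧ ∀ s, 0 ≤ s → s ≤ R → |g s| ≤ C * s := by
  have h1 : ∀ᶠ s in nhdsWithin (0:ℝ) (Ioi 0), |g s / s| < 1 := by
    have := hg0.abs
    rw [abs_zero] at this
    exact this.eventually (gt_mem_nhds one_pos)
  rw [eventually_nhdsWithin_iff, Metric.eventually_nhds_iff] at h1
  obtain ⟨d, hd, h2⟩ := h1
  obtain ⟨C, hC⟩ := G_bound hgc R
  refine ⟨max 1 (C / d), by positivity, fun s h3 h4 => ?_⟩
  rcases h3.eq_or_lt with h | h
  · rw [← h, hg00]; simp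
  rcases lt_or_ge s d with h5 | h5
  · have := h2 (y := s) (by rw [Real.dist_eq, sub_zero, abs_of_pos h]; exact h5) h
    rw [abs_div, abs_of_pos h, div_lt_iff₀ h] at this
    have h6 : 1 * s ≤ max 1 (C / d) * s := by gcongr; exact le_max_left _ _
    linarith
  · have h6 := hC s (by rw [abs_of_nonneg h3]; exact h4)
    simp only [max_eq_left h3] at h6
    have hC0 : 0 ≤ C := (abs_nonneg _).trans h6
    have h7 : C / d * s ≤ max 1 (C / d) * s := by gcongr; exact le_max_right _ _
    have h8 : C ≤ C / d * s := by
      rw [div_mul_eq_mul_div, le_div_iff₀ hd]; gcongr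
    linarith


theorem DSol.congr_k {T : ℝ} {k k' v w : ℝ → ℝ} (hd : DSol T k v w)
    (he : ∀ x ∈ Icc 0 T, k x = k' x) : DSol T k' v w := by
  refine ⟨hd.1, fun x hx => ?_⟩
  rw [hd.2 x hx]
  congr 1
  apply intervalIntegral.integral_congr
  intro t ht
  rw [uIcc_of_le hx.1] at ht
  exact he t ⟨ht.1, ht.2.trans hx.2⟩

theorem norm_attained {T : ℝ} (hT : 0 < T) (u : C(Icc (0:ℝ) T, ℝ)) :
    ∃ x ∈ Icc 0 T, |cext hT u x| = ‖u‖ := by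
  have : Nonempty (Icc (0:ℝ) T) := ⟨⟨0, le_rfl, hT.le⟩⟩
  obtain ⟨x, -, hx⟩ := isCompact_univ.exists_isMaxOn univ_nonempty
    (u.continuous.norm.continuousOn (s := univ))
  refine ⟨x, x.2, ?_⟩
  have hval : cext hT u x = u x := by simp [cext]
  rw [hval]
  apply le_antisymm (u.norm_coe_le_norm x)
  rw [ContinuousMap.norm_le _ (norm_nonneg _)]
  exact fun y => hx (mem_univ y)

theorem fp_facts {N : Bool} {T : ℝ} (hT : 0 < T) {b g χ v w : ℝ → ℝ} {α : ℝ}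
    (hb : IntervalIntegrable b volume 0 T) (hχ : IntervalIntegrable χ volume 0 T)
    (hχ0 : ∀ x, 0 ≤ χ x) (hα : 0 ≤ α) (hgc : Continuous (fun s => g (max s 0))) (hg00 : g 0 = 0)
    (hvc : Continuous v)
    (hs : Sol N T (fun t => b t * g (max (v t) 0) + max (v t) 0 + α * χ t) v w) :
    (∀ x ∈ Icc 0 T, 0 ≤ v x) ∧
    DSol T (fun t => -(b t * g (max (v t) 0)) - α * χ t) v w ∧
    IntervalIntegrable (fun t => -(b t * g (max (v t) 0)) - α * χ t) volume 0 T := by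
  have cG : Continuous (fun t => g (max (v t) 0)) := hgc.comp hvc
  have ibg : IntervalIntegrable (fun t => b t * g (max (v t) 0)) volume 0 T :=
    hb.mul_continuousOn cG.continuousOn
  have hh : IntervalIntegrable (fun t => b t * g (max (v t) 0) + max (v t) 0 + α * χ t) volume 0 T :=
    (ibg.add ((hvc.max continuous_const).intervalIntegrable _ _)).add (hχ.const_mul α)
  have hv := hs.nonneg hT hh (Eventually.of_forall fun x hx => by
    rw [max_eq_right hx.le, hg00]
    have := mul_nonneg hα (hχ0 x)
    simpa using this)
  refine ⟨hv, hs.1.congr_k fun x hx => ?_, ibg.neg.sub (hχ.const_mul α)⟩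
  simp only [max_eq_left (hv x hx)]
  ring

theorem main_exists (N : Bool) {T : ℝ} (hT : 0 < T) {g : ℝ → ℝ}
    (hgc : Continuous (fun s => g (max s 0)))
    (hgn : ∀ s, 0 ≤ s → 0 ≤ g s) (hg00 : g 0 = 0) (hgp : ∀ s, 0 < s → 0 < g s)
    (hreg : ∀ ε : ℝ, 0 < ε → ∃ δ > (0:ℝ), ∃ η > (0:ℝ), ∀ s ω : ℝ,
      0 < s → s < δ → |ω - 1| < η → |g (ω * s) / g s - 1| < ε)
    (hg0 : Tendsto (fun s => g s / s) (nhdsWithin 0 (Ioi 0)) (nhds 0))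
    {κ s0 : ℝ} (hκ : 0 < κ) (hs0 : 0 < s0) (hgs : ∀ s, s0 ≤ s → κ * s ≤ g s)
    {a : ℝ → ℝ} (ha : IntervalIntegrable a volume 0 T) (ha2 : (∫ x in (0:ℝ)..T, a x) < 0)
    {m : ℕ} (hm : 0 < m) {σ τ δ : Fin m → ℝ} (hst : ∀ i, 0 ≤ σ i ∧ σ i ≤ τ i ∧ τ i ≤ T)
    (hap : ∀ i, ∀ᵐ x ∂(volume.restrict (Icc (σ i) (τ i))), 0 ≤ a x)
    (hao : ∀ᵐ x ∂(volume.restrict (Icc (0:ℝ) T \ ⋃ i, Icc (σ i) (τ i))), a x ≤ 0)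
    (hδ : ∀ i, 0 < δ i) (hδ2 : ∀ i, σ i + δ i < τ i - δ i) {ν : ℝ} (hν : 0 < ν)
    (hbig : ∀ i, 2 < ν * (δ i * κ * (δ i / (τ i - σ i)) * ∫ t in (σ i + δ i)..(τ i - δ i), a t)) :
    ∃ v w : ℝ → ℝ, IsSolOn T (fun t => ν * a t * g (v t)) v w ∧ (∀ x ∈ Icc 0 T, 0 < v x) ∧
      BC N T v w := by
  let b : ℝ → ℝ := fun t => ν * a t
  have hb : IntervalIntegrable b volume 0 T := ha.const_mul ν
  have hbneg : (∫ x in (0:ℝ)..T, b x) < 0 := by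
    simp only [b]
    rw [intervalIntegral.integral_const_mul]
    exact mul_neg_of_pos_of_neg hν ha2
  let J : Set ℝ := ⋃ i, Icc (σ i) (τ i)
  have hJm : MeasurableSet J := MeasurableSet.iUnion fun i => measurableSet_Icc
  have hJs : J ⊆ Icc 0 T := iUnion_subset fun i => Icc_subset_Icc (hst i).1 (hst i).2.2
  let χ : ℝ → ℝ := J.indicator (fun _ => 1)
  have hχ0 : ∀ x, 0 ≤ χ x := fun x => indicator_nonneg (fun _ _ => zero_le_one) x
  have hχ1 : ∀ x ∈ J, χ x = 1 := fun x hx => indicator_of_mem hx _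
  have hχ2 : ∀ x, x ∉ J → χ x = 0 := fun x hx => indicator_of_notMem hx _
  have hχ : IntervalIntegrable χ volume 0 T := by
    rw [intervalIntegrable_iff]
    have : IntegrableOn (fun _ : ℝ => (1:ℝ)) (uIoc 0 T) := by
      rw [← intervalIntegrable_iff]; simp
    exact Integrable.indicator this hJm
  obtain ⟨Φ, hΦc, hΦK, hΦs⟩ := op_exists N hT hb hgc
  obtain ⟨e, we, hes⟩ := Sol.exists' N hT hχ
  obtain ⟨r0, hr0, hsmall⟩ := small_r N hT hb hbneg hgc hgn hg00 hgp hreg hg0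
  have hθ : ∀ i, 0 < δ i / (τ i - σ i) := fun i => div_pos (hδ i) (by linarith [hδ i, hδ2 i])
  let R0 : ℝ := ∑ i, s0 / (δ i / (τ i - σ i))
  have hR0i : ∀ i, s0 / (δ i / (τ i - σ i)) ≤ R0 := fun i =>
    Finset.single_le_sum (f := fun i => s0 / (δ i / (τ i - σ i)))
      (fun j _ => (div_pos hs0 (hθ j)).le) (Finset.mem_univ i)
  have hR0 : 0 ≤ R0 := Finset.sum_nonneg fun j _ => (div_pos hs0 (hθ j)).le
  let R : ℝ := 1 + r0 + R0
  have hR : R = 1 + r0 + R0 := rfl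
  let i0 : Fin m := ⟨0, hm⟩
  -- solutions of the perturbed equation
  have fp : ∀ α, 0 ≤ α → ∀ u, u = Φ u + α • e → ∃ w, (∀ x ∈ Icc 0 T, 0 ≤ cext hT u x) ∧
      DSol T (fun t => -(b t * g (max (cext hT u t) 0)) - α * χ t) (cext hT u) w ∧
      IntervalIntegrable (fun t => -(b t * g (max (cext hT u t) 0)) - α * χ t) volume 0 T ∧
      BC N T (cext hT u) w := by
    intro α hα u hu
    obtain ⟨w, hw⟩ := hΦs u
    have hs := hw.addsmul hT hes (rhs_int hT hb hgc u) hχ 1 α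
    have e1 : (fun t => 1 * cext hT (Φ u) t + α * cext hT e t) = cext hT u := by
      funext t
      conv_rhs => rw [hu]
      simp [cext]
    have e2 : (fun t => 1 * rhs hT b (fun s => g (max s 0)) u t + α * χ t) =
        fun t => b t * g (max (cext hT u t) 0) + max (cext hT u t) 0 + α * χ t := by
      funext t
      simp [rhs]
    rw [e1, e2] at hs
    obtain ⟨h1, h2, h3⟩ := fp_facts hT hb hχ hχ0 hα hgc hg00 (cext_cont hT u) hs
    exact ⟨_, h1, h2, h3, hs.2⟩
  have h1 : ∀ lam : ℝ, 0 ≤ lam → lam ≤ 1 → ∀ u : C(Icc (0:ℝ) T, ℝ), ‖u‖ = r0 / 2 → u ≠ lam • Φ u := by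
    intro lam hl0 hl1 u hu hcon
    obtain ⟨w, hw⟩ := hΦs u
    have hs := hw.addsmul hT hw (rhs_int hT hb hgc u) (rhs_int hT hb hgc u) lam 0
    have e1 : (fun t => lam * cext hT (Φ u) t + 0 * cext hT (Φ u) t) = cext hT u := by
      funext t
      conv_rhs => rw [hcon]
      simp [cext]
    have e2 : (fun t => lam * rhs hT b (fun s => g (max s 0)) u t +
        0 * rhs hT b (fun s => g (max s 0)) u t) =
        fun t => lam * (b t * g (max (cext hT u t) 0) + max (cext hT u t) 0) := by
      funext t
      simp [rhs]
    rw [e1, e2] at hs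
    refine hsmall (r0 / 2) (by linarith) (by linarith) lam hl0 hl1 _ _ (cext_cont hT u) hs ?_ ?_
    · intro x _
      rw [← hu]; exact cext_le hT u x
    · rw [← hu]; exact norm_attained hT u
  have h2 : ∀ α : ℝ, 0 ≤ α → ∀ u : C(Icc (0:ℝ) T, ℝ), ‖u‖ = R → u ≠ Φ u + α • e := by
    intro α hα u hu hcon
    obtain ⟨w, hv, hd, hi, hbc⟩ := fp α hα u hcon
    have hJv : ∀ x ∈ J, cext hT u x ≤ R0 := by
      intro x hx
      obtain ⟨i, hxi⟩ := mem_iUnion.mp hx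
      have := large_bd hd hi ha hv (hst i).1 (hst i).2.2 (hδ i) (hδ2 i) hgn (hap i) hν hκ hs0 hgs (by
        filter_upwards [ae_restrict_mem measurableSet_Icc] with y hy
        have hyJ : y ∈ J := mem_iUnion.mpr ⟨i, hy⟩
        rw [max_eq_left (hv y (hJs hyJ)), hχ1 y hyJ]
        simp only [b]
        linarith) (hbig i) x hxi
      refine le_trans ?_ (hR0i i)
      rw [le_div_iff₀ (hθ i)]
      linarith
    have hall := bound_off hT hd hbc hi R0 J hJs ⟨σ i0, mem_iUnion.mpr ⟨i0, le_rfl, (hst i0).2.1⟩⟩ hJv (by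
      rw [ae_restrict_iff' (measurableSet_Icc.diff hJm)] at hao
      rw [ae_restrict_iff' measurableSet_Icc]
      filter_upwards [hao] with x hx hxI hxJ
      have h4 := hx ⟨hxI, hxJ⟩
      rw [hχ2 x hxJ]
      have h5 : ν * a x * g (max (cext hT u x) 0) ≤ 0 :=
        mul_nonpos_of_nonpos_of_nonneg (mul_nonpos_of_nonneg_of_nonpos hν.le h4)
          (hgn _ (le_max_right _ _))
      simp only [b]
      linarith)
    obtain ⟨x, hx, hxe⟩ := norm_attained hT u
    rw [abs_of_nonneg (hv x hx)] at hxe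
    have := hall x hx
    linarith
  have hgap : 0 < δ i0 * (τ i0 - δ i0 - (σ i0 + δ i0)) :=
    mul_pos (hδ i0) (by linarith [hδ2 i0])
  let α0 : ℝ := (2 * R + 1) / (δ i0 * (τ i0 - δ i0 - (σ i0 + δ i0)))
  have hα0 : 0 ≤ α0 := div_nonneg (by linarith) hgap.le
  have h3 : ∀ u : C(Icc (0:ℝ) T, ℝ), ‖u‖ ≤ R → u ≠ Φ u + α0 • e := by
    intro u hu hcon
    obtain ⟨w, hv, hd, hi, hbc⟩ := fp α0 hα0 u hcon
    have := alpha_bd hd hi hv (hst i0).1 (hst i0).2.2 (hδ i0) (hδ2 i0) hα0 (by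
      filter_upwards [ae_restrict_mem measurableSet_Icc, hap i0] with y hy hay
      have hyJ : y ∈ J := mem_iUnion.mpr ⟨i0, hy⟩
      rw [hχ1 y hyJ]
      have h5 : 0 ≤ ν * a y * g (max (cext hT u y) 0) :=
        mul_nonneg (mul_nonneg hν.le hay) (hgn _ (le_max_right _ _))
      simp only [b]
      linarith) (R := R) (fun x _ => (le_abs_self _).trans ((cext_le hT u x).trans hu))
    have e5 : δ i0 * (α0 * (τ i0 - δ i0 - (σ i0 + δ i0))) = 2 * R + 1 := by
      have : α0 * (δ i0 * (τ i0 - δ i0 - (σ i0 + δ i0))) = 2 * R + 1 := div_mul_cancel₀ _ hgap.ne'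
      linarith
    linarith
  obtain ⟨K, hK, hKm⟩ := hΦK R
  obtain ⟨u, hu1, hu2, hu3⟩ := expansion_fp Φ hΦc (r0 / 2) R (by linarith) (by linarith) K hK hKm e
    h1 h2 α0 hα0 h3
  obtain ⟨w, hv, hd, hi, hbc⟩ := fp 0 le_rfl u (by rw [zero_smul, add_zero]; exact hu3)
  refine ⟨cext hT u, w, ⟨hd.1, hd.cont_w hi, fun x hx => ?_⟩, fun x hx => ?_, hbc⟩
  · rw [hd.2 x hx, sub_eq_add_neg, ← intervalIntegral.integral_neg]
    congr 1
    apply intervalIntegral.integral_congr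
    intro t ht
    rw [uIcc_of_le hx.1] at ht
    simp only [b]
    rw [max_eq_left (hv t ⟨ht.1, ht.2.trans hx.2⟩)]
    ring
  · by_contra hcon
    have hvx : cext hT u x = 0 := le_antisymm (not_lt.mp hcon) (hv x hx)
    have hwx := hbc.min hT hd hv x hx hvx
    obtain ⟨C, hC0, hC⟩ := lin_bound hgc hg00 hg0 R
    obtain ⟨y, hy, hye⟩ := norm_attained hT u
    have := uniq hd hb hi hC0 (fun z hz => by
      rw [max_eq_left (hv z hz), zero_mul, sub_zero, abs_neg, abs_mul]
      exact mul_le_mul_of_nonneg_left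
        (hC _ (hv z hz) ((le_abs_self _).trans ((cext_le hT u z).trans hu2.le))) (abs_nonneg _))
      hv hx hvx hwx hy
    rw [this, abs_zero] at hye
    linarith

/-- Corollary: under (g1), regular oscillation at zero, `g(s)/s → 0` as `s → 0⁺`,
`liminf_{s→+∞} g(s)/s > 0`, (a1) and (a2), there is `ν* > 0` such that for every
`ν > ν*` the equation `u'' + ν a(x) g(u) = 0` has a positive Neumann solution and
a positive periodic solution. -/
theorem statement_4
    (T : ℝ) (hT : 0 < T)
    (g : ℝ → ℝ) (hg1 : CondG1 g) (hreg : RegOscAtZero g)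
    (hg0 : Tendsto (fun s => g s / s) (nhdsWithin 0 (Ioi 0)) (nhds 0))
    (hginf : (0 : EReal) < GrowthLiminf g)
    (a : ℝ → ℝ) (ha : IntervalIntegrable a volume 0 T)
    (ha1 : CondA1 T a)
    (ha2 : (∫ x in (0:ℝ)..T, a x) < 0) :
    ∃ νs : ℝ, 0 < νs ∧ ∀ ν : ℝ, νs < ν →
      PosSolNeumann T (fun t => ν * a t) g ∧ PosSolPeriodic T (fun t => ν * a t) g := by
  obtain ⟨hgc0, hgn, hg00, hgp⟩ := hg1
  obtain ⟨m, σ, τ, hm, hst, -, hap, han, hao⟩ := ha1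
  have hgc : Continuous (fun s => g (max s 0)) :=
    hgc0.comp_continuous (continuous_id.max continuous_const) fun s => mem_Ici.mpr (le_max_right s 0)
  obtain ⟨κ, hκ, s0, hs0, hgs⟩ := exists_kappa hginf
  have hdel : ∀ i, ∃ δ > 0, σ i + δ < τ i - δ ∧ 0 < ∫ t in (σ i + δ)..(τ i - δ), a t := by
    intro i
    obtain ⟨h1, h2, h3⟩ := hst i
    exact exists_delta h2 (sub_ii ha ⟨h1, h2.trans h3⟩ ⟨h1.trans h2, h3⟩) (hap i) (han i)
  choose δ hδ hδ2 hδ3 using hdel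
  let c : Fin m → ℝ := fun i => δ i * κ * (δ i / (τ i - σ i)) * ∫ t in (σ i + δ i)..(τ i - δ i), a t
  have hc : ∀ i, 0 < c i := fun i => by
    have h1 : 0 < δ i / (τ i - σ i) := div_pos (hδ i) (by linarith [hδ i, hδ2 i])
    exact mul_pos (mul_pos (mul_pos (hδ i) hκ) h1) (hδ3 i)
  have hsum : 0 ≤ ∑ i, 2 / c i := Finset.sum_nonneg fun j _ => (div_pos two_pos (hc j)).le
  refine ⟨1 + ∑ i, 2 / c i, by linarith, fun ν hν => ?_⟩
  have hν0 : 0 < ν := by linarith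
  have hbig : ∀ i, 2 < ν * c i := by
    intro i
    have h1 : 2 / c i ≤ ∑ i, 2 / c i := Finset.single_le_sum (f := fun i => 2 / c i)
      (fun j _ => (div_pos two_pos (hc j)).le) (Finset.mem_univ i)
    rw [← div_lt_iff₀ (hc i)]
    linarith
  constructor
  · obtain ⟨v, w, h1, h2, h3⟩ := main_exists true hT hgc hgn hg00 hgp hreg hg0 hκ hs0 hgs ha ha2 hm hst
      hap hao hδ hδ2 hν0 hbig
    exact ⟨v, w, h1, h2, h3.1, h3.2⟩
  · obtain ⟨v, w, h1, h2, h3⟩ := main_exists false hT hgc hgn hg00 hgp hreg hg0 hκ hs0 hgs ha ha2 hm hst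
      hap hao hδ hδ2 hν0 hbig
    exact ⟨v, w, h1, h2, h3.1, h3.2⟩
end

section
/- Let T > 0, let γ > 1 be a real number, and let a ∈ L¹([0,T]) satisfy (a1). Then the equation u'' + a(x) u^γ = 0 has a positive solution satisfying the Neumann boundary conditions if and only if ∫₀ᵀ a(x) dx < 0, and it has a positive solution satisfying the periodic boundary conditions if and only if ∫₀ᵀ a(x) dx < 0. -/
open MeasureTheory Set Filter

noncomputable section

abbrev L2T (T : ℝ) := Lp ℝ 2 (volume.restrict (Ioc (0:ℝ) T))

instance : Fact ((2:ENNReal) ≠ ⊤) := ⟨by simp⟩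

lemma ibp5 {T : ℝ} (hT : 0 < T) {b h : ℝ → ℝ} (hb : IntervalIntegrable b volume 0 T)
    (hh : IntervalIntegrable h volume 0 T) :
    ∫ x in (0:ℝ)..T, b x * (∫ t in (0:ℝ)..x, h t) =
      (∫ x in (0:ℝ)..T, b x) * (∫ x in (0:ℝ)..T, h x)
      - ∫ x in (0:ℝ)..T, (∫ t in (0:ℝ)..x, b t) * h x := by
  have h0 : (0:ℝ) ∈ uIcc 0 T := by simp
  have key := AbsolutelyContinuousOnInterval.integral_mul_deriv_eq_deriv_mul
    (hb.absolutelyContinuousOnInterval_intervalIntegral h0)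
    (hh.absolutelyContinuousOnInterval_intervalIntegral h0)
  have e1 : ∫ x in (0:ℝ)..T, (∫ t in (0:ℝ)..x, b t) * deriv (fun x => ∫ t in (0:ℝ)..x, h t) x
      = ∫ x in (0:ℝ)..T, (∫ t in (0:ℝ)..x, b t) * h x := by
    apply intervalIntegral.integral_congr_ae
    filter_upwards [hh.ae_hasDerivAt_integral] with x hx hxm
    rw [(hx (uIoc_subset_uIcc hxm) 0 h0).deriv]
  have e2 : ∫ x in (0:ℝ)..T, deriv (fun x => ∫ t in (0:ℝ)..x, b t) x * (∫ t in (0:ℝ)..x, h t)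
      = ∫ x in (0:ℝ)..T, b x * (∫ t in (0:ℝ)..x, h t) := by
    apply intervalIntegral.integral_congr_ae
    filter_upwards [hb.ae_hasDerivAt_integral] with x hx hxm
    rw [(hx (uIoc_subset_uIcc hxm) 0 h0).deriv]
  rw [e1, e2] at key
  simp at key
  linarith

/-- positive part power -/
def pp (p s : ℝ) : ℝ := (max s 0) ^ p

lemma pp_nonneg (p s : ℝ) : 0 ≤ pp p s := Real.rpow_nonneg (le_max_right _ _) _

lemma pp_of_nonpos {p s : ℝ} (hp : 0 < p) (hs : s ≤ 0) : pp p s = 0 := by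
  simp [pp, max_eq_right hs, Real.zero_rpow hp.ne']

lemma pp_of_pos {p s : ℝ} (hs : 0 < s) : pp p s = s ^ p := by
  simp [pp, max_eq_left hs.le]

lemma pp_cont {p : ℝ} (hp : 0 < p) : Continuous (pp p) := by
  unfold pp
  exact (continuous_id.max continuous_const).rpow_const (fun x => Or.inr hp.le)

lemma pp_mono {p : ℝ} (hp : 0 < p) {s t : ℝ} (h : s ≤ t) : pp p s ≤ pp p t :=
  Real.rpow_le_rpow (le_max_right _ _) (max_le_max_right _ h) hp.le

lemma pp_mul {p r s : ℝ} (hr : 0 ≤ r) : pp p (r * s) = r ^ p * pp p s := by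
  unfold pp
  rw [← Real.mul_rpow hr (le_max_right _ _)]
  congr 1
  rw [mul_max_of_nonneg _ _ hr, mul_zero]

lemma pp_deriv {p : ℝ} (hp : 1 < p) (s : ℝ) : HasDerivAt (pp p) (p * pp (p-1) s) s := by
  have hp1 : 0 < p - 1 := by linarith
  rcases lt_trichotomy s 0 with hs | hs | hs
  · rw [pp_of_nonpos hp1 hs.le, mul_zero]
    apply (hasDerivAt_const s (0:ℝ)).congr_of_eventuallyEq
    filter_upwards [Iio_mem_nhds hs] with x hx
    exact pp_of_nonpos (by linarith) (le_of_lt hx)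
  · subst hs
    rw [pp_of_nonpos hp1 le_rfl, mul_zero]
    rw [hasDerivAt_iff_isLittleO_nhds_zero]
    have h1 : (fun h : ℝ => |h| ^ p) =o[nhds 0] fun h => h := by
      have := (hasDerivAt_abs_rpow 0 hp)
      rw [hasDerivAt_iff_isLittleO_nhds_zero] at this
      simpa [Real.zero_rpow (by linarith : p ≠ 0)] using this
    refine (Asymptotics.IsBigO.trans_isLittleO ?_ h1)
    apply Asymptotics.IsBigO.of_bound 1
    filter_upwards with h
    rw [pp_of_nonpos (by linarith : 0 < p) le_rfl]
    simp only [zero_add, sub_zero, smul_zero, one_mul, Real.norm_eq_abs]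
    rw [abs_of_nonneg (pp_nonneg _ _), abs_of_nonneg (Real.rpow_nonneg (abs_nonneg _) _)]
    exact Real.rpow_le_rpow (le_max_right _ _) (max_le (le_abs_self _) (abs_nonneg _)) (by linarith)
  · rw [pp_of_pos hs]
    apply (Real.hasDerivAt_rpow_const (Or.inl hs.ne')).congr_of_eventuallyEq
    filter_upwards [Ioi_mem_nhds hs] with x hx
    exact pp_of_pos hx

/-- weak sequential compactness in a separable Hilbert space -/
lemma weak_seq {H : Type*} [NormedAddCommGroup H] [InnerProductSpace ℝ H] [CompleteSpace H]
    [TopologicalSpace.SeparableSpace H] (f : ℕ → H) (hf : ∀ n, ‖f n‖ ≤ 1) :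
    ∃ g : H, ‖g‖ ≤ 1 ∧ ∃ φ : ℕ → ℕ, StrictMono φ ∧
      ∀ y : H, Tendsto (fun n => inner ℝ y (f (φ n))) atTop (nhds (inner ℝ y g)) := by
  obtain ⟨L, hL, φ, hφ, hlim⟩ := WeakDual.isSeqCompact_closedBall ℝ H 0 1
    (x := fun n => StrongDual.toWeakDual (InnerProductSpace.toDual ℝ H (f n)))
    (fun n => by simpa using hf n)
  refine ⟨(InnerProductSpace.toDual ℝ H).symm (WeakDual.toStrongDual L), ?_, φ, hφ, ?_⟩
  · simpa using hL
  · intro y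
    have h1 := ((WeakDual.eval_continuous (𝕜 := ℝ) y).tendsto L).comp hlim
    rw [real_inner_comm, InnerProductSpace.toDual_symm_apply]
    refine h1.congr ?_
    intro n
    simp only [Function.comp]
    rw [real_inner_comm]
    rfl

def SS {T : ℝ} (f : L2T T) (x : ℝ) : ℝ := ∫ t in (0:ℝ)..x, f t

lemma L2_int {T : ℝ} (hT : 0 < T) (f : L2T T) : IntervalIntegrable (f : ℝ → ℝ) volume 0 T := by
  rw [intervalIntegrable_iff_integrableOn_Ioc_of_le hT.le]
  exact (Lp.memLp f).integrable (by norm_num)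

lemma L2_int' {T : ℝ} (hT : 0 < T) (f : L2T T) {x : ℝ} (hx : x ∈ Icc 0 T) :
    IntervalIntegrable (f : ℝ → ℝ) volume 0 x := by
  apply (L2_int hT f).mono_set
  rw [uIcc_of_le hx.1, uIcc_of_le hT.le]
  exact Icc_subset_Icc_right hx.2

/-- representer of evaluation -/
def ev (T x : ℝ) : L2T T := indicatorConstLp 2 (measurableSet_Ioc : MeasurableSet (Ioc (0:ℝ) x))
  (measure_ne_top _ _) 1

lemma SS_eq {T : ℝ} (hT : 0 < T) (f : L2T T) {x : ℝ} (hx : x ∈ Icc 0 T) :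
    SS f x = inner ℝ (ev T x) f := by
  unfold SS ev
  rw [L2.inner_indicatorConstLp_one, intervalIntegral.integral_of_le hx.1,
    Measure.restrict_restrict measurableSet_Ioc, inter_eq_left.2 (Ioc_subset_Ioc_right hx.2)]

lemma ev_norm {T x : ℝ} (hT : 0 < T) : ‖ev T x‖ ≤ Real.sqrt T := by
  unfold ev
  rw [norm_indicatorConstLp (by simp) (by simp)]
  simp only [norm_one, one_mul]
  rw [Real.sqrt_eq_rpow]
  simp only [ENNReal.toReal_ofNat]
  apply Real.rpow_le_rpow measureReal_nonneg _ (by norm_num)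
  refine (measureReal_mono (subset_univ _)).trans ?_
  simp [Measure.real, hT.le]

lemma SS_bd {T : ℝ} (hT : 0 < T) (f : L2T T) {x : ℝ} (hx : x ∈ Icc 0 T) :
    |SS f x| ≤ Real.sqrt T * ‖f‖ := by
  rw [SS_eq hT f hx]
  exact (abs_real_inner_le_norm _ _).trans (mul_le_mul_of_nonneg_right (ev_norm hT) (norm_nonneg _))

lemma SS_cont {T : ℝ} (hT : 0 < T) (f : L2T T) : ContinuousOn (SS f) (Icc 0 T) := by
  have := intervalIntegral.continuousOn_primitive_interval' (L2_int hT f) (left_mem_uIcc)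
  rwa [uIcc_of_le hT.le] at this

lemma SS_add {T : ℝ} (hT : 0 < T) (f g : L2T T) {x : ℝ} (hx : x ∈ Icc 0 T) :
    SS (f + g) x = SS f x + SS g x := by
  rw [SS_eq hT _ hx, SS_eq hT _ hx, SS_eq hT _ hx, inner_add_right]

lemma SS_smul {T : ℝ} (hT : 0 < T) (r : ℝ) (g : L2T T) {x : ℝ} (hx : x ∈ Icc 0 T) :
    SS (r • g) x = r * SS g x := by
  rw [SS_eq hT _ hx, SS_eq hT _ hx, inner_smul_right]

lemma cont_memLp {T : ℝ} (hT : 0 < T) {g : ℝ → ℝ} (hg : ContinuousOn g (Icc 0 T)) :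
    MemLp g 2 (volume.restrict (Ioc (0:ℝ) T)) := by
  obtain ⟨C, hC⟩ := isCompact_Icc.exists_bound_of_continuousOn hg
  refine MemLp.of_bound ((hg.mono Ioc_subset_Icc_self).aestronglyMeasurable measurableSet_Ioc) C ?_
  filter_upwards [ae_restrict_mem measurableSet_Ioc] with x hx
  exact hC x (Ioc_subset_Icc_self hx)

lemma SS_toLp {T : ℝ} {g : ℝ → ℝ} (hg : MemLp g 2 (volume.restrict (Ioc (0:ℝ) T)))
    {x : ℝ} (hx : x ∈ Icc 0 T) : SS hg.toLp x = ∫ t in (0:ℝ)..x, g t := by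
  unfold SS
  apply intervalIntegral.integral_congr_ae
  have := hg.coeFn_toLp
  rw [Filter.EventuallyEq, ae_restrict_iff' measurableSet_Ioc] at this
  filter_upwards [this] with t ht htm
  rw [uIoc_of_le hx.1] at htm
  exact ht ⟨htm.1, htm.2.trans hx.2⟩

def GG (T p : ℝ) (a u : ℝ → ℝ) : ℝ := ∫ t in (0:ℝ)..T, a t * pp p (u t)

lemma int_mul {T : ℝ} (hT : 0 < T) {a w : ℝ → ℝ} (ha : IntervalIntegrable a volume 0 T)
    (hw : ContinuousOn w (Icc 0 T)) : IntervalIntegrable (fun t => a t * w t) volume 0 T :=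
  ha.mul_continuousOn (by rwa [uIcc_of_le hT.le])

lemma pp_contOn {p : ℝ} (hp : 0 < p) {u : ℝ → ℝ} {s : Set ℝ} (hu : ContinuousOn u s) :
    ContinuousOn (fun t => pp p (u t)) s := (pp_cont hp).comp_continuousOn hu

lemma GG_smul {T p : ℝ} (a u : ℝ → ℝ) {r : ℝ} (hr : 0 ≤ r) :
    GG T p a (fun x => r * u x) = r ^ p * GG T p a u := by
  unfold GG
  rw [← intervalIntegral.integral_const_mul]
  congr 1
  ext t
  rw [pp_mul hr]; ring

lemma GG_congr {T p : ℝ} (hT : 0 < T) {a u v : ℝ → ℝ} (h : ∀ x ∈ Icc 0 T, u x = v x) :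
    GG T p a u = GG T p a v := by
  unfold GG
  apply intervalIntegral.integral_congr
  intro x hx
  rw [uIcc_of_le hT.le] at hx
  simp only [h x hx]

lemma GG_large {T p : ℝ} (hT : 0 < T) (hp : 0 < p) {a : ℝ → ℝ}
    (ha : IntervalIntegrable a volume 0 T) (hneg : ∫ x in (0:ℝ)..T, a x < 0) (M : ℝ) (hM : 0 ≤ M) :
    ∃ C : ℝ, 0 < C ∧ ∀ c : ℝ, C ≤ |c| → ∀ v : ℝ → ℝ, ContinuousOn v (Icc 0 T) →
      (∀ x ∈ Icc 0 T, |v x| ≤ M) → GG T p a (fun x => c + v x) ≤ 0 := by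
  set I := ∫ x in (0:ℝ)..T, |a x| with hI
  have hI0 : 0 ≤ I := intervalIntegral.integral_nonneg hT.le (fun x _ => abs_nonneg _)
  set ε := -(∫ x in (0:ℝ)..T, a x) / (I + 1) with hε
  have hε0 : 0 < ε := div_pos (by linarith) (by linarith)
  have hεI : (∫ x in (0:ℝ)..T, a x) + ε * I ≤ 0 := by
    have : ε * (I + 1) = -(∫ x in (0:ℝ)..T, a x) := by rw [hε]; field_simp
    nlinarith
  have h1 : pp p 1 = 1 := by rw [pp_of_pos one_pos]; simp
  obtain ⟨δ, hδ, hd⟩ := Metric.continuous_iff.1 (pp_cont hp) 1 ε hε0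
  refine ⟨M / δ + M + 1, by positivity, ?_⟩
  intro c hc v hv hvM
  have hMd : 0 ≤ M / δ := by positivity
  rcases le_total 0 c with h0 | h0
  · rw [abs_of_nonneg h0] at hc
    have hc0 : 0 < c := by linarith
    have e1 : GG T p a (fun x => c + v x) = c ^ p * GG T p a (fun x => 1 + v x / c) := by
      rw [← GG_smul _ _ hc0.le]
      congr 1; ext x; field_simp
    rw [e1]
    apply mul_nonpos_of_nonneg_of_nonpos (by positivity)
    refine le_trans ?_ hεI
    rw [hI, ← intervalIntegral.integral_const_mul, ← intervalIntegral.integral_add ha (ha.abs.const_mul _)]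
    unfold GG
    apply intervalIntegral.integral_mono_on hT.le
    · exact int_mul hT ha (pp_contOn hp (continuousOn_const.add (hv.div_const _)))
    · exact ha.add (ha.abs.const_mul _)
    · intro x hx
      have hx' : dist (1 + v x / c) 1 < δ := by
        rw [Real.dist_eq, add_sub_cancel_left, abs_div, abs_of_pos hc0, div_lt_iff₀ hc0]
        have : M / δ < c := by linarith
        rw [div_lt_iff₀ hδ] at this
        linarith [hvM x hx]
      have h2 := hd _ hx'
      rw [h1, Real.dist_eq] at h2
      have h3 : a x * (pp p (1 + v x / c) - 1) ≤ |a x| * ε := by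
        refine (le_abs_self _).trans ?_
        rw [abs_mul]
        exact mul_le_mul_of_nonneg_left h2.le (abs_nonneg _)
      linarith
  · rw [abs_of_nonpos h0] at hc
    have : GG T p a (fun x => c + v x) = GG T p a (fun x => 0) := by
      unfold GG
      apply intervalIntegral.integral_congr
      intro x hx
      rw [uIcc_of_le hT.le] at hx
      simp only
      rw [pp_of_nonpos hp, pp_of_nonpos hp le_rfl]
      have := abs_le.1 (hvM x hx)
      linarith
    rw [this]
    unfold GG
    simp [pp_of_nonpos hp le_rfl]

lemma uc_cont {T : ℝ} (hT : 0 < T) (c : ℝ) (f : L2T T) :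
    ContinuousOn (fun x => c + SS f x) (Icc 0 T) := continuousOn_const.add (SS_cont hT f)

lemma T_mem {T : ℝ} (hT : 0 < T) : T ∈ Icc (0:ℝ) T := ⟨hT.le, le_rfl⟩

lemma max_exists {T p : ℝ} (hT : 0 < T) (hp : 1 < p) {a : ℝ → ℝ}
    (ha : IntervalIntegrable a volume 0 T) (hneg : ∫ x in (0:ℝ)..T, a x < 0) (e : ℝ)
    (hpos : ∃ (c : ℝ) (f : L2T T), e * SS f T = 0 ∧ 0 < GG T p a (fun x => c + SS f x)) :
    ∃ (c : ℝ) (f : L2T T), ‖f‖ ≤ 1 ∧ e * SS f T = 0 ∧ 0 < GG T p a (fun x => c + SS f x) ∧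
      ∀ (c' : ℝ) (f' : L2T T), ‖f'‖ ≤ 1 → e * SS f' T = 0 →
        GG T p a (fun x => c' + SS f' x) ≤ GG T p a (fun x => c + SS f x) := by
  have hp0 : 0 < p := by linarith
  obtain ⟨C, hC0, hC⟩ := GG_large hT hp0 ha hneg (Real.sqrt T) (Real.sqrt_nonneg _)
  have hbd : ∀ f : L2T T, ‖f‖ ≤ 1 → ∀ x ∈ Icc 0 T, |SS f x| ≤ Real.sqrt T := by
    intro f hf x hx
    refine (SS_bd hT f hx).trans ?_
    exact mul_le_of_le_one_right (Real.sqrt_nonneg _) hf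
  -- a positive value in the ball
  obtain ⟨c1, f1, hf1, he1, hG1⟩ : ∃ (c : ℝ) (f : L2T T), ‖f‖ ≤ 1 ∧ e * SS f T = 0 ∧
      0 < GG T p a (fun x => c + SS f x) := by
    obtain ⟨c, f, he, hG⟩ := hpos
    set r := (‖f‖ + 1)⁻¹ with hr
    have hr0 : 0 < r := by positivity
    refine ⟨r * c, r • f, ?_, ?_, ?_⟩
    · rw [norm_smul, Real.norm_eq_abs, abs_of_pos hr0, hr, inv_mul_le_iff₀ (by positivity)]
      linarith
    · rw [SS_smul hT _ _ (T_mem hT)]; linear_combination r * he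
    · rw [GG_congr hT (v := fun x => r * (c + SS f x)), GG_smul _ _ hr0.le]
      · positivity
      · intro x hx; rw [SS_smul hT _ _ hx]; ring
  set A : Set ℝ := {y | ∃ (c : ℝ) (f : L2T T), |c| ≤ C ∧ ‖f‖ ≤ 1 ∧ e * SS f T = 0 ∧
    GG T p a (fun x => c + SS f x) = y} with hA
  have hmem1 : GG T p a (fun x => c1 + SS f1 x) ∈ A := by
    refine ⟨c1, f1, ?_, hf1, he1, rfl⟩
    by_contra hcon
    have := hC c1 (le_of_lt (not_le.1 hcon)) _ (SS_cont hT f1) (hbd f1 hf1)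
    linarith
  have hpt : ∀ (c : ℝ) (f : L2T T), |c| ≤ C → ‖f‖ ≤ 1 → ∀ x ∈ Icc 0 T,
      ‖a x * pp p (c + SS f x)‖ ≤ |a x| * pp p (C + Real.sqrt T) := by
    intro c f hc hf x hx
    rw [norm_mul, Real.norm_eq_abs, Real.norm_eq_abs, abs_of_nonneg (pp_nonneg _ _)]
    apply mul_le_mul_of_nonneg_left _ (abs_nonneg _)
    apply pp_mono hp0
    have := abs_le.1 (hbd f hf x hx)
    have := abs_le.1 hc
    linarith
  have hAb : BddAbove A := by
    refine ⟨∫ x in (0:ℝ)..T, |a x| * pp p (C + Real.sqrt T), ?_⟩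
    rintro y ⟨c, f, hc, hf, he, rfl⟩
    unfold GG
    apply intervalIntegral.integral_mono_on hT.le
    · exact int_mul hT ha (pp_contOn hp0 (uc_cont hT c f))
    · exact ha.abs.mul_const _
    · intro x hx
      exact (le_abs_self _).trans (hpt c f hc hf x hx)
  obtain ⟨y, -, hylim, hyA⟩ := exists_seq_tendsto_sSup ⟨_, hmem1⟩ hAb
  choose cs fs hcs hfs hes hys using hyA
  have : TopologicalSpace.SeparableSpace (L2T T) := by
    have : SecondCountableTopology (L2T T) := Lp.SecondCountableTopology
    infer_instance
  obtain ⟨g, hg, φ, hφ, hlim⟩ := weak_seq fs hfs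
  obtain ⟨c, hc, ψ, hψ, hclim⟩ := (isCompact_Icc (a := -C) (b := C)).tendsto_subseq
    (x := fun n => cs (φ n)) (fun n => abs_le.1 (hcs _))
  have hSlim : ∀ x ∈ Icc 0 T, Tendsto (fun n => SS (fs (φ (ψ n))) x) atTop (nhds (SS g x)) := by
    intro x hx
    have := (hlim (ev T x)).comp hψ.tendsto_atTop
    rw [SS_eq hT g hx]
    refine this.congr (fun n => ?_)
    rw [SS_eq hT _ hx]; rfl
  have heg : e * SS g T = 0 := by
    have h1 := (hSlim T (T_mem hT)).const_mul e
    have h2 : Tendsto (fun n => e * SS (fs (φ (ψ n))) T) atTop (nhds 0) := by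
      simp only [hes]; exact tendsto_const_nhds
    exact tendsto_nhds_unique h1 h2
  have hGlim : Tendsto (fun n => GG T p a (fun x => cs (φ (ψ n)) + SS (fs (φ (ψ n))) x)) atTop
      (nhds (GG T p a (fun x => c + SS g x))) := by
    unfold GG
    apply intervalIntegral.tendsto_integral_filter_of_dominated_convergence
      (fun x => |a x| * pp p (C + Real.sqrt T))
    · filter_upwards with n
      exact (intervalIntegrable_iff.1 (int_mul hT ha (pp_contOn hp0 (uc_cont hT _ _)))).aestronglyMeasurable
    · filter_upwards with n
      filter_upwards with x hx
      rw [uIoc_of_le hT.le] at hx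
      exact hpt _ _ (hcs _) (hfs _) x (Ioc_subset_Icc_self hx)
    · exact ha.abs.mul_const _
    · filter_upwards with x hx
      rw [uIoc_of_le hT.le] at hx
      apply Tendsto.const_mul
      exact ((pp_cont hp0).tendsto _).comp (hclim.add (hSlim x (Ioc_subset_Icc_self hx)))
  have hGeq : GG T p a (fun x => c + SS g x) = sSup A := by
    refine tendsto_nhds_unique hGlim ?_
    simp only [hys]
    exact (hylim.comp hφ.tendsto_atTop).comp hψ.tendsto_atTop
  have hS0 : 0 < sSup A := lt_of_lt_of_le hG1 (le_csSup hAb hmem1)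
  refine ⟨c, g, hg, heg, by rw [hGeq]; exact hS0, ?_⟩
  intro c' f' hf' he'
  rw [hGeq]
  by_cases hc' : |c'| ≤ C
  · exact le_csSup hAb ⟨c', f', hc', hf', he', rfl⟩
  · exact (hC c' (le_of_lt (not_le.1 hc')) _ (SS_cont hT f') (hbd f' hf')).trans hS0.le

lemma max_hom {T p : ℝ} (hT : 0 < T) (hp : 1 < p) {a : ℝ → ℝ}
    (hneg : ∫ x in (0:ℝ)..T, a x < 0) (e K : ℝ) (hK : 0 < K)
    (hmax : ∀ (c' : ℝ) (f' : L2T T), ‖f'‖ ≤ 1 → e * SS f' T = 0 →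
        GG T p a (fun x => c' + SS f' x) ≤ K) (c : ℝ) (f : L2T T) (he : e * SS f T = 0) :
    GG T p a (fun x => c + SS f x) ≤ K * ‖f‖ ^ p := by
  have hp0 : 0 < p := by linarith
  rcases (norm_nonneg f).eq_or_lt with h0 | h0
  · have hf : f = 0 := norm_eq_zero.1 h0.symm
    rw [← h0, Real.zero_rpow hp0.ne', mul_zero]
    rw [GG_congr hT (v := fun x => c)]
    · unfold GG
      rw [intervalIntegral.integral_mul_const]
      exact mul_nonpos_of_nonpos_of_nonneg hneg.le (pp_nonneg _ _)
    · intro x hx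
      have : SS f x = 0 := by rw [SS_eq hT f hx, hf, inner_zero_right]
      rw [this, add_zero]
  · have h1 := hmax (‖f‖⁻¹ * c) (‖f‖⁻¹ • f) (by
      rw [norm_smul, norm_inv, norm_norm, inv_mul_cancel₀ h0.ne']) (by
      rw [SS_smul hT _ _ (T_mem hT)]; linear_combination ‖f‖⁻¹ * he)
    have h2 : GG T p a (fun x => c + SS f x) =
        ‖f‖ ^ p * GG T p a (fun x => ‖f‖⁻¹ * c + SS (‖f‖⁻¹ • f) x) := by
      rw [← GG_smul _ _ h0.le]
      apply GG_congr hT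
      intro x hx
      rw [SS_smul hT _ _ hx]
      field_simp
    rw [h2, mul_comm]
    exact mul_le_mul_of_nonneg_right h1 (by positivity)

lemma GG_deriv {T p : ℝ} (hT : 0 < T) (hp : 1 < p) {a u φ : ℝ → ℝ}
    (ha : IntervalIntegrable a volume 0 T) (hu : ContinuousOn u (Icc 0 T))
    (hφ : ContinuousOn φ (Icc 0 T)) :
    HasDerivAt (fun t : ℝ => GG T p a (fun x => u x + t * φ x))
      (∫ x in (0:ℝ)..T, a x * (p * pp (p-1) (u x) * φ x)) 0 := by
  have hp0 : 0 < p := by linarith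
  have hp1 : 0 < p - 1 := by linarith
  obtain ⟨B, hB⟩ := isCompact_Icc.exists_bound_of_continuousOn hu
  obtain ⟨D, hD⟩ := isCompact_Icc.exists_bound_of_continuousOn hφ
  have key := intervalIntegral.hasDerivAt_integral_of_dominated_loc_of_deriv_le (μ := volume)
    (a := 0) (b := T)
    (F := fun t x => a x * pp p (u x + t * φ x))
    (F' := fun t x => a x * (p * pp (p-1) (u x + t * φ x) * φ x))
    (bound := fun x => |a x| * (p * pp (p-1) (B + D) * D))
    (x₀ := (0:ℝ)) (Metric.ball_mem_nhds (0:ℝ) one_pos) ?_ ?_ ?_ ?_ ?_ ?_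
  · have := key.2
    simp only [zero_mul, add_zero] at this
    exact this
  · filter_upwards with t
    exact (intervalIntegrable_iff.1 (int_mul hT ha (pp_contOn hp0
      (hu.add (continuousOn_const.mul hφ))))).aestronglyMeasurable
  · exact int_mul hT ha (pp_contOn hp0 (hu.add (continuousOn_const.mul hφ)))
  · exact (intervalIntegrable_iff.1 (int_mul hT ha ((continuousOn_const.mul (pp_contOn hp1
      (hu.add (continuousOn_const.mul hφ)))).mul hφ))).aestronglyMeasurable
  · filter_upwards with x hx t ht
    rw [uIoc_of_le hT.le] at hx
    have hx' := Ioc_subset_Icc_self hx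
    have h1 := hB x hx'
    have h2 := hD x hx'
    rw [Real.norm_eq_abs] at h1 h2
    have ht' : |t| ≤ 1 := by
      have : |t| < 1 := by simpa using ht
      exact this.le
    rw [norm_mul, norm_mul, norm_mul, Real.norm_eq_abs, Real.norm_eq_abs, Real.norm_eq_abs,
      Real.norm_eq_abs, abs_of_pos hp0, abs_of_nonneg (pp_nonneg _ _)]
    have h3 : u x + t * φ x ≤ B + D := by
      have : t * φ x ≤ D := by
        refine (le_abs_self _).trans ?_
        rw [abs_mul]
        exact (mul_le_of_le_one_left (abs_nonneg _) ht').trans h2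
      linarith [le_abs_self (u x)]
    gcongr
    · exact mul_nonneg hp0.le (pp_nonneg _ _)
    · exact pp_mono hp1 h3
  · exact ha.abs.mul_const _
  · filter_upwards with x hx t ht
    have h1 : HasDerivAt (fun t : ℝ => u x + t * φ x) (φ x) t := by
      simpa using ((hasDerivAt_id t).mul_const (φ x)).const_add (u x)
    exact ((pp_deriv hp (u x + t * φ x)).comp t h1).const_mul (a x)

lemma EL {T p : ℝ} (hT : 0 < T) (hp : 1 < p) {a : ℝ → ℝ}
    (ha : IntervalIntegrable a volume 0 T) (e K : ℝ) (c : ℝ) (f : L2T T)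
    (hom : ∀ (c' : ℝ) (f' : L2T T), e * SS f' T = 0 →
      GG T p a (fun x => c' + SS f' x) ≤ K * ‖f'‖ ^ p)
    (he : e * SS f T = 0) (hf : ‖f‖ = 1) (hK : GG T p a (fun x => c + SS f x) = K)
    (d : ℝ) (h : L2T T) (heh : e * SS h T = 0) :
    K * inner ℝ f h = ∫ x in (0:ℝ)..T, a x * pp (p-1) (c + SS f x) * (d + SS h x) := by
  have hp0 : 0 < p := by linarith
  set N : ℝ → ℝ := fun t => 1 + t * (2 * inner ℝ f h) + t^2 * ‖h‖^2 with hN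
  have hNeq : ∀ t : ℝ, ‖f + t • h‖ ^ 2 = N t := by
    intro t
    rw [norm_add_sq_real, hf, inner_smul_right, norm_smul, mul_pow, Real.norm_eq_abs, sq_abs]
    simp only [hN]; ring
  have hNp : ∀ t : ℝ, ‖f + t • h‖ ^ p = (N t) ^ (p/2) := by
    intro t
    rw [← hNeq, ← Real.rpow_natCast, ← Real.rpow_mul (norm_nonneg _)]
    congr 1; push_cast; ring
  set Φ : ℝ → ℝ := fun t => K * (N t) ^ (p/2) -
    GG T p a (fun x => (c + SS f x) + t * (d + SS h x)) with hΦ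
  have hΦ0 : Φ 0 = 0 := by
    simp [hΦ, hN, hK]
  have hmin : IsLocalMin Φ 0 := by
    filter_upwards with t
    rw [hΦ0]
    have h1 := hom (c + t * d) (f + t • h) (by
      rw [SS_add hT _ _ (T_mem hT), SS_smul hT _ _ (T_mem hT)]
      linear_combination he + t * heh)
    rw [hNp] at h1
    rw [GG_congr hT (v := fun x => (c + SS f x) + t * (d + SS h x))] at h1
    · simp only [hΦ]; linarith
    · intro x hx
      rw [SS_add hT _ _ hx, SS_smul hT _ _ hx]; ring
  have hNd : HasDerivAt N (2 * inner ℝ f h) 0 := by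
    have := (((hasDerivAt_id (0:ℝ)).mul_const (2 * inner ℝ f h)).const_add 1).add
      (((hasDerivAt_id (0:ℝ)).pow 2).mul_const (‖h‖^2))
    exact HasDerivAt.congr_deriv this (by simp)
  have hN0 : N 0 = 1 := by simp [hN]
  have hd1 : HasDerivAt (fun t => (N t) ^ (p/2)) (2 * inner ℝ f h * (p/2)) 0 := by
    have := hNd.rpow_const (p := p/2) (Or.inl (by rw [hN0]; norm_num))
    rw [hN0] at this
    simpa using this
  have hd2 := (hd1.const_mul K).sub (GG_deriv hT hp ha (uc_cont hT c f) (uc_cont hT d h))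
  have := hmin.hasDerivAt_eq_zero hd2
  have e3 : ∫ x in (0:ℝ)..T, a x * (p * pp (p-1) (c + SS f x) * (d + SS h x)) =
      p * ∫ x in (0:ℝ)..T, a x * pp (p-1) (c + SS f x) * (d + SS h x) := by
    rw [← intervalIntegral.integral_const_mul]
    congr 1; ext x; ring
  rw [e3] at this
  have h4 : p * (K * inner ℝ f h -
    ∫ x in (0:ℝ)..T, a x * pp (p-1) (c + SS f x) * (d + SS h x)) = 0 := by linarith
  rcases mul_eq_zero.1 h4 with h5 | h5
  · linarith
  · linarith

lemma prim_cont {T : ℝ} (hT : 0 < T) {b : ℝ → ℝ} (hb : IntervalIntegrable b volume 0 T) :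
    ContinuousOn (fun x => ∫ t in (0:ℝ)..x, b t) (Icc 0 T) := by
  have := intervalIntegral.continuousOn_primitive_interval' hb (left_mem_uIcc)
  rwa [uIcc_of_le hT.le] at this

lemma inner_toLp {T : ℝ} (hT : 0 < T) {g : ℝ → ℝ} 
    (hg : MemLp g 2 (volume.restrict (Ioc (0:ℝ) T))) (h : L2T T) :
    inner ℝ (hg.toLp) h = ∫ x in (0:ℝ)..T, g x * h x := by
  rw [L2.inner_def, intervalIntegral.integral_of_le hT.le]
  apply integral_congr_ae
  filter_upwards [hg.coeFn_toLp] with x hx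
  rw [hx]
  simp [mul_comm]

lemma regul {T : ℝ} (hT : 0 < T) {b : ℝ → ℝ}
    (hb : IntervalIntegrable b volume 0 T) (e K : ℝ) (hK : 0 < K) (f : L2T T)
    (he : e * SS f T = 0)
    (h : ∀ (d : ℝ) (h : L2T T), e * SS h T = 0 →
      K * inner ℝ f h = ∫ x in (0:ℝ)..T, b x * (d + SS h x)) :
    (∫ x in (0:ℝ)..T, b x) = 0 ∧ ∃ k : ℝ, (e = 0 → k = 0) ∧ ∀ x ∈ Icc 0 T,
      SS f x = ∫ t in (0:ℝ)..x, (k - K⁻¹ * ∫ s in (0:ℝ)..t, b s) := by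
  have hz : ∀ x ∈ Icc 0 T, SS (0 : L2T T) x = 0 := by
    intro x hx; rw [SS_eq hT _ hx, inner_zero_right]
  have hb0 : (∫ x in (0:ℝ)..T, b x) = 0 := by
    have h1 := h 1 0 (by rw [hz T (T_mem hT), mul_zero])
    rw [inner_zero_right, mul_zero] at h1
    refine Eq.trans ?_ h1.symm
    apply intervalIntegral.integral_congr
    intro x hx
    rw [uIcc_of_le hT.le] at hx
    simp only [hz x hx]; ring
  refine ⟨hb0, ?_⟩
  have hBm := cont_memLp hT (prim_cont hT hb)
  set Bl : L2T T := hBm.toLp with hBl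
  set w : L2T T := f + K⁻¹ • Bl with hw
  have hort : ∀ g : L2T T, e * SS g T = 0 → inner ℝ w g = 0 := by
    intro g hg
    have h1 := h 0 g hg
    simp only [zero_add] at h1
    have h2 := ibp5 hT hb (L2_int hT g)
    rw [hb0] at h2
    rw [hw, inner_add_left, inner_smul_left, hBl, inner_toLp hT hBm]
    have h3 : K * inner ℝ f g = - ∫ x in (0:ℝ)..T, (∫ t in (0:ℝ)..x, b t) * g x := by
      rw [h1]
      unfold SS
      linarith
    have h4 : inner ℝ f g = K⁻¹ * (K * inner ℝ f g) := by field_simp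
    rw [h4, h3]
    simp
  have h1m : MemLp (fun _ : ℝ => (1:ℝ)) 2 (volume.restrict (Ioc (0:ℝ) T)) := 
    cont_memLp hT continuousOn_const
  set one : L2T T := h1m.toLp with hone
  have hone1 : ∀ x ∈ Icc 0 T, SS one x = x := by
    intro x hx; rw [hone, SS_toLp _ hx]; simp
  obtain ⟨k, hk0, hk⟩ : ∃ k : ℝ, (e = 0 → k = 0) ∧ (e ≠ 0 → SS w T = k * T) := by
    by_cases h0 : e = 0
    · exact ⟨0, fun _ => rfl, fun h => absurd h0 h⟩
    · exact ⟨SS w T / T, fun h => absurd h h0, fun _ => by field_simp⟩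
  refine ⟨k, hk0, ?_⟩
  set g : L2T T := w + (-k) • one with hg
  have hgT : SS g T = SS w T - k * T := by
    rw [hg, SS_add hT _ _ (T_mem hT), SS_smul hT _ _ (T_mem hT), hone1 T (T_mem hT)]; ring
  have heg : e * SS g T = 0 := by
    by_cases h0 : e = 0
    · rw [h0, zero_mul]
    · rw [hgT, hk h0]; ring
  have hkg : k * SS g T = 0 := by
    by_cases h0 : e = 0
    · rw [hk0 h0, zero_mul]
    · rw [hgT, hk h0]; ring
  have honeg : inner ℝ one g = SS g T := by
    rw [hone, inner_toLp hT h1m]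
    simp [SS]
  have hg0 : g = 0 := by
    rw [← inner_self_eq_zero (𝕜 := ℝ)]
    nth_rewrite 1 [hg]
    rw [inner_add_left, inner_smul_left, hort g heg, honeg]
    simp only [conj_trivial]
    linarith
  have hfeq : f = k • one + (-K⁻¹) • Bl := by
    have : f + K⁻¹ • Bl + (-k) • one = 0 := by rw [← hw, ← hg, hg0]
    have h5 : f = f + K⁻¹ • Bl + (-k) • one + (k • one + (-K⁻¹) • Bl) := by
      simp only [neg_smul]; abel
    rw [h5, this, zero_add]
  intro x hx
  rw [hfeq, SS_add hT _ _ hx, SS_smul hT _ _ hx, SS_smul hT _ _ hx, hone1 x hx, hBl, SS_toLp _ hx]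
  have hi : IntervalIntegrable (fun x => ∫ t in (0:ℝ)..x, b t) volume 0 x := by
    apply ContinuousOn.intervalIntegrable
    rw [uIcc_of_le hx.1]
    exact (prim_cont hT hb).mono (Icc_subset_Icc_right hx.2)
  rw [intervalIntegral.integral_sub (by simp) (hi.const_mul _), intervalIntegral.integral_const_mul]
  simp
  ring

lemma min_ineq {T : ℝ} {u u' : ℝ → ℝ}
    (hd : ∀ x ∈ Icc (0:ℝ) T, HasDerivWithinAt u (u' x) (Icc (0:ℝ) T) x)
    {z : ℝ} (hz : z ∈ Icc 0 T) (hmin : ∀ y ∈ Icc 0 T, u z ≤ u y) {y : ℝ} (hy : y ∈ Icc 0 T) :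
    0 ≤ u' z * (y - z) := by
  have h1 : IsLocalMinOn u (Icc 0 T) z := by
    filter_upwards [self_mem_nhdsWithin] with x hx using hmin x hx
  have h2 := h1.hasFDerivWithinAt_nonneg (hd z hz).hasFDerivWithinAt
    (sub_mem_posTangentConeAt_of_segment_subset ((convex_Icc 0 T).segment_subset hz hy))
  simpa [mul_comm] using h2

lemma min_crit {T : ℝ} (hT : 0 < T) {u u' : ℝ → ℝ}
    (hd : ∀ x ∈ Icc (0:ℝ) T, HasDerivWithinAt u (u' x) (Icc (0:ℝ) T) x)
    (hper : u' 0 = u' T) (hbc : u' 0 = 0 ∨ u 0 = u T)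
    {z : ℝ} (hz : z ∈ Icc 0 T) (hmin : ∀ y ∈ Icc 0 T, u z ≤ u y) : u' z = 0 := by
  have h0 : (0:ℝ) ∈ Icc 0 T := ⟨le_rfl, hT.le⟩
  have hTm := T_mem hT
  have A := min_ineq hd hz hmin h0
  have B := min_ineq hd hz hmin hTm
  rcases hz.1.eq_or_lt with h | h
  · subst h
    rcases hbc with h1 | h1
    · exact h1
    · have C := min_ineq hd hTm (fun y hy => h1 ▸ hmin y hy) h0
      nlinarith
  · rcases hz.2.eq_or_lt with h' | h'
    · subst h'
      rcases hbc with h1 | h1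
      · rw [← hper, h1]
      · have C := min_ineq hd h0 (fun y hy => h1 ▸ hmin y hy) hTm
        nlinarith
    · nlinarith

lemma ode_pos {T γ k l : ℝ} (hT : 0 < T) (hγ : 1 < γ) (hl : 0 < l) {a u u' : ℝ → ℝ}
    (ha : IntervalIntegrable a volume 0 T)
    (hd : ∀ x ∈ Icc (0:ℝ) T, HasDerivWithinAt u (u' x) (Icc (0:ℝ) T) x)
    (hu' : ∀ x ∈ Icc (0:ℝ) T, u' x = k - l * ∫ t in (0:ℝ)..x, a t * pp γ (u t))
    (hcrit : ∀ z ∈ Icc 0 T, (∀ y ∈ Icc 0 T, u z ≤ u y) → u' z = 0)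
    (hne : ∃ x ∈ Icc 0 T, 0 < u x) : ∀ x ∈ Icc 0 T, 0 < u x := by
  have hcont : ContinuousOn u (Icc 0 T) := fun x hx => (hd x hx).continuousWithinAt
  obtain ⟨x0, hx0, hm⟩ := isCompact_Icc.exists_isMinOn (nonempty_Icc.2 hT.le) hcont
  have hm' : ∀ y ∈ Icc 0 T, u x0 ≤ u y := fun y hy => hm hy
  by_contra hcon
  push Not at hcon
  obtain ⟨x1, hx1, hx1'⟩ := hcon
  set m := u x0 with hmdef
  have hm0 : m ≤ 0 := (hm' x1 hx1).trans hx1'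
  obtain ⟨M, hM⟩ := isCompact_Icc.exists_bound_of_continuousOn hcont
  have hM0 : 0 ≤ M := (norm_nonneg _).trans (hM x0 hx0)
  set L := M ^ (γ - 1) with hL
  have hL0 : 0 ≤ L := by positivity
  have hpp : ∀ x ∈ Icc 0 T, pp γ (u x) ≤ L * (u x - m) := by
    intro x hx
    rcases le_or_gt (u x) 0 with h | h
    · rw [pp_of_nonpos (by linarith) h]
      exact mul_nonneg hL0 (by linarith [hm' x hx])
    · rw [pp_of_pos h]
      have e1 : u x ^ γ = u x ^ (γ - 1) * u x := by
        rw [← Real.rpow_add_one h.ne']; congr 1; ring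
      rw [e1]
      have h2 : u x ^ (γ - 1) ≤ L := 
        Real.rpow_le_rpow h.le ((le_abs_self _).trans (hM x hx)) (by linarith)
      have h3 : 0 ≤ u x ^ (γ - 1) := by positivity
      exact mul_le_mul h2 (by linarith) h.le hL0
  set I := ∫ x in (0:ℝ)..T, |a x| with hI
  have hI0 : 0 ≤ I := intervalIntegral.integral_nonneg hT.le (fun x _ => abs_nonneg _)
  set δ := (l * L * I + 1)⁻¹ with hδ
  have hδ0 : 0 < δ := by positivity
  have hδ1 : l * L * I * δ < 1 := by
    rw [hδ, ← div_eq_mul_inv, div_lt_one (by positivity)]; linarith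
  have hbint : IntervalIntegrable (fun t => a t * pp γ (u t)) volume 0 T :=
    int_mul hT ha (pp_contOn (by linarith) hcont)
  have hsub : ∀ x ∈ Icc 0 T, ∀ y ∈ Icc 0 T, uIcc x y ⊆ uIcc 0 T := by
    intro x hx y hy
    rw [uIcc_of_le hT.le]
    exact uIcc_subset_Icc hx hy
  have step : ∀ z ∈ Icc 0 T, u z = m → ∀ y ∈ Icc 0 T, |y - z| ≤ δ → u y = m := by
    intro z hz hzm y hy hyz
    set J := Icc (z - δ) (z + δ) ∩ Icc 0 T with hJ
    have hJsub : J ⊆ Icc 0 T := inter_subset_right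
    have hJc : IsCompact J := isCompact_Icc.inter isCompact_Icc
    have hJconv : Convex ℝ J := (convex_Icc _ _).inter (convex_Icc _ _)
    have hzJ : z ∈ J := ⟨⟨by linarith, by linarith⟩, hz⟩
    have hyJ : y ∈ J := by
      have := abs_le.1 hyz
      exact ⟨⟨by linarith, by linarith⟩, hy⟩
    obtain ⟨q, hq, hqmax⟩ := hJc.exists_isMaxOn ⟨z, hzJ⟩ (hcont.mono hJsub)
    have hqmax' : ∀ x ∈ J, u x ≤ u q := fun x hx => hqmax hx
    set W := u q - m with hW
    have hW0 : 0 ≤ W := by linarith [hm' q (hJsub hq)]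
    have hz0 : u' z = 0 := hcrit z hz (fun y hy => by rw [hzm]; exact hm' y hy)
    have hbound : ∀ x ∈ J, ‖u' x‖ ≤ l * L * I * W := by
      intro x hx
      have hx' := hJsub hx
      have e1 : u' x = - (l * ∫ t in z..x, a t * pp γ (u t)) := by
        have : u' x - u' z = - (l * ∫ t in z..x, a t * pp γ (u t)) := by
          rw [hu' x hx', hu' z hz, ← intervalIntegral.integral_interval_sub_left
            (hbint.mono_set (hsub 0 ⟨le_rfl, hT.le⟩ x hx'))
            (hbint.mono_set (hsub 0 ⟨le_rfl, hT.le⟩ z hz))]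
          ring
        rw [← this, hz0, sub_zero]
      rw [e1, norm_neg, norm_mul, Real.norm_eq_abs, abs_of_pos hl, mul_assoc, mul_assoc]
      apply mul_le_mul_of_nonneg_left _ hl.le
      have hxz : uIoc z x ⊆ J := 
        uIoc_subset_uIcc.trans (hJconv.ordConnected.uIcc_subset hzJ hx)
      rw [intervalIntegral.norm_intervalIntegral_eq]
      refine (norm_integral_le_integral_norm _).trans ?_
      have hInt : IntegrableOn (fun t => |a t|) (Ioc 0 T) := 
        (intervalIntegrable_iff_integrableOn_Ioc_of_le hT.le).1 ha.abs
      have hss : uIoc z x ⊆ Ioc 0 T := by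
        rw [← uIoc_of_le hT.le]
        exact uIoc_subset_uIoc_of_uIcc_subset_uIcc (hsub z hz x hx')
      have step1 : ∫ t in uIoc z x, ‖a t * pp γ (u t)‖ ≤ ∫ t in uIoc z x, |a t| * (L * W) := by
        apply setIntegral_mono_on
        · exact (((intervalIntegrable_iff_integrableOn_Ioc_of_le hT.le).1 hbint).mono_set hss).norm
        · exact (hInt.mono_set hss).mul_const _
        · exact measurableSet_uIoc
        · intro t ht
          have htJ := hxz ht
          rw [norm_mul, Real.norm_eq_abs, Real.norm_eq_abs, abs_of_nonneg (pp_nonneg _ _)]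
          apply mul_le_mul_of_nonneg_left _ (abs_nonneg _)
          refine (hpp t (hJsub htJ)).trans ?_
          apply mul_le_mul_of_nonneg_left _ hL0
          linarith [hqmax' t htJ]
      refine step1.trans ?_
      rw [integral_mul_const]
      have step2 : ∫ t in uIoc z x, |a t| ≤ I := by
        rw [hI, intervalIntegral.integral_of_le hT.le]
        exact setIntegral_mono_set hInt (ae_of_all _ (fun t => abs_nonneg _)) hss.eventuallyLE
      calc (∫ t in uIoc z x, |a t|) * (L * W) ≤ I * (L * W) :=
            mul_le_mul_of_nonneg_right step2 (mul_nonneg hL0 hW0)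
        _ = L * (I * W) := by ring
    have hmv := hJconv.norm_image_sub_le_of_norm_hasDerivWithin_le
      (fun x hx => (hd x (hJsub hx)).mono hJsub) hbound hzJ hq
    have hqz : ‖q - z‖ ≤ δ := by
      rw [Real.norm_eq_abs, abs_le]
      have := hq.1
      exact ⟨by linarith [this.1], by linarith [this.2]⟩
    have h5 : W ≤ l * L * I * W * δ := by
      calc W = u q - u z := by rw [hzm]
        _ ≤ ‖u q - u z‖ := le_abs_self _
        _ ≤ l * L * I * W * ‖q - z‖ := hmv
        _ ≤ l * L * I * W * δ := mul_le_mul_of_nonneg_left hqz (by positivity)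
    have hWz : W ≤ 0 := by
      by_contra hc
      push Not at hc
      nlinarith
    have := hqmax' y hyJ
    have := hm' y hy
    linarith
  have walk : ∀ n : ℕ, ∀ y ∈ Icc 0 T, |y - x0| ≤ n * δ → u y = m := by
    intro n
    induction n with
    | zero =>
      intro y hy h
      have : y - x0 = 0 := by
        apply abs_eq_zero.1
        exact le_antisymm (by simpa using h) (abs_nonneg _)
      have : y = x0 := by linarith
      rw [this]
    | succ n ih =>
      intro y hy h
      push_cast at h
      set θ : ℝ := n / (n + 1) with hθ
      have hn : (0:ℝ) < n + 1 := by positivity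
      have hθ0 : 0 ≤ θ := by positivity
      have hθ1 : 1 - θ = 1 / (n + 1) := by rw [hθ]; field_simp; ring
      have hθ1' : 0 ≤ 1 - θ := by rw [hθ1]; positivity
      have hzm : (1 - θ) * x0 + θ * y ∈ Icc 0 T := by
        have := (convex_Icc 0 T) hx0 hy hθ1' hθ0 (by ring)
        simpa using this
      apply step _ hzm (ih _ hzm _) y hy
      · have : y - ((1 - θ) * x0 + θ * y) = (1 - θ) * (y - x0) := by ring
        rw [this, abs_mul, abs_of_nonneg hθ1', hθ1, one_div, inv_mul_le_iff₀ hn]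
        exact h
      · have : (1 - θ) * x0 + θ * y - x0 = θ * (y - x0) := by ring
        rw [this, abs_mul, abs_of_nonneg hθ0]
        calc θ * |y - x0| ≤ θ * ((n + 1) * δ) := mul_le_mul_of_nonneg_left h hθ0
          _ = n * δ := by rw [hθ]; field_simp
  obtain ⟨x, hx, hxp⟩ := hne
  obtain ⟨n, hn⟩ := exists_nat_ge (|x - x0| / δ)
  have := walk n x hx ((div_le_iff₀ hδ0).1 hn)
  linarith

lemma test_fun {T p σ τ : ℝ} (hT : 0 < T) (hp : 0 < p) {a : ℝ → ℝ}
    (ha : IntervalIntegrable a volume 0 T) (hσ : 0 ≤ σ) (hτ : τ ≤ T)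
    (hnn : ∀ᵐ x ∂(volume.restrict (Icc σ τ)), 0 ≤ a x)
    (hnz : ¬ (∀ᵐ x ∂(volume.restrict (Icc σ τ)), a x = 0)) :
    ∃ (c : ℝ) (f : L2T T), SS f T = 0 ∧ 0 < GG T p a (fun x => c + SS f x) := by
  set w := Real.pi / T with hw
  have hw0 : 0 < w := div_pos Real.pi_pos hT
  have hwT : w * T = Real.pi := by rw [hw]; field_simp
  set φ : ℝ → ℝ := fun x => Real.sin (w * (x - σ)) * Real.sin (w * (τ - x)) with hφ
  set φ' : ℝ → ℝ := fun x => (Real.cos (w * (x - σ)) * w) * Real.sin (w * (τ - x)) +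
    Real.sin (w * (x - σ)) * (Real.cos (w * (τ - x)) * (-w)) with hφ'
  have hder : ∀ x, HasDerivAt φ (φ' x) x := by
    intro x
    have h1 : HasDerivAt (fun x : ℝ => w * (x - σ)) w x := by
      simpa using ((hasDerivAt_id x).sub_const σ).const_mul w
    have h2 : HasDerivAt (fun x : ℝ => w * (τ - x)) (-w) x := by
      simpa using ((hasDerivAt_id x).const_sub τ).const_mul w
    exact h1.sin.mul h2.sin
  have hφ'c : Continuous φ' := by rw [hφ']; fun_prop
  have hm := cont_memLp hT (hφ'c.continuousOn (s := Icc 0 T))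
  have hSS : ∀ x ∈ Icc 0 T, SS hm.toLp x = φ x - φ 0 := by
    intro x hx
    rw [SS_toLp hm hx]
    exact intervalIntegral.integral_eq_sub_of_hasDerivAt (fun x _ => hder x)
      (hφ'c.intervalIntegrable _ _)
  refine ⟨φ 0, hm.toLp, ?_, ?_⟩
  · rw [hSS T (T_mem hT)]
    simp only [hφ]
    have e1 : w * (T - σ) = Real.pi - w * σ := by rw [← hwT]; ring
    have e2 : w * (τ - T) = w * τ - Real.pi := by rw [← hwT]; ring
    rw [e1, e2, Real.sin_pi_sub, Real.sin_sub_pi]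
    simp
  · rw [GG_congr hT (v := φ) (fun x hx => by rw [hSS x hx]; ring)]
    have hφc : ContinuousOn φ (Icc 0 T) := fun x _ => (hder x).continuousAt.continuousWithinAt
    have hint := int_mul hT ha (pp_contOn hp hφc)
    have hpi : ∀ y, y ≤ T → w * y ≤ Real.pi := fun y hy => by
      rw [← hwT]; exact mul_le_mul_of_nonneg_left hy hw0.le
    have hout : ∀ x ∈ Icc 0 T, x ∉ Icc σ τ → φ x ≤ 0 := by
      intro x hx hxn
      simp only [hφ]
      by_cases h1 : σ ≤ x
      · have h2 : τ < x := by
          by_contra h3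
          exact hxn ⟨h1, not_lt.1 h3⟩
        apply mul_nonpos_of_nonneg_of_nonpos
        · apply Real.sin_nonneg_of_nonneg_of_le_pi (mul_nonneg hw0.le (by linarith))
          exact hpi _ (by linarith [hx.2])
        · apply Real.sin_nonpos_of_nonpos_of_neg_pi_le
          · exact mul_nonpos_of_nonneg_of_nonpos hw0.le (by linarith)
          · by_cases h4 : 0 ≤ τ
            · have := hpi (x - τ) (by linarith [hx.2])
              linarith
            · exfalso
              apply hnz
              rw [Icc_eq_empty (by linarith)]
              simp
      · push Not at h1
        by_cases h4 : σ ≤ τ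
        · apply mul_nonpos_of_nonpos_of_nonneg
          · apply Real.sin_nonpos_of_nonpos_of_neg_pi_le
            · exact mul_nonpos_of_nonneg_of_nonpos hw0.le (by linarith)
            · have := hpi (σ - x) (by linarith [hx.1])
              linarith
          · apply Real.sin_nonneg_of_nonneg_of_le_pi (mul_nonneg hw0.le (by linarith))
            exact hpi _ (by linarith [hx.1])
        · exfalso
          apply hnz
          rw [Icc_eq_empty (by linarith)]
          simp
    have hin : ∀ x ∈ Ioo σ τ, 0 < φ x := by
      intro x hx
      simp only [hφ]
      have hlt : ∀ y, y < T → w * y < Real.pi := fun y hy => by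
        rw [← hwT]; exact mul_lt_mul_of_pos_left hy hw0
      apply mul_pos
      · apply Real.sin_pos_of_pos_of_lt_pi (mul_pos hw0 (by linarith [hx.1]))
        exact hlt _ (by linarith [hx.2])
      · apply Real.sin_pos_of_pos_of_lt_pi (mul_pos hw0 (by linarith [hx.2]))
        exact hlt _ (by linarith [hx.1])
    rw [ae_restrict_iff' measurableSet_Icc] at hnn
    have hnn2 : 0 ≤ᵐ[volume.restrict (Ioc 0 T)] fun t => a t * pp p (φ t) := by
      rw [Filter.EventuallyLE, ae_restrict_iff' measurableSet_Ioc]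
      filter_upwards [hnn] with x hx hxm
      by_cases h : x ∈ Icc σ τ
      · exact mul_nonneg (hx h) (pp_nonneg _ _)
      · simp only [pp_of_nonpos hp (hout x (Ioc_subset_Icc_self hxm) h), mul_zero]
        exact le_rfl
    have h0 : 0 ≤ GG T p a φ := 
      intervalIntegral.integral_nonneg_of_ae_restrict hT.le (by
        rw [← restrict_Ioc_eq_restrict_Icc]; exact hnn2)
    rcases h0.eq_or_lt with h | h
    · exfalso
      apply hnz
      have h2 := (intervalIntegral.integral_eq_zero_iff_of_le_of_nonneg_ae hT.le hnn2 hint).1 h.symm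
      rw [Filter.EventuallyEq, ae_restrict_iff' measurableSet_Ioc] at h2
      rw [ae_restrict_iff' measurableSet_Icc]
      filter_upwards [h2, volume.ae_ne σ, volume.ae_ne τ] with x hx h3 h4 hxm
      have hxo : x ∈ Ioo σ τ := ⟨lt_of_le_of_ne hxm.1 (Ne.symm h3), lt_of_le_of_ne hxm.2 h4⟩
      have h5 := hx ⟨by linarith [hxo.1], by linarith [hxo.2]⟩
      have h6 : 0 < pp p (φ x) := by
        rw [pp_of_pos (hin x hxo)]; exact Real.rpow_pos_of_pos (hin x hxo) _
      simpa [h6.ne'] using h5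
    · exact h

lemma prim_deriv {T : ℝ} (hT : 0 < T) {g : ℝ → ℝ} (hg : ContinuousOn g (Icc 0 T)) (c : ℝ) :
    ∀ x ∈ Icc (0:ℝ) T, HasDerivWithinAt (fun x => c + ∫ t in (0:ℝ)..x, g t) (g x) (Icc 0 T) x := by
  intro x hx
  have : Fact (x ∈ Icc 0 T) := ⟨hx⟩
  apply HasDerivWithinAt.const_add
  apply intervalIntegral.integral_hasDerivWithinAt_right (t := Icc 0 T)
  · apply ContinuousOn.intervalIntegrable
    rw [uIcc_of_le hx.1]
    exact hg.mono (Icc_subset_Icc_right hx.2)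
  · exact hg.stronglyMeasurableAtFilter_nhdsWithin measurableSet_Icc x
  · exact hg x hx

lemma exist5 {T γ σ τ : ℝ} (hT : 0 < T) (hγ : 1 < γ) {a : ℝ → ℝ}
    (ha : IntervalIntegrable a volume 0 T) (hσ : 0 ≤ σ) (hτ : τ ≤ T)
    (hnn : ∀ᵐ x ∂(volume.restrict (Icc σ τ)), 0 ≤ a x)
    (hnz : ¬ (∀ᵐ x ∂(volume.restrict (Icc σ τ)), a x = 0))
    (hneg : ∫ x in (0:ℝ)..T, a x < 0) (e : ℝ) :
    ∃ u u' : ℝ → ℝ, IsSolOn T (fun t => a t * (fun s => s ^ γ) (u t)) u u' ∧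
      (∀ x ∈ Icc (0:ℝ) T, 0 < u x) ∧ u' 0 = u' T ∧ (e = 0 → u' 0 = 0) ∧ (e ≠ 0 → u 0 = u T) := by
  have hp : 1 < γ + 1 := by linarith
  have hp0 : 0 < γ + 1 := by linarith
  have hγ0 : 0 < γ := by linarith
  have h0m : (0:ℝ) ∈ Icc 0 T := ⟨le_rfl, hT.le⟩
  obtain ⟨c1, f1, h1, h2⟩ := test_fun hT hp0 ha hσ hτ hnn hnz
  obtain ⟨c, f, hf, he, hGpos, hmax⟩ := max_exists hT hp ha hneg e ⟨c1, f1, by rw [h1, mul_zero], h2⟩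
  set K := GG T (γ+1) a (fun x => c + SS f x) with hK
  have hom := max_hom hT hp hneg e K hGpos hmax
  have hf1 : ‖f‖ = 1 := by
    apply le_antisymm hf
    by_contra hlt
    push Not at hlt
    have h3 := hom c f he
    have h4 : ‖f‖ ^ (γ+1) < 1 := Real.rpow_lt_one (norm_nonneg _) hlt hp0
    have h5 : K ≤ K * ‖f‖ ^ (γ+1) := h3
    nlinarith
  have hEL := EL hT hp ha e K c f hom he hf1 rfl
  simp only [add_sub_cancel_right] at hEL
  set u0 : ℝ → ℝ := fun x => c + SS f x with hu0
  have hu0c : ContinuousOn u0 (Icc 0 T) := uc_cont hT c f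
  have hb : IntervalIntegrable (fun x => a x * pp γ (u0 x)) volume 0 T :=
    int_mul hT ha (pp_contOn hγ0 hu0c)
  obtain ⟨hb0, k, hk0, hSf⟩ := regul hT hb e K hGpos f he hEL
  set ud : ℝ → ℝ := fun x => k - K⁻¹ * ∫ s in (0:ℝ)..x, a s * pp γ (u0 s) with hud
  have hudc : ContinuousOn ud (Icc 0 T) := 
    continuousOn_const.sub (continuousOn_const.mul (prim_cont hT hb))
  have hl : 0 < K⁻¹ := inv_pos.2 hGpos
  have hder : ∀ x ∈ Icc (0:ℝ) T, HasDerivWithinAt u0 (ud x) (Icc (0:ℝ) T) x := by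
    intro x hx
    apply (prim_deriv hT hudc c x hx).congr
    · intro y hy; simp only [hu0]; rw [hSf y hy]
    · simp only [hu0]; rw [hSf x hx]
  have hud0 : ud 0 = k := by simp [hud]
  have hudT : ud T = k := by simp only [hud]; rw [hb0]; simp
  have hper : e ≠ 0 → u0 0 = u0 T := by
    intro hne
    have h3 : SS f T = 0 := by
      rcases mul_eq_zero.1 he with h | h
      · exact absurd h hne
      · exact h
    have h4 : SS f 0 = 0 := by simp [SS]
    simp only [hu0]; rw [h3, h4]
  have hbc : ud 0 = 0 ∨ u0 0 = u0 T := by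
    by_cases h : e = 0
    · left; rw [hud0, hk0 h]
    · right; exact hper h
  have hpos : ∀ x ∈ Icc 0 T, 0 < u0 x := by
    apply ode_pos (k := k) (l := K⁻¹) hT hγ hl ha hder (fun x _ => rfl)
    · intro z hz hm
      exact min_crit hT hder (by rw [hud0, hudT]) hbc hz hm
    · by_contra hcon
      push Not at hcon
      have : K = 0 := by
        rw [hK]
        unfold GG
        rw [intervalIntegral.integral_congr (g := fun _ => 0)]
        · simp
        · intro x hx
          rw [uIcc_of_le hT.le] at hx
          simp only
          rw [pp_of_nonpos hp0 (hcon x hx), mul_zero]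
      linarith
  set r := K⁻¹ ^ (1 / (γ - 1)) with hr
  have hr0 : 0 < r := Real.rpow_pos_of_pos hl _
  have hrγ : r ^ γ = r * K⁻¹ := by
    have h6 : r ^ (γ - 1) = K⁻¹ := by
      rw [hr, ← Real.rpow_mul hl.le, one_div, inv_mul_cancel₀ (by linarith), Real.rpow_one]
    rw [← h6, mul_comm, ← Real.rpow_add_one hr0.ne']
    congr 1; ring
  refine ⟨fun x => r * u0 x, fun x => r * ud x, ⟨?_, ?_, ?_⟩, ?_, ?_, ?_, ?_⟩
  · intro x hx; exact (hder x hx).const_mul r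
  · exact continuousOn_const.mul hudc
  · intro x hx
    simp only
    have e1 : ∫ t in (0:ℝ)..x, a t * (r * u0 t) ^ γ =
        r * K⁻¹ * ∫ t in (0:ℝ)..x, a t * pp γ (u0 t) := by
      rw [← intervalIntegral.integral_const_mul]
      apply intervalIntegral.integral_congr
      intro t ht
      rw [uIcc_of_le hx.1] at ht
      have ht' := hpos t ⟨ht.1, ht.2.trans hx.2⟩
      simp only
      rw [Real.mul_rpow hr0.le ht'.le, hrγ, pp_of_pos ht']
      ring
    rw [e1, hud0]
    simp only [hud]; ring
  · intro x hx; exact mul_pos hr0 (hpos x hx)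
  · simp only; rw [hud0, hudT]
  · intro h; simp only; rw [hud0, hk0 h, mul_zero]
  · intro h; simp only; rw [hper h]

lemma nec5 {T γ σ τ : ℝ} (hT : 0 < T) (hγ : 1 < γ) {a u u' : ℝ → ℝ}
    (ha : IntervalIntegrable a volume 0 T) (hσ : 0 ≤ σ) (hστ : σ ≤ τ) (hτ : τ ≤ T)
    (hnn : ∀ᵐ x ∂(volume.restrict (Icc σ τ)), 0 ≤ a x)
    (hnz : ¬ (∀ᵐ x ∂(volume.restrict (Icc σ τ)), a x = 0))
    (hsol : IsSolOn T (fun t => a t * (fun s => s ^ γ) (u t)) u u')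
    (hpos : ∀ x ∈ Icc (0:ℝ) T, 0 < u x) (hper : u' 0 = u' T) (hbc : u' 0 = 0 ∨ u 0 = u T) :
    ∫ x in (0:ℝ)..T, a x < 0 := by
  obtain ⟨hd, hu'c, hint⟩ := hsol
  simp only at hint
  have h0m : (0:ℝ) ∈ Icc 0 T := ⟨le_rfl, hT.le⟩
  have huc : ContinuousOn u (Icc 0 T) := fun x hx => (hd x hx).continuousWithinAt
  have hrc : ∀ q : ℝ, ContinuousOn (fun x => u x ^ q) (Icc 0 T) := fun q =>
    huc.rpow_const (fun x hx => Or.inl (hpos x hx).ne')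
  set b : ℝ → ℝ := fun t => a t * u t ^ γ with hb
  have hbi : IntervalIntegrable b volume 0 T := int_mul hT ha (hrc γ)
  have hBT : ∫ t in (0:ℝ)..T, b t = 0 := by
    have := hint T (T_mem hT); linarith
  set w : ℝ → ℝ := fun x => u x ^ (-γ) with hw
  set w' : ℝ → ℝ := fun x => u' x * (-γ) * u x ^ (-γ - 1) with hw'
  have hw'c : ContinuousOn w' (Icc 0 T) := (hu'c.mul continuousOn_const).mul (hrc _)
  have hw'i : ∀ x ∈ Icc 0 T, IntervalIntegrable w' volume 0 x := by
    intro x hx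
    apply ContinuousOn.intervalIntegrable
    rw [uIcc_of_le hx.1]
    exact hw'c.mono (Icc_subset_Icc_right hx.2)
  have hFTC : ∀ x ∈ Icc 0 T, ∫ t in (0:ℝ)..x, w' t = w x - w 0 := by
    intro x hx
    apply intervalIntegral.integral_eq_sub_of_hasDerivAt_of_le hx.1
      ((hrc _).mono (Icc_subset_Icc_right hx.2)) _ (hw'i x hx)
    intro y hy
    have hyT : y ∈ Icc 0 T := ⟨hy.1.le, hy.2.le.trans hx.2⟩
    have h1 : HasDerivAt u (u' y) y := 
      (hd y hyT).hasDerivAt (Icc_mem_nhds hy.1 (lt_of_lt_of_le hy.2 hx.2))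
    exact h1.rpow_const (Or.inl (hpos y hyT).ne')
  have e1 : ∫ x in (0:ℝ)..T, a x = w 0 * (∫ x in (0:ℝ)..T, b x) +
      ∫ x in (0:ℝ)..T, b x * (∫ t in (0:ℝ)..x, w' t) := by
    rw [← intervalIntegral.integral_const_mul, ← intervalIntegral.integral_add (hbi.const_mul _)
      (int_mul hT hbi (prim_cont hT (hw'i T (T_mem hT))))]
    apply intervalIntegral.integral_congr
    intro x hx
    rw [uIcc_of_le hT.le] at hx
    simp only
    rw [hFTC x hx]
    simp only [hb, hw]
    rw [Real.rpow_neg (hpos x hx).le γ]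
    have := (Real.rpow_pos_of_pos (hpos x hx) γ).ne'
    field_simp
    ring
  rw [hBT, mul_zero, zero_add, ibp5 hT hbi (hw'i T (T_mem hT)), hBT, zero_mul, zero_sub] at e1
  have hq : ContinuousOn (fun x => u' x ^ 2 * u x ^ (-γ - 1)) (Icc 0 T) := (hu'c.pow 2).mul (hrc _)
  have e2 : ∫ x in (0:ℝ)..T, (∫ t in (0:ℝ)..x, b t) * w' x =
      u' 0 * (∫ x in (0:ℝ)..T, w' x) + γ * ∫ x in (0:ℝ)..T, u' x ^ 2 * u x ^ (-γ - 1) := by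
    rw [← intervalIntegral.integral_const_mul, ← intervalIntegral.integral_const_mul,
      ← intervalIntegral.integral_add ((hw'i T (T_mem hT)).const_mul _)]
    · apply intervalIntegral.integral_congr
      intro x hx
      rw [uIcc_of_le hT.le] at hx
      simp only
      have : ∫ t in (0:ℝ)..x, b t = u' 0 - u' x := by rw [hint x hx]; ring
      rw [this]
      simp only [hw']; ring
    · apply IntervalIntegrable.const_mul
      apply ContinuousOn.intervalIntegrable
      rwa [uIcc_of_le hT.le]
  have e3 : u' 0 * (∫ x in (0:ℝ)..T, w' x) = 0 := by
    rcases hbc with h | h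
    · rw [h, zero_mul]
    · rw [hFTC T (T_mem hT)]; simp only [hw]; rw [h]; ring
  rw [e2, e3, zero_add] at e1
  rw [e1]
  have hex : ∃ x ∈ Icc 0 T, u' x ≠ 0 := by
    by_contra hcon
    push Not at hcon
    apply hnz
    have hB0 : ∀ x ∈ Icc 0 T, ∫ t in (0:ℝ)..x, b t = 0 := by
      intro x hx
      have := hint x hx
      rw [hcon x hx, hcon 0 h0m] at this
      linarith
    have hσm : σ ∈ Icc 0 T := ⟨hσ, hστ.trans hτ⟩
    have hτm : τ ∈ Icc 0 T := ⟨hσ.trans hστ, hτ⟩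
    have hsub : ∀ x ∈ Icc 0 T, ∀ y ∈ Icc 0 T, uIcc x y ⊆ uIcc 0 T := by
      intro x hx y hy
      rw [uIcc_of_le hT.le]
      exact uIcc_subset_Icc hx hy
    have h3 : ∫ t in σ..τ, b t = 0 := by
      rw [← intervalIntegral.integral_interval_sub_left (hbi.mono_set (hsub 0 h0m τ hτm))
        (hbi.mono_set (hsub 0 h0m σ hσm)), hB0 τ hτm, hB0 σ hσm, sub_zero]
    have hnn2 : 0 ≤ᵐ[volume.restrict (Ioc σ τ)] b := by
      rw [restrict_Ioc_eq_restrict_Icc]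
      filter_upwards [hnn, ae_restrict_mem measurableSet_Icc] with x hx hxm
      exact mul_nonneg hx (Real.rpow_nonneg (hpos x ⟨hσ.trans hxm.1, hxm.2.trans hτ⟩).le _)
    have h4 := (intervalIntegral.integral_eq_zero_iff_of_le_of_nonneg_ae hστ hnn2
      (hbi.mono_set (hsub σ hσm τ hτm))).1 h3
    rw [restrict_Ioc_eq_restrict_Icc] at h4
    filter_upwards [h4, ae_restrict_mem measurableSet_Icc] with x hx hxm
    have h5 := Real.rpow_pos_of_pos (hpos x ⟨hσ.trans hxm.1, hxm.2.trans hτ⟩) γ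
    simpa [hb, h5.ne'] using hx
  have hpos2 : 0 < ∫ x in (0:ℝ)..T, u' x ^ 2 * u x ^ (-γ - 1) := by
    apply intervalIntegral.integral_pos hT hq
    · intro x hx
      exact mul_nonneg (sq_nonneg _) (Real.rpow_nonneg (hpos x (Ioc_subset_Icc_self hx)).le _)
    · obtain ⟨x, hx, hx'⟩ := hex
      exact ⟨x, hx, mul_pos (by positivity) (Real.rpow_pos_of_pos (hpos x hx) _)⟩
  have : 0 < γ * ∫ x in (0:ℝ)..T, u' x ^ 2 * u x ^ (-γ - 1) := mul_pos (by linarith) hpos2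
  linarith

end

/-- Corollary: for `γ > 1` and a weight satisfying (a1), the superlinear problem
`u'' + a(x) u^γ = 0` has a positive Neumann (resp. periodic) solution if and only
if `∫₀ᵀ a < 0`. -/
theorem statement_5
    (T : ℝ) (hT : 0 < T) (γ : ℝ) (hγ : 1 < γ)
    (a : ℝ → ℝ) (ha : IntervalIntegrable a volume 0 T)
    (ha1 : CondA1 T a) :
    (PosSolNeumann T a (fun s => s ^ γ) ↔ (∫ x in (0:ℝ)..T, a x) < 0) ∧
    (PosSolPeriodic T a (fun s => s ^ γ) ↔ (∫ x in (0:ℝ)..T, a x) < 0) := by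
  obtain ⟨m, σ, τ, hm, hst, -, hnn, hnz, -⟩ := ha1
  obtain ⟨h1, h2, h3⟩ := hst ⟨0, hm⟩
  have hn := hnn ⟨0, hm⟩
  have hz := hnz ⟨0, hm⟩
  refine ⟨⟨?_, ?_⟩, ⟨?_, ?_⟩⟩
  · rintro ⟨u, u', hs, hp, h0, hT'⟩
    exact nec5 hT hγ ha h1 h2 h3 hn hz hs hp (by rw [h0, hT']) (Or.inl h0)
  · intro hneg
    obtain ⟨u, u', hs, hp, hper, h0, -⟩ := exist5 hT hγ ha h1 h3 hn hz hneg 0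
    exact ⟨u, u', hs, hp, h0 rfl, by rw [← hper, h0 rfl]⟩
  · rintro ⟨u, u', hs, hp, h0, hT'⟩
    exact nec5 hT hγ ha h1 h2 h3 hn hz hs hp hT' (Or.inr h0)
  · intro hneg
    obtain ⟨u, u', hs, hp, hper, -, h0⟩ := exist5 hT hγ ha h1 h3 hn hz hneg 1
    exact ⟨u, u', hs, hp, h0 one_ne_zero, hper⟩
end
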